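/- If Th(M₀) is an Ehrenfeucht theory, i.e., it has only finitely many countable models up to isomorphism, then Th(U) is also an Ehrenfeucht theory; in fact the number of countable models of Th(U) up to isomorphism is at most the number of countable models of Th(M₀) up to isomorphism. -/

import Mathlib

universe u

open FirstOrder FirstOrder.Language FirstOrder.Language.Structure CategoryTheory

namespace Ivanov

/-- The relation symbols of the finite language `L`:
four unary symbols `P`, `Q`, `λ`, `ρ`, a binary `H` and a 4-ary `S`. -/
inductive LRel : ℕ → Type
  | P : LRel 1
  | Q : LRel 1
  | lam : LRel 1
  | rho : LRel 1
  | H : LRel 2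
  | S : LRel 4

/-- The finite language `L`. -/
def L : Language := ⟨fun _ => Empty, LRel⟩

/-- The relational language having a relation symbol `Rₙ` of arity `ar n` for each
index `n ∈ s` with `0 < n`. -/
def L0r (ar : ℕ → ℕ) (s : Set ℕ) : Language :=
  ⟨fun _ => Empty, fun k => {n : ℕ // 0 < n ∧ n ∈ s ∧ ar n = k}⟩

/-- The relation symbol `Rₙ`. -/
def R (ar : ℕ → ℕ) (s : Set ℕ) (n : ℕ) (h1 : 0 < n) (h2 : n ∈ s) :
    (L0r ar s).Relations (ar n) := ⟨n, h1, h2, rfl⟩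

/-- The language `L ∪ L₀`. -/
def LFull (ar : ℕ → ℕ) (s : Set ℕ) : Language := L.sum (L0r ar s)

instance (ar : ℕ → ℕ) (s : Set ℕ) (n : ℕ) : IsEmpty ((LFull ar s).Functions n) :=
  ⟨fun f => Sum.elim Empty.elim Empty.elim f⟩

instance (ar : ℕ → ℕ) (s : Set ℕ) (n : ℕ) : IsEmpty ((L0r ar s).Functions n) :=
  ⟨fun f => Empty.elim f⟩

section

variable (ar : ℕ → ℕ) (s : Set ℕ) {M : Type u} [(LFull ar s).Structure M]

/-- `x` satisfies the unary predicate `P`. -/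
def isP (x : M) : Prop := RelMap (L := LFull ar s) (n := 1) (Sum.inl LRel.P) ![x]

/-- `x` satisfies the unary predicate `Q`. -/
def isQ (x : M) : Prop := RelMap (L := LFull ar s) (n := 1) (Sum.inl LRel.Q) ![x]

/-- `x` satisfies the unary predicate `λ`. -/
def isLam (x : M) : Prop := RelMap (L := LFull ar s) (n := 1) (Sum.inl LRel.lam) ![x]

/-- `x` satisfies the unary predicate `ρ`. -/
def isRho (x : M) : Prop := RelMap (L := LFull ar s) (n := 1) (Sum.inl LRel.rho) ![x]

/-- the binary predicate `H`. -/
def isH (x y : M) : Prop := RelMap (L := LFull ar s) (n := 2) (Sum.inl LRel.H) ![x, y]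

/-- the 4-ary predicate `S`. -/
def isS (x y z w : M) : Prop := RelMap (L := LFull ar s) (n := 4) (Sum.inl LRel.S) ![x, y, z, w]

/-- The basic conditions on the `(L ∪ L₀)`-structures under consideration: `P` and `Q`
partition the universe, `λ`, `ρ`, `H` hold only on `Q`, the `Rₙ` hold only on tuples from `P`,
and `S(a,b,c,d)` implies `a, c ∈ P`, `b, d ∈ Q`. -/
structure IsGood (M : Type u) [(LFull ar s).Structure M] : Prop where
  part : ∀ x : M, isP ar s x ∨ isQ ar s x
  not_both : ∀ x : M, ¬(isP ar s x ∧ isQ ar s x)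
  lam_q : ∀ x : M, isLam ar s x → isQ ar s x
  rho_q : ∀ x : M, isRho ar s x → isQ ar s x
  h_q : ∀ x y : M, isH ar s x y → isQ ar s x ∧ isQ ar s y
  r_p : ∀ (k : ℕ) (r : (L0r ar s).Relations k) (t : Fin k → M),
    RelMap (L := LFull ar s) (n := k) (Sum.inr r) t → ∀ i, isP ar s (t i)
  s_pq : ∀ x y z w : M, isS ar s x y z w →
    isP ar s x ∧ isQ ar s y ∧ isP ar s z ∧ isQ ar s w

/-- `(a, c)` is an `n`-pair of arity `m` (labelling the tuple `a`). -/
structure IsNPair {M : Type u} [(LFull ar s).Structure M] (n m : ℕ)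
    (a : Fin m → M) (c : Fin n → M) : Prop where
  le : m ≤ n
  aP : ∀ i, isP ar s (a i)
  cQ : ∀ j, isQ ar s (c j)
  inj : Function.Injective c
  hH : ∀ i j : Fin n, isH ar s (c i) (c j) ↔ (j : ℕ) = ((i : ℕ) + 1) % n
  hlam : ∀ i : Fin n, isLam ar s (c i) ↔ (i : ℕ) = 0
  hrho : ∀ i : Fin n, isRho ar s (c i) ↔ (i : ℕ) = m - 1
  hS : ∀ (i k : Fin m) (j l : Fin n),
    isS ar s (a i) (c j) (a k) (c l) ↔ a i = a k

/-- The induced structure on a subset of a structure in a relational language. -/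
def inducedStr (A : Set M) : (LFull ar s).Structure A where
  funMap := fun {_} f _ => isEmptyElim f
  RelMap := fun {_} r t => RelMap r fun i => (t i : M)

end

/-- The `P`-part of a structure. -/
abbrev Ppart (ar : ℕ → ℕ) (s : Set ℕ) (M : Type u) [(LFull ar s).Structure M] : Type u :=
  {x : M // isP ar s x}

/-- The `L₀`-structure induced on the `P`-part by the relations `Rₙ`. -/
instance PpartStr (ar : ℕ → ℕ) (s : Set ℕ) (M : Type u) [(LFull ar s).Structure M] :
    (L0r ar s).Structure (Ppart ar s M) where
  funMap := fun {_} f _ => isEmptyElim f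
  RelMap := fun {_} r t => RelMap (L := LFull ar s) (Sum.inr r) fun i => (t i : M)

/-- The class `K` of all finite `(L ∪ L₀)`-structures `D` satisfying the basic conditions,
whose `P`-part is isomorphic to a substructure of `M₀`, and in which, for every `n`, every
`n`-pair whose arity equals the arity of `Rₙ` labels a tuple satisfying `Rₙ`. -/
def Kclass (ar : ℕ → ℕ) (s : Set ℕ) (M₀ : Type u) [(L0r ar s).Structure M₀] :
    Set (Bundled.{u} (LFull ar s).Structure) :=
  {D | Finite D ∧ IsGood ar s D ∧
    Nonempty (Ppart ar s D ↪[L0r ar s] M₀) ∧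
    ∀ (n : ℕ) (h1 : 0 < n) (h2 : n ∈ s) (a : Fin (ar n) → D) (c : Fin n → D),
      IsNPair ar s n (ar n) a c →
        RelMap (L := LFull ar s) (n := ar n) (Sum.inr (R ar s n h1 h2)) a}
/-- The index set `{n : 1 ≤ n ≤ N}` of a finite sublanguage `L_i`. -/
def setLe (N : ℕ) : Set ℕ := {n | n ≤ N}

/-- The inclusion of sublanguages of `L₀`. -/
def L0incl (ar : ℕ → ℕ) {s t : Set ℕ} (h : s ⊆ t) : L0r ar s →ᴸ L0r ar t where
  onFunction := fun {_} f => f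
  onRelation := fun {_} r => ⟨r.1, r.2.1, h r.2.2.1, r.2.2.2⟩

/-- The inclusion `L ∪ L_i → L ∪ L_j` of sublanguages of `L ∪ L₀`. -/
def LFullincl (ar : ℕ → ℕ) {s t : Set ℕ} (h : s ⊆ t) : LFull ar s →ᴸ LFull ar t :=
  (LHom.id L).sumMap (L0incl ar h)

/-- The `L_i`-reduct structure on `M₀` (`L_i` given by the cutoff `N`). -/
def M0redStr (ar : ℕ → ℕ) (N : ℕ) (M₀ : Type u) [(L0r ar Set.univ).Structure M₀] :
    (L0r ar (setLe N)).Structure M₀ :=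
  (L0incl ar (Set.subset_univ _)).reduct M₀

/-- The class `K_i` of finite `(L ∪ L_i)`-structures (`L_i` given by the cutoff `N`). -/
def Ksub (ar : ℕ → ℕ) (N : ℕ) (M₀ : Type u) [(L0r ar Set.univ).Structure M₀] :
    Set (Bundled.{u} (LFull ar (setLe N)).Structure) :=
  letI := M0redStr ar N M₀
  Kclass ar (setLe N) M₀

set_option linter.unusedVariables false
set_option linter.style.haveILetI false

/-- Abstract signature: arities and level cutoffs. -/
structure Sig where
  ar : ℕ → ℕ
  lv : ℕ → ℕ
  mono : Monotone lv
  cof : ∀ n, ∃ k, n < lv k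

/-- Relational structures. -/
class RS (G : outParam Sig) (M : Type u) where
  rel : ∀ n, (Fin (G.ar n) → M) → Prop

section basic

variable {G : Sig}

/-- Extend a tuple by one element. -/
def ex {ι : Type} {M : Type u} (a : ι → M) (c : M) : Option ι → M := fun o => o.elim c a

@[simp] theorem ex_some {ι : Type} {M : Type u} (a : ι → M) (c : M) (i : ι) :
    ex a c (some i) = a i := rfl
@[simp] theorem ex_none {ι : Type} {M : Type u} (a : ι → M) (c : M) : ex a c none = c := rfl

theorem ex_comp_map {ι ι' : Type} {M : Type u} (a : ι → M) (c : M) (f : ι' → ι) :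
    ex a c ∘ Option.map f = ex (a ∘ f) c := by
  funext o; cases o <;> rfl

theorem comp_ex {ι : Type} {M N : Type*} (a : ι → M) (c : M) (f : M → N) :
    f ∘ ex a c = ex (f ∘ a) (f c) := by
  funext o; cases o <;> rfl

/-- Equality of level `k` quantifier free types. -/
def qf {M M' : Type u} [RS G M] [RS G M'] (k : ℕ) {ι : Type} (a : ι → M) (b : ι → M') : Prop :=
  (∀ i j, a i = a j ↔ b i = b j) ∧
    ∀ n, n < G.lv k → ∀ t : Fin (G.ar n) → ι, RS.rel n (a ∘ t) ↔ RS.rel n (b ∘ t)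

section
variable {M M' M'' : Type u} [RS G M] [RS G M'] [RS G M''] {ι ι' : Type}

theorem qf_refl (k : ℕ) (a : ι → M) : qf k a a := ⟨fun _ _ => Iff.rfl, fun _ _ _ => Iff.rfl⟩

theorem qf_symm {k : ℕ} {a : ι → M} {b : ι → M'} (h : qf k a b) : qf k b a :=
  ⟨fun i j => (h.1 i j).symm, fun n hn t => (h.2 n hn t).symm⟩

theorem qf_trans {k : ℕ} {a : ι → M} {b : ι → M'} {c : ι → M''} (h : qf k a b) (h' : qf k b c) :
    qf k a c :=
  ⟨fun i j => (h.1 i j).trans (h'.1 i j), fun n hn t => (h.2 n hn t).trans (h'.2 n hn t)⟩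

theorem qf_reindex {k : ℕ} {a : ι → M} {b : ι → M'} (h : qf k a b) (f : ι' → ι) :
    qf k (a ∘ f) (b ∘ f) :=
  ⟨fun _ _ => h.1 _ _, fun n hn t => h.2 n hn (f ∘ t)⟩

theorem qf_mono {k k' : ℕ} (hk : k' ≤ k) {a : ι → M} {b : ι → M'} (h : qf k a b) : qf k' a b :=
  ⟨h.1, fun n hn t => h.2 n (lt_of_lt_of_le hn (G.mono hk)) t⟩

end

/-- One sided infinitary type inclusion. -/
def le (α : Ordinal.{0}) {M M' : Type u} [RS G M] [RS G M'] {ι : Type}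
    (a : ι → M) (b : ι → M') : Prop :=
  (∀ k : ℕ, (k : Ordinal) ≤ α → qf k a b) ∧
    ∀ β, β < α → ∀ d : M', ∃ c : M, le β (ex b d) (ex a c)
termination_by α

theorem le_iff (α : Ordinal.{0}) {M M' : Type u} [RS G M] [RS G M'] {ι : Type}
    (a : ι → M) (b : ι → M') : le α a b ↔ (∀ k : ℕ, (k : Ordinal) ≤ α → qf k a b) ∧
    ∀ β, β < α → ∀ d : M', ∃ c : M, le β (ex b d) (ex a c) := by
  rw [le]

section
variable {M M' M'' : Type u} [RS G M] [RS G M'] [RS G M''] {ι ι' : Type}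

theorem le_mono {α β : Ordinal.{0}} (h : β ≤ α) {a : ι → M} {b : ι → M'} (hl : le α a b) :
    le β a b := by
  rw [le_iff] at hl ⊢
  exact ⟨fun k hk => hl.1 k (hk.trans h), fun γ hγ d => hl.2 γ (hγ.trans_le h) d⟩

theorem le_qf {α : Ordinal.{0}} {a : ι → M} {b : ι → M'} (hl : le α a b) {k : ℕ}
    (hk : (k : Ordinal) ≤ α) : qf k a b := by
  rw [le_iff] at hl
  exact hl.1 k hk

theorem le_refl' (α : Ordinal.{0}) : ∀ {ι : Type} (a : ι → M), le α a a := by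
  induction α using WellFoundedLT.induction with
  | ind α ih =>
    intro ι a
    rw [le_iff]
    exact ⟨fun k _ => qf_refl k a, fun β hβ d => ⟨d, ih β hβ _⟩⟩

theorem le_trans' (α : Ordinal.{0}) : ∀ {M M' M'' : Type u} [RS G M] [RS G M'] [RS G M'']
    {ι : Type} {a : ι → M} {b : ι → M'} {c : ι → M''},
    le α a b → le α b c → le α a c := by
  induction α using WellFoundedLT.induction with
  | ind α ih =>
    intro M M' M'' _ _ _ ι a b c h h'
    rw [le_iff] at h h' ⊢
    refine ⟨fun k hk => qf_trans (h.1 k hk) (h'.1 k hk), fun β hβ d => ?_⟩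
    obtain ⟨c', hc'⟩ := h'.2 β hβ d
    obtain ⟨c'', hc''⟩ := h.2 β hβ c'
    exact ⟨c'', ih β hβ hc' hc''⟩

theorem le_reindex (α : Ordinal.{0}) : ∀ {M M' : Type u} [RS G M] [RS G M']
    {ι ι' : Type} {a : ι → M} {b : ι → M'} (f : ι' → ι),
    le α a b → le α (a ∘ f) (b ∘ f) := by
  induction α using WellFoundedLT.induction with
  | ind α ih =>
    intro M M' _ _ ι ι' a b f h
    rw [le_iff] at h ⊢
    refine ⟨fun k hk => qf_reindex (h.1 k hk) f, fun β hβ d => ?_⟩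
    obtain ⟨c, hc⟩ := h.2 β hβ d
    refine ⟨c, ?_⟩
    have := ih β hβ (Option.map f) hc
    rwa [ex_comp_map, ex_comp_map] at this

theorem le_swap [Nonempty M'] {α β : Ordinal.{0}} (h : β < α) {a : ι → M} {b : ι → M'}
    (hl : le α a b) : le β b a := by
  rw [le_iff] at hl
  obtain ⟨c, hc⟩ := hl.2 β h (Classical.arbitrary _)
  exact le_reindex β some hc

end

/-- Isomorphisms. -/
structure RIso (M M' : Type u) [RS G M] [RS G M'] extends M ≃ M' where
  map_rel : ∀ n (t : Fin (G.ar n) → M), RS.rel n (toEquiv ∘ t) ↔ RS.rel n t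

/-- Inverse isomorphism. -/
def RIso.symm {M M' : Type u} [RS G M] [RS G M'] (f : RIso M M') : RIso M' M where
  toEquiv := f.toEquiv.symm
  map_rel n t := by
    rw [← f.map_rel]
    have : f.toEquiv ∘ f.toEquiv.symm ∘ t = t := by funext i; simp
    rw [this]

theorem RIso.qf {M M' : Type u} [RS G M] [RS G M'] (f : RIso M M') (k : ℕ) {ι : Type}
    (a : ι → M) : qf k a (f.toEquiv ∘ a) :=
  ⟨fun i j => by simp, fun n _ t => (f.map_rel n (a ∘ t)).symm⟩

theorem RIso.le (α : Ordinal.{0}) : ∀ {M M' : Type u} [RS G M] [RS G M'] (f : RIso M M')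
    {ι : Type} (a : ι → M), le α a (f.toEquiv ∘ a) := by
  induction α using WellFoundedLT.induction with
  | ind α ih =>
    intro M M' _ _ f ι a
    rw [le_iff]
    refine ⟨fun k _ => f.qf k a, fun β hβ d => ⟨f.toEquiv.symm d, ?_⟩⟩
    have := ih β hβ f.symm (ex (f.toEquiv ∘ a) d)
    rw [comp_ex] at this
    have e : (f.symm.toEquiv ∘ f.toEquiv ∘ a) = a := by funext i; simp [RIso.symm]
    rw [e] at this
    exact this

/-- All structures we consider are pairwise similar. -/
def Sim (M M' : Type u) [RS G M] [RS G M'] : Prop :=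
  (∀ k, qf k (Empty.elim : Empty → M) (Empty.elim : Empty → M')) ∧
  (∀ k (ι : Type) [Finite ι] (a : ι → M) (b : ι → M'), qf k a b →
    ∀ d : M, ∃ c : M', qf k (ex a d) (ex b c)) ∧
  (∀ k (ι : Type) [Finite ι] (a : ι → M) (b : ι → M'), qf k a b →
    ∀ d : M', ∃ c : M, qf k (ex a c) (ex b d))

theorem Sim.symm {M M' : Type u} [RS G M] [RS G M'] (h : Sim M M') : Sim M' M := by
  refine ⟨fun k => qf_symm (h.1 k), fun k ι _ a b hab d => ?_, fun k ι _ a b hab d => ?_⟩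
  · obtain ⟨c, hc⟩ := h.2.2 k ι b a (qf_symm hab) d
    exact ⟨c, qf_symm hc⟩
  · obtain ⟨c, hc⟩ := h.2.1 k ι b a (qf_symm hab) d
    exact ⟨c, qf_symm hc⟩

theorem Sim.le_nat (k : ℕ) : ∀ {M M' : Type u} [RS G M] [RS G M'] (_ : Sim M M')
    {ι : Type} [Finite ι] (a : ι → M) (b : ι → M') , qf k a b → le (k : Ordinal) a b := by
  induction k using Nat.strong_induction_on with
  | _ k ih =>
    intro M M' _ _ h ι _ a b hab
    rw [le_iff]
    refine ⟨fun j hj => qf_mono (by exact_mod_cast hj) hab, fun β hβ d => ?_⟩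
    obtain ⟨j, rfl⟩ := Ordinal.lt_omega0.1 (hβ.trans (Ordinal.natCast_lt_omega0 k))
    have hj : j < k := by exact_mod_cast hβ
    obtain ⟨c, hc⟩ := h.2.2 k ι a b hab d
    exact ⟨c, ih j hj h.symm _ _ (qf_symm (qf_mono hj.le hc))⟩

/-- Countable ordinals. -/
def cO (α : Ordinal.{0}) : Prop := (Set.Iio α).Countable

theorem cO_mono {α β : Ordinal.{0}} (h : β ≤ α) (hα : cO α) : cO β :=
  Set.Countable.mono (Set.Iio_subset_Iio h) hα

theorem cO_succ {α : Ordinal.{0}} (hα : cO α) : cO (Order.succ α) := by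
  unfold cO
  rw [Order.Iio_succ, ← Set.Iio_insert]
  exact hα.insert α

theorem cO_nat (k : ℕ) : cO (k : Ordinal.{0}) := by
  induction k with
  | zero => simp [cO]
  | succ k ih =>
    have := cO_succ ih
    rwa [Order.succ_eq_add_one, ← Nat.cast_succ] at this

theorem cO_sup {X : Type u} [Countable X] (f : X → Ordinal.{0}) (hf : ∀ x, cO (f x)) :
    ∃ γ, cO γ ∧ ∀ x, f x ≤ γ := by
  rcases isEmpty_or_nonempty X with hX | hX
  · exact ⟨0, by simp [cO], fun x => isEmptyElim x⟩
  · obtain ⟨e, he⟩ := exists_surjective_nat X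
    refine ⟨⨆ n, f (e n), ?_, fun x => ?_⟩
    · have : Set.Iio (⨆ n, f (e n)) = ⋃ n, Set.Iio (f (e n)) := by
        ext γ
        simp [Ordinal.lt_iSup_iff]
      unfold cO
      rw [this]
      exact Set.countable_iUnion fun n => hf _
    · obtain ⟨n, rfl⟩ := he x
      exact Ordinal.le_iSup (fun n => f (e n)) n

/-- Full type inclusion. -/
def leI {M M' : Type u} [RS G M] [RS G M'] {ι : Type} (a : ι → M) (b : ι → M') : Prop :=
  ∀ γ, cO γ → le γ a b

section
variable {M M' M'' : Type u} [RS G M] [RS G M'] [RS G M''] {ι ι' : Type}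

theorem leI_symm [Nonempty M'] {a : ι → M} {b : ι → M'} (h : leI a b) : leI b a :=
  fun γ hγ => le_swap (Order.lt_succ γ) (h _ (cO_succ hγ))

theorem leI_trans {a : ι → M} {b : ι → M'} {c : ι → M''} (h : leI a b) (h' : leI b c) :
    leI a c := fun γ hγ => le_trans' γ (h γ hγ) (h' γ hγ)

theorem leI_reindex {a : ι → M} {b : ι → M'} (h : leI a b) (f : ι' → ι) :
    leI (a ∘ f) (b ∘ f) := fun γ hγ => le_reindex γ f (h γ hγ)

theorem leI_qf {a : ι → M} {b : ι → M'} (h : leI a b) (k : ℕ) : qf k a b :=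
  le_qf (h k (cO_nat k)) le_rfl

theorem leI_step [Countable M] [Nonempty M] {a : ι → M} {b : ι → M'} (h : leI a b) (d : M') :
    ∃ c : M, leI (ex b d) (ex a c) := by
  by_contra hcon
  simp only [leI, not_exists, not_forall] at hcon
  choose f hf hf' using hcon
  obtain ⟨γ, hγ, hle⟩ := cO_sup f hf
  have := h _ (cO_succ hγ)
  rw [le_iff] at this
  obtain ⟨c, hc⟩ := this.2 γ (Order.lt_succ γ) d
  exact hf' c (le_mono (hle c) hc)

end

/-- Rasiowa–Sikorski. -/
theorem rasiowa {C : Type*} (r : C → C → Prop) (hr : ∀ c, r c c)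
    (ht : ∀ a b c, r a b → r b c → r a c) {I : Type*} [Countable I] (D : I → C → Prop)
    (hD : ∀ i c, ∃ c', r c c' ∧ D i c') (c0 : C) :
    ∃ f : ℕ → C, f 0 = c0 ∧ (∀ m n, m ≤ n → r (f m) (f n)) ∧ ∀ i n, ∃ m, n ≤ m ∧ D i (f m) := by
  rcases isEmpty_or_nonempty I with hI | hI
  · exact ⟨fun _ => c0, rfl, fun _ _ _ => hr _, fun i => isEmptyElim i⟩
  obtain ⟨e, he⟩ := exists_surjective_nat I
  choose g hg hg' using hD
  let f : ℕ → C := fun n => Nat.rec c0 (fun s c => g (e (Nat.unpair s).1) c) n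
  have hf : ∀ s, f (s+1) = g (e (Nat.unpair s).1) (f s) := fun s => rfl
  refine ⟨f, rfl, fun m n h => ?_, fun i n => ?_⟩
  · induction n, h using Nat.le_induction with
    | base => exact hr _
    | succ n _ ih => exact ht _ _ _ ih (by rw [hf]; exact hg _ _)
  · obtain ⟨j, rfl⟩ := he i
    refine ⟨Nat.pair j n + 1, (Nat.right_le_pair j n).trans (Nat.le_succ _), ?_⟩
    rw [hf]
    simpa using hg' (e j) (f (Nat.pair j n))

/-- Back and forth. -/
theorem back_forth {A B : Type u} [Countable A] [Countable B] (Φ : List (A × B) → Prop)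
    (hinj : ∀ l, Φ l → ∀ x ∈ l, ∀ y ∈ l, x.1 = y.1 ↔ x.2 = y.2)
    (forth : ∀ l, Φ l → ∀ a, ∃ b, Φ ((a, b) :: l))
    (back : ∀ l, Φ l → ∀ b, ∃ a, Φ ((a, b) :: l)) (l0 : List (A × B)) (h0 : Φ l0) :
    ∃ e : A ≃ B, (∀ x ∈ l0, e x.1 = x.2) ∧
      ∀ s : Finset A, ∃ l, Φ l ∧ ∀ a ∈ s, (a, e a) ∈ l := by
  classical
  let C := {l : List (A × B) // Φ l}
  let D : A ⊕ B → C → Prop := fun i c =>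
    Sum.elim (fun a => ∃ b, (a, b) ∈ c.1) (fun b => ∃ a, (a, b) ∈ c.1) i
  obtain ⟨f, hf0, hf, hfD⟩ := rasiowa (C := C) (fun c c' => c.1 ⊆ c'.1)
    (fun c => List.Subset.refl _) (fun a b c h h' => List.Subset.trans h h') D (by
      rintro (a | b) c
      · obtain ⟨b, hb⟩ := forth c.1 c.2 a
        exact ⟨⟨_, hb⟩, List.subset_cons_self _ _, b, List.mem_cons_self⟩
      · obtain ⟨a, ha⟩ := back c.1 c.2 b
        exact ⟨⟨_, ha⟩, List.subset_cons_self _ _, a, List.mem_cons_self⟩) ⟨l0, h0⟩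
  have hA : ∀ a, ∃ b, ∃ m, (a, b) ∈ (f m).1 := fun a => by
    obtain ⟨m, -, b, hb⟩ := hfD (Sum.inl a) 0
    exact ⟨b, m, hb⟩
  have hB : ∀ b, ∃ a, ∃ m, (a, b) ∈ (f m).1 := fun b => by
    obtain ⟨m, -, a, ha⟩ := hfD (Sum.inr b) 0
    exact ⟨a, m, ha⟩
  have key : ∀ a b a' b' m m', (a, b) ∈ (f m).1 → (a', b') ∈ (f m').1 → (a = a' ↔ b = b') := by
    intro a b a' b' m m' h h'
    exact hinj _ (f (max m m')).2 _ (hf _ _ (le_max_left m m') h) _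
      (hf _ _ (le_max_right m m') h')
  choose F hF using hA
  choose K hK using hB
  have hF' := hF
  choose mF hmF using hF
  choose mK hmK using hK
  have e1 : ∀ a, K (F a) = a := fun a => ((key _ _ _ _ _ _ (hmK (F a)) (hmF a)).2 rfl)
  have e2 : ∀ b, F (K b) = b := fun b => ((key _ _ _ _ _ _ (hmF (K b)) (hmK b)).1 rfl)
  refine ⟨⟨F, K, e1, e2⟩, ?_, ?_⟩
  · rintro ⟨a, b⟩ hx
    have : (a, b) ∈ (f 0).1 := by rw [hf0]; exact hx
    exact ((key _ _ _ _ _ _ (hmF a) this).1 rfl)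
  · intro s
    refine ⟨(f (s.sup mF)).1, (f _).2, fun a ha => ?_⟩
    exact hf _ _ (Finset.le_sup ha) (hmF a)

end basic

section main
variable {G : Sig}

/-- `p` is bad over `b` at level `α`. -/
def bad {M : Type u} [RS G M] (α : Ordinal.{0}) {ι : Type} (b : ι → M) (p : M) : Prop :=
  p ∉ Set.range b ∧ ∀ (q : ℕ) (e : Fin q → M) (i : ℕ) (p0 : M), p0 ∉ Set.range e →
    ∃ p', qf i (ex e p0) (ex e p') ∧ ¬ le α (ex b p) (ex b p')

/-- `p` is bad over `b`. -/
def badI {M : Type u} [RS G M] {ι : Type} (b : ι → M) (p : M) : Prop :=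
  p ∉ Set.range b ∧ ∀ (q : ℕ) (e : Fin q → M) (i : ℕ) (p0 : M), p0 ∉ Set.range e →
    ∃ p', qf i (ex e p0) (ex e p') ∧ ¬ leI (ex b p) (ex b p')

/-- The set of bad points at level `α`. -/
def Bset (M : Type u) [RS G M] (α : Ordinal.{0}) : Set M :=
  {p | ∃ (w : ℕ) (b : Fin w → M), bad α b p}

/-- The set of bad points. -/
def BsetI (M : Type u) [RS G M] : Set M :=
  {p | ∃ (w : ℕ) (b : Fin w → M), badI b p}

theorem bad_mono {M : Type u} [RS G M] {α α' : Ordinal.{0}} (h : α ≤ α') {ι : Type} {b : ι → M}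
    {p : M} (hb : bad α b p) : bad α' b p := by
  refine ⟨hb.1, fun q e i p0 hp0 => ?_⟩
  obtain ⟨p', h1, h2⟩ := hb.2 q e i p0 hp0
  exact ⟨p', h1, fun h3 => h2 (le_mono h h3)⟩

theorem bad_badI {M : Type u} [RS G M] {α : Ordinal.{0}} (h : cO α) {ι : Type} {b : ι → M}
    {p : M} (hb : bad α b p) : badI b p := by
  refine ⟨hb.1, fun q e i p0 hp0 => ?_⟩
  obtain ⟨p', h1, h2⟩ := hb.2 q e i p0 hp0
  exact ⟨p', h1, fun h3 => h2 (h3 α h)⟩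

theorem bad_Bset {M : Type u} [RS G M] {α : Ordinal.{0}} {ι : Type} [Finite ι] {b : ι → M}
    {p : M} (hb : bad α b p) : p ∈ Bset M α := by
  obtain ⟨w, ⟨f⟩⟩ := Finite.exists_equiv_fin ι
  refine ⟨w, b ∘ f.symm, ?_, fun q e i p0 hp0 => ?_⟩
  · rintro ⟨x, hx⟩
    exact hb.1 ⟨_, hx⟩
  · obtain ⟨p', h1, h2⟩ := hb.2 q e i p0 hp0
    refine ⟨p', h1, fun h3 => h2 ?_⟩
    have := le_reindex α (Option.map f) h3
    rw [ex_comp_map, ex_comp_map] at this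
    convert this using 2 <;> (funext i; simp)

theorem not_bad_nat {M : Type u} [RS G M] (hM : Sim M M) (k : ℕ) {w : ℕ} {b : Fin w → M}
    {p : M} (hb : bad (k : Ordinal.{0}) b p) : False := by
  obtain ⟨p', h1, h2⟩ := hb.2 w b k p hb.1
  exact h2 (hM.le_nat k _ _ h1)

/-- Decided condition. -/
def Dn {N K : Type u} [RS G N] [RS G K] (F : ℕ → N) (m0 : ℕ) (α : Ordinal.{0}) {ι : Type}
    (kk : ι → K) (ii : ι → ℕ) (r : ℕ) (B : ℕ → N) (β : Ordinal.{0}) : Prop :=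
  ∀ (r' : ℕ) (g : ℕ → ℕ) (B' : ℕ → N) (β' : Ordinal.{0}), β ≤ β' → β' < α →
    (∀ i, i < r → g i < r') → (∀ i, i < m0 → B' (g i) = F i) →
    le β (fun i : Fin r => B i) (fun i : Fin r => B' (g i)) →
    ∃ z : ℕ → K, (∀ x, z (g (ii x)) = kk x) ∧
      le β' (fun i : Fin r' => B' i) (fun i : Fin r' => z i)

/-- Conditions. -/
structure Cond {N : Type u} (F : ℕ → N) (m0 : ℕ) (α : Ordinal.{0}) where
  r : ℕ
  B : ℕ → N
  β : Ordinal.{0}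
  hr : m0 ≤ r
  hB : ∀ i, i < m0 → B i = F i
  hβ : β < α

/-- Extension of conditions. -/
def Cond.Ext {N : Type u} [RS G N] {F : ℕ → N} {m0 : ℕ} {α : Ordinal.{0}}
    (C C' : Cond F m0 α) : Prop :=
  C.r ≤ C'.r ∧ C.β ≤ C'.β ∧ le C.β (fun i : Fin C.r => C.B i) (fun i : Fin C.r => C'.B i)

section cond
variable {N : Type u} [RS G N] {F : ℕ → N} {m0 : ℕ} {α : Ordinal.{0}}

theorem Cond.Ext.refl (C : Cond F m0 α) : C.Ext C := ⟨le_rfl, le_rfl, le_refl' _ _⟩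

theorem Cond.Ext.trans {C C' C'' : Cond F m0 α} (h : C.Ext C') (h' : C'.Ext C'') : C.Ext C'' := by
  refine ⟨h.1.trans h'.1, h.2.1.trans h'.2.1, le_trans' _ h.2.2 ?_⟩
  exact le_reindex _ (Fin.castLE h.1) (le_mono h.2.1 h'.2.2)

theorem Cond.grow (C : Cond F m0 α) (k : ℕ) {β0 : Ordinal.{0}} (hβ : β0 < α) :
    ∃ C' : Cond F m0 α, C.Ext C' ∧ C'.B = C.B ∧ k ≤ C'.r ∧ β0 ≤ C'.β :=
  ⟨⟨max C.r k, C.B, max C.β β0, C.hr.trans (le_max_left _ _), C.hB, max_lt C.hβ hβ⟩,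
    ⟨le_max_left _ _, le_max_left _ _, le_refl' _ _⟩, rfl, le_max_right _ _, le_max_right _ _⟩

theorem Cond.grow' (C : Cond F m0 α) {ι : Type} [Finite ι] (k : ι → ℕ) {β0 : Ordinal.{0}}
    (hβ : β0 < α) :
    ∃ C' : Cond F m0 α, C.Ext C' ∧ C'.B = C.B ∧ (∀ x, k x < C'.r) ∧ β0 ≤ C'.β := by
  obtain ⟨m, hm⟩ := (Set.finite_range k).bddAbove
  obtain ⟨C', h1, h2, h3, h4⟩ := C.grow (m+1) hβ
  exact ⟨C', h1, h2, fun x => lt_of_le_of_lt (hm ⟨x, rfl⟩) h3, h4⟩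

theorem Cond.add (C : Cond F m0 α) (d : N) :
    ∃ C' : Cond F m0 α, C.Ext C' ∧ C'.r = C.r + 1 ∧ C'.β = C.β ∧ (∀ i, i < C.r → C'.B i = C.B i) ∧
      C'.B C.r = d := by
  have h : ∀ i, i < C.r → (Function.update C.B C.r d) i = C.B i := fun i hi =>
    Function.update_of_ne hi.ne _ _
  refine ⟨⟨C.r + 1, Function.update C.B C.r d, C.β, C.hr.trans (Nat.le_succ _), fun i hi => ?_, C.hβ⟩,
    ⟨Nat.le_succ _, le_rfl, ?_⟩, rfl, rfl, h, by simp⟩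
  · rw [h i (hi.trans_le C.hr), C.hB i hi]
  · have : (fun i : Fin C.r => (Function.update C.B C.r d) i) = (fun i : Fin C.r => C.B i) := by
      funext i; exact h i i.2
    simp only [this]
    exact le_refl' _ _

/-- Requirement 1. -/
def Rq1 {ι : Type} (j : ι → ℕ) (u : ι → N) (δ0 : Ordinal.{0})
    (r : ℕ) (B : ℕ → N) (β : Ordinal.{0}) : Prop :=
  (∀ i, j i < r) ∧ δ0 ≤ β ∧ (le δ0 u (B ∘ j) ∨
    (∃ k : ℕ, (k : Ordinal) ≤ δ0 ∧ ¬ qf k u (B ∘ j)) ∨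
    ∃ δ, δ < δ0 ∧ ∃ x, x < r ∧ ∀ c, ¬ le δ (ex (B ∘ j) (B x)) (ex u c))

/-- Requirement 2. -/
def Rq2 {ι : Type} (j : ι → ℕ) (v : ι → N) (x : N) (δ γ : Ordinal.{0})
    (r : ℕ) (B : ℕ → N) (β : Ordinal.{0}) : Prop :=
  (∀ i, j i < r) ∧ δ ≤ β ∧ (¬ le γ (B ∘ j) v ∨ ∃ y, y < r ∧ le δ (ex v x) (ex (B ∘ j) (B y)))

/-- Requirement 5. -/
def Rq5 {ι : Type} (b : ι → N) (p : N) {q : ℕ} (e : Fin q → ℕ) (p0 : ℕ) (i : ℕ)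
    (r : ℕ) (B : ℕ → N) (β : Ordinal.{0}) : Prop :=
  (∀ x, e x < r) ∧ p0 < r ∧ (i : Ordinal) ≤ β ∧ (B p0 ∈ Set.range (B ∘ e) ∨
    ∃ a, a < r ∧ qf i (ex (B ∘ e) (B p0)) (ex (B ∘ e) (B a)) ∧
      ((∃ k : ℕ, (k : Ordinal) ≤ β ∧ ¬ qf k (ex b p) (ex b (B a))) ∨
       ∃ δ, δ ≤ β ∧ ∃ a', a' < r ∧ ∀ x, ¬ le δ (ex (ex b (B a)) (B a')) (ex (ex b p) x)))

/-- Requirement 4. -/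
def Rq4 {K : Type u} [RS G K] (F : ℕ → N) (m0 : ℕ) (α : Ordinal.{0}) {ι : Type}
    (kk : ι → K) (ii : ι → ℕ) (r : ℕ) (B : ℕ → N) (β : Ordinal.{0}) : Prop :=
  (∀ x, ii x < r) ∧ (Dn F m0 α kk ii r B β ∨
    ¬ ∃ z : ℕ → K, (∀ x, z (ii x) = kk x) ∧ le β (fun i : Fin r => B i) (fun i : Fin r => z i))

theorem dense1 (C : Cond F m0 α) {ι : Type} [Finite ι] (j : ι → ℕ) (u : ι → N) {δ0 : Ordinal.{0}}
    (h : δ0 < α) : ∃ C' : Cond F m0 α, C.Ext C' ∧ Rq1 j u δ0 C'.r C'.B C'.β := by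
  obtain ⟨C1, h1, -, h2, h3⟩ := C.grow' j h
  by_cases hl : le δ0 u (C1.B ∘ j)
  · exact ⟨C1, h1, h2, h3, Or.inl hl⟩
  rw [le_iff, not_and_or] at hl
  rcases hl with hl | hl
  · push Not at hl
    exact ⟨C1, h1, h2, h3, Or.inr (Or.inl hl)⟩
  · push Not at hl
    obtain ⟨δ, hδ, d, hd⟩ := hl
    obtain ⟨C2, g1, g2, g3, g4, g5⟩ := C1.add d
    have e : C2.B ∘ j = C1.B ∘ j := funext fun x => g4 _ (h2 x)
    refine ⟨C2, h1.trans g1, fun i => by have := h2 i; omega, by rw [g3]; exact h3,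
      Or.inr (Or.inr ⟨δ, hδ, C1.r, by omega, ?_⟩)⟩
    rw [e, g5]
    exact hd

theorem dense2 (C : Cond F m0 α) {ι : Type} [Finite ι] (j : ι → ℕ) (v : ι → N) (x : N)
    {δ γ : Ordinal.{0}} (h : δ < γ) (hγ : γ < α) :
    ∃ C' : Cond F m0 α, C.Ext C' ∧ Rq2 j v x δ γ C'.r C'.B C'.β := by
  obtain ⟨C1, h1, -, h2, h3⟩ := C.grow' j (h.trans hγ)
  by_cases hl : le γ (C1.B ∘ j) v
  · rw [le_iff] at hl
    obtain ⟨c, hc⟩ := hl.2 δ h x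
    obtain ⟨C2, g1, g2, g3, g4, g5⟩ := C1.add c
    have e : C2.B ∘ j = C1.B ∘ j := funext fun x => g4 _ (h2 x)
    refine ⟨C2, h1.trans g1, fun i => by have := h2 i; omega, by rw [g3]; exact h3,
      Or.inr ⟨C1.r, by omega, ?_⟩⟩
    rw [e, g5]
    exact hc
  · exact ⟨C1, h1, h2, h3, Or.inl hl⟩

theorem dense5 (hα : Ordinal.omega0 ≤ α) (C : Cond F m0 α) {ι : Type} {b : ι → N} {p : N}
    (hb : bad α b p)
    {q : ℕ} (e : Fin q → ℕ) (p0 : ℕ) (i : ℕ) :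
    ∃ C' : Cond F m0 α, C.Ext C' ∧ Rq5 b p e p0 i C'.r C'.B C'.β := by
  have hnat : ∀ k : ℕ, (k : Ordinal.{0}) < α := fun k => (Ordinal.natCast_lt_omega0 k).trans_le hα
  obtain ⟨C1, h1, -, h2, h3⟩ := C.grow' (ex e p0) (hnat i)
  by_cases hp : C1.B p0 ∈ Set.range (C1.B ∘ e)
  · exact ⟨C1, h1, fun x => h2 (some x), h2 none, h3, Or.inl hp⟩
  obtain ⟨p', hq, hl⟩ := hb.2 q (C1.B ∘ e) i (C1.B p0) hp
  obtain ⟨C2, g1, g2, g3, g4, g5⟩ := C1.add p'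
  have e2 : C2.B ∘ e = C1.B ∘ e := funext fun x => g4 _ (h2 (some x))
  have e2' : C2.B p0 = C1.B p0 := g4 _ (h2 none)
  have l1 : ∀ x, e x < C1.r := fun x => h2 (some x)
  have l2 : p0 < C1.r := h2 none
  rw [le_iff, not_and_or] at hl
  rcases hl with hl | hl
  · push Not at hl
    obtain ⟨k, hk, hk'⟩ := hl
    obtain ⟨C3, f1, f2, f3, f4⟩ := C2.grow C2.r (hnat k)
    refine ⟨C3, (h1.trans g1).trans f1, fun x => by have := l1 x; omega, by omega,
      (h3.trans (g1.2.1)).trans f1.2.1, Or.inr ⟨C1.r, by omega, ?_, Or.inl ⟨k, f4, ?_⟩⟩⟩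
    · rw [f2, e2, e2', g5]; exact hq
    · rw [f2, g5]; exact hk'
  · push Not at hl
    obtain ⟨δ, hδ, d, hd⟩ := hl
    obtain ⟨C3, f1, f2, f3, f4⟩ := C2.grow C2.r hδ
    obtain ⟨C4, k1, k2, k3, k4, k5⟩ := C3.add d
    have e4 : ∀ x, x < C2.r → C4.B x = C2.B x := fun x hx => by
      rw [k4 x (by omega), f2]
    have e5 : C4.B ∘ e = C2.B ∘ e := funext fun x => e4 _ (by have := l1 x; simp; omega)
    refine ⟨C4, ((h1.trans g1).trans f1).trans k1, fun x => by have := l1 x; omega, by omega,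
      ((h3.trans (g1.2.1)).trans f1.2.1).trans k1.2.1,
      Or.inr ⟨C1.r, by omega, ?_, Or.inr ⟨δ, by rw [k3]; exact f4, C3.r, by omega, ?_⟩⟩⟩
    · rw [e5, e4 _ (by omega), e4 _ (by omega), e2, e2', g5]; exact hq
    · rw [k5, e4 _ (by omega), g5]; exact hd

theorem dense4 (C : Cond F m0 α) {K : Type u} [RS G K] {ι : Type} [Finite ι]
    (kk : ι → K) (ii : ι → ℕ) :
    ∃ C' : Cond F m0 α, C.Ext C' ∧ Rq4 F m0 α kk ii C'.r C'.B C'.β := by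
  obtain ⟨C1, h1, -, h2, -⟩ := C.grow' ii C.hβ
  by_cases hD : Dn F m0 α kk ii C1.r C1.B C1.β
  · exact ⟨C1, h1, h2, Or.inl hD⟩
  unfold Dn at hD
  push Not at hD
  obtain ⟨r', g, B', β', a1, a2, a3, a4, a5, a6⟩ := hD
  let B1 : ℕ → N := fun i => if i < C1.r then B' (g i) else B' (i - C1.r)
  have b1 : ∀ i, i < C1.r → B1 i = B' (g i) := fun i hi => if_pos hi
  have b2 : ∀ i, B1 (C1.r + i) = B' i := fun i => by simp [B1]
  let C2 : Cond F m0 α := ⟨C1.r + r', B1, β', C1.hr.trans (Nat.le_add_right _ _), fun i hi => by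
    rw [b1 i (hi.trans_le C1.hr), a4 i hi], a2⟩
  have hC2 : C1.Ext C2 := by
    refine ⟨Nat.le_add_right _ _, a1, ?_⟩
    have : (fun i : Fin C1.r => C2.B i) = fun i : Fin C1.r => B' (g i) := by
      funext i; exact b1 i i.2
    rw [this]; exact a5
  refine ⟨C2, h1.trans hC2, fun x => (h2 x).trans_le hC2.1, Or.inr ?_⟩
  rintro ⟨z, hz1, hz2⟩
  refine a6 (fun i => z (C1.r + i)) (fun x => ?_) ?_
  · rw [← hz1]
    have hq := le_qf (k := 0) hz2 (by simp)
    have hg := a3 _ (h2 x)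
    have := (hq.1 ⟨C1.r + g (ii x), by simp [C2]; exact hg⟩ ⟨ii x, (h2 x).trans_le hC2.1⟩).1 (by
      change B1 _ = B1 _
      rw [b1 _ (h2 x)]; exact b2 _)
    exact this
  · have := le_reindex _ (fun i : Fin r' => (⟨C1.r + i, by simp [C2]⟩ : Fin C2.r)) hz2
    have e : (fun i : Fin r' => B' i) = (fun i : Fin C2.r => C2.B i) ∘
      (fun i : Fin r' => (⟨C1.r + i, by simp [C2]⟩ : Fin C2.r)) := by
      funext i; exact (b2 i).symm
    rw [e]; exact this

end cond

end main

section chain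
variable {G : Sig}

theorem le_equiv {M M' : Type u} [RS G M] [RS G M'] {ι ι' : Type} (e : ι' ≃ ι) {α : Ordinal.{0}}
    {a : ι → M} {b : ι → M'} : le α (a ∘ e) (b ∘ e) ↔ le α a b := by
  refine ⟨fun h => ?_, le_reindex _ _⟩
  have := le_reindex α e.symm h
  rwa [Function.comp_assoc, Function.comp_assoc, Equiv.self_comp_symm] at this

theorem qf_equiv {M M' : Type u} [RS G M] [RS G M'] {ι ι' : Type} (e : ι' ≃ ι) {k : ℕ}
    {a : ι → M} {b : ι → M'} : qf k (a ∘ e) (b ∘ e) ↔ qf k a b := by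
  refine ⟨fun h => ?_, fun h => qf_reindex h _⟩
  have := qf_reindex h e.symm
  rwa [Function.comp_assoc, Function.comp_assoc, Equiv.self_comp_symm] at this

theorem le_equiv_ex {M M' : Type u} [RS G M] [RS G M'] {ι ι' : Type} (e : ι' ≃ ι) {α : Ordinal.{0}}
    {a : ι → M} {b : ι → M'} {c : M} {d : M'} :
    le α (ex (a ∘ e) c) (ex (b ∘ e) d) ↔ le α (ex a c) (ex b d) := by
  rw [← ex_comp_map, ← ex_comp_map]
  exact le_equiv (Equiv.optionCongr e)

theorem Rq1_equiv {N : Type u} [RS G N] {ι ι' : Type} (e : ι' ≃ ι) {j : ι → ℕ} {u : ι → N}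
    {δ0 : Ordinal.{0}} {r : ℕ} {B : ℕ → N} {β : Ordinal.{0}} (h : Rq1 (j ∘ e) (u ∘ e) δ0 r B β) :
    Rq1 j u δ0 r B β := by
  obtain ⟨h1, h2, h3⟩ := h
  refine ⟨fun i => by simpa using h1 (e.symm i), h2, ?_⟩
  rw [← Function.comp_assoc, le_equiv] at h3
  simpa only [qf_equiv, le_equiv_ex] using h3

theorem Rq2_equiv {N : Type u} [RS G N] {ι ι' : Type} (e : ι' ≃ ι) {j : ι → ℕ} {u : ι → N} {x : N}
    {δ γ : Ordinal.{0}} {r : ℕ} {B : ℕ → N} {β : Ordinal.{0}}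
    (h : Rq2 (j ∘ e) (u ∘ e) x δ γ r B β) : Rq2 j u x δ γ r B β := by
  obtain ⟨h1, h2, h3⟩ := h
  refine ⟨fun i => by simpa using h1 (e.symm i), h2, ?_⟩
  rw [← Function.comp_assoc, le_equiv] at h3
  simpa only [qf_equiv, le_equiv_ex] using h3

theorem Rq4_equiv {N K : Type u} [RS G N] [RS G K] {F : ℕ → N} {m0 : ℕ} {α : Ordinal.{0}}
    {ι ι' : Type} (e : ι' ≃ ι) {kk : ι → K} {ii : ι → ℕ} {r : ℕ} {B : ℕ → N} {β : Ordinal.{0}}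
    (h : Rq4 F m0 α (kk ∘ e) (ii ∘ e) r B β) : Rq4 F m0 α kk ii r B β := by
  obtain ⟨h1, h3⟩ := h
  refine ⟨fun i => by simpa using h1 (e.symm i), ?_⟩
  have t : ∀ (z : ℕ → K) (g : ℕ → ℕ), (∀ x, z (g ((ii ∘ e) x)) = (kk ∘ e) x) ↔
      ∀ x, z (g (ii x)) = kk x :=
    fun z g => ⟨fun h x => by simpa using h (e.symm x), fun h x => h (e x)⟩
  have t' : ∀ (z : ℕ → K), (∀ x, z ((ii ∘ e) x) = (kk ∘ e) x) ↔
      ∀ x, z (ii x) = kk x := fun z => t z id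
  unfold Dn at h3
  simp only [t, t'] at h3
  exact h3

/-- A generic chain. -/
structure Chain {N : Type u} [RS G N] (F : ℕ → N) (m0 : ℕ) (α : Ordinal.{0}) {m : ℕ}
    (w : Fin m → ℕ) (bi : ∀ l, Fin (w l) → ℕ) (pi : Fin m → ℕ) {J : Type} (rep : J → Type u)
    [∀ j, RS G (rep j)] where mkC ::
  C : ℕ → Cond F m0 α
  mono : ∀ s t, s ≤ t → (C s).Ext (C t)
  R1 : ∀ (ι : Type) [Finite ι] (j : ι → ℕ) (u : ι → N) (δ0 : Ordinal.{0}), δ0 < α → ∀ s0,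
    ∃ s, s0 ≤ s ∧ Rq1 j u δ0 (C s).r (C s).B (C s).β
  R2 : ∀ (ι : Type) [Finite ι] (j : ι → ℕ) (u : ι → N) (x : N) (δ γ : Ordinal.{0}), δ < γ → γ < α →
    ∀ s0, ∃ s, s0 ≤ s ∧ Rq2 j u x δ γ (C s).r (C s).B (C s).β
  R3 : ∀ (k : ℕ) (s0 : ℕ), ∃ s, s0 ≤ s ∧ k ≤ (C s).r ∧ (k : Ordinal) ≤ (C s).β
  R4 : ∀ (ι : Type) [Finite ι] (i : J) (kk : ι → rep i) (ii : ι → ℕ) (s0 : ℕ),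
    ∃ s, s0 ≤ s ∧ Rq4 F m0 α kk ii (C s).r (C s).B (C s).β
  R5 : ∀ (l : Fin m) (q : ℕ) (e : Fin q → ℕ) (p0 i : ℕ) (s0 : ℕ),
    ∃ s, s0 ≤ s ∧ Rq5 (F ∘ bi l) (F (pi l)) e p0 i (C s).r (C s).B (C s).β

theorem exists_chain {N : Type u} [RS G N] [Countable N] (F : ℕ → N) (m0 : ℕ) (α : Ordinal.{0})
    (hα : Ordinal.omega0 ≤ α) (hcα : cO α) {m : ℕ}
    (w : Fin m → ℕ) (bi : ∀ l, Fin (w l) → ℕ) (pi : Fin m → ℕ) {J : Type} [Finite J]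
    (rep : J → Type u)
    [∀ j, RS G (rep j)] [∀ j, Countable (rep j)] (hbad : ∀ l, bad α (F ∘ bi l) (F (pi l))) :
    Nonempty (Chain F m0 α w bi pi rep) := by
  have hnat : ∀ k : ℕ, (k : Ordinal.{0}) < α := fun k => (Ordinal.natCast_lt_omega0 k).trans_le hα
  have : Countable (Set.Iio α) := hcα
  have : Countable J := Finite.to_countable
  let I1 := Σ q : ℕ, (Fin q → ℕ) × (Fin q → N) × Set.Iio α
  let I2 := Σ q : ℕ, (Fin q → ℕ) × (Fin q → N) × N × {x : Set.Iio α × Set.Iio α // x.1 < x.2}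
  let I4 := Σ q : ℕ, (Fin q → ℕ) × Σ i : J, Fin q → rep i
  let I5 := Fin m × (Σ q : ℕ, Fin q → ℕ) × ℕ × ℕ
  let D : I1 ⊕ I2 ⊕ ℕ ⊕ I4 ⊕ I5 → Cond F m0 α → Prop := fun i C =>
    Sum.elim (fun x : I1 => Rq1 x.2.1 x.2.2.1 x.2.2.2.1 C.r C.B C.β)
    (Sum.elim (fun x : I2 => Rq2 x.2.1 x.2.2.1 x.2.2.2.1 x.2.2.2.2.1.1.1 x.2.2.2.2.1.2.1 C.r C.B C.β)
    (Sum.elim (fun k : ℕ => k ≤ C.r ∧ (k : Ordinal) ≤ C.β)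
    (Sum.elim (fun x : I4 => Rq4 F m0 α x.2.2.2 x.2.1 C.r C.B C.β)
    (fun x : I5 => Rq5 (F ∘ bi x.1) (F (pi x.1)) x.2.1.2 x.2.2.1 x.2.2.2 C.r C.B C.β)))) i
  obtain ⟨f, -, hf, hfD⟩ := rasiowa (C := Cond F m0 α) Cond.Ext Cond.Ext.refl
    (fun a b c h h' => h.trans h') D (by
      rintro (x | x | x | x | x) C
      · exact dense1 C _ _ x.2.2.2.2
      · exact dense2 C _ _ _ x.2.2.2.2.2 x.2.2.2.2.1.2.2
      · obtain ⟨C', h1, -, h2, h3⟩ := C.grow x (hnat x)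
        exact ⟨C', h1, h2, h3⟩
      · exact dense4 C _ _
      · exact dense5 hα C (hbad _) _ _ _) ⟨m0, F, 0, le_rfl, fun _ _ => rfl, by
        simpa using hnat 0⟩
  refine ⟨⟨f, hf, ?_, ?_, ?_, ?_, ?_⟩⟩
  · intro ι _ j u δ0 hδ s0
    obtain ⟨q, ⟨e⟩⟩ := Finite.exists_equiv_fin ι
    obtain ⟨s, hs, h⟩ := hfD (Sum.inl ⟨q, j ∘ e.symm, u ∘ e.symm, ⟨δ0, hδ⟩⟩) s0
    exact ⟨s, hs, Rq1_equiv e.symm h⟩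
  · intro ι _ j u x δ γ hδ hγ s0
    obtain ⟨q, ⟨e⟩⟩ := Finite.exists_equiv_fin ι
    obtain ⟨s, hs, h⟩ := hfD (Sum.inr (Sum.inl ⟨q, j ∘ e.symm, u ∘ e.symm, x,
      ⟨(⟨δ, hδ.trans hγ⟩, ⟨γ, hγ⟩), hδ⟩⟩)) s0
    exact ⟨s, hs, Rq2_equiv e.symm h⟩
  · intro k s0
    exact hfD (Sum.inr (Sum.inr (Sum.inl k))) s0
  · intro ι _ i kk ii s0
    obtain ⟨q, ⟨e⟩⟩ := Finite.exists_equiv_fin ι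
    obtain ⟨s, hs, h⟩ := hfD (Sum.inr (Sum.inr (Sum.inr (Sum.inl
      ⟨q, ii ∘ e.symm, i, kk ∘ e.symm⟩)))) s0
    exact ⟨s, hs, Rq4_equiv e.symm h⟩
  · intro l q e p0 i s0
    exact hfD (Sum.inr (Sum.inr (Sum.inr (Sum.inr ⟨l, ⟨q, e⟩, p0, i⟩)))) s0

namespace Chain

variable {N : Type u} [RS G N] {F : ℕ → N} {m0 : ℕ} {α : Ordinal.{0}} {m : ℕ}
    {w : Fin m → ℕ} {bi : ∀ l, Fin (w l) → ℕ} {pi : Fin m → ℕ} {J : Type} {rep : J → Type u}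
    [∀ j, RS G (rep j)] (X : Chain F m0 α w bi pi rep)

/-- Eventual equality. -/
def st : Setoid ℕ where
  r i j := ∀ᶠ s in Filter.atTop, (X.C s).B i = (X.C s).B j
  iseqv := ⟨fun _ => Filter.Eventually.of_forall fun _ => rfl, fun h => h.mono fun _ h => h.symm,
    fun h h' => (h.and h').mono fun _ h => h.1.trans h.2⟩

/-- The limit structure. -/
def Y : Type u := ULift.{u} (Quotient X.st)

/-- Projection. -/
def mk (i : ℕ) : X.Y := ⟨Quotient.mk X.st i⟩

/-- Representative. -/
noncomputable def out (y : X.Y) : ℕ := Quotient.out y.down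

theorem mk_out (y : X.Y) : X.mk (X.out y) = y := by
  have : (⟦Quotient.out y.down⟧ : Quotient X.st) = y.down := Quotient.out_eq _
  exact congrArg ULift.up this

theorem mk_eq {i j : ℕ} : X.mk i = X.mk j ↔ ∀ᶠ s in Filter.atTop, (X.C s).B i = (X.C s).B j := by
  constructor
  · intro h
    exact Quotient.exact (s := X.st) (ULift.up_injective h)
  · intro h
    exact congrArg ULift.up (Quotient.sound (s := X.st) h)

instance : Countable X.Y := by
  have : Function.Surjective X.mk := fun y => ⟨_, X.mk_out y⟩
  exact this.countable

noncomputable instance : RS G X.Y where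
  rel n t := ∀ᶠ s in Filter.atTop, RS.rel n ((X.C s).B ∘ X.out ∘ t)

theorem rel_mk (n : ℕ) (t : Fin (G.ar n) → ℕ) :
    RS.rel n (X.mk ∘ t) ↔ ∀ᶠ s in Filter.atTop, RS.rel n ((X.C s).B ∘ t) := by
  have h : ∀ᶠ s in Filter.atTop, ∀ i, (X.C s).B (X.out (X.mk (t i))) = (X.C s).B (t i) := by
    rw [Filter.eventually_all]
    intro i
    rw [← X.mk_eq, X.mk_out]
  apply Filter.eventually_congr
  filter_upwards [h] with s hs
  have : (X.C s).B ∘ X.out ∘ X.mk ∘ t = (X.C s).B ∘ t := funext hs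
  rw [this]

theorem le_stage {s t : ℕ} (h : s ≤ t) {ι : Type} (j : ι → ℕ) (hj : ∀ i, j i < (X.C s).r) :
    le (X.C s).β ((X.C s).B ∘ j) ((X.C t).B ∘ j) :=
  le_reindex _ (fun i => (⟨j i, hj i⟩ : Fin (X.C s).r)) (X.mono s t h).2.2

theorem qf_mk (s : ℕ) {ι : Type} (j : ι → ℕ) (hj : ∀ i, j i < (X.C s).r) {k : ℕ}
    (hk : (k : Ordinal) ≤ (X.C s).β) : qf k ((X.C s).B ∘ j) (X.mk ∘ j) := by
  have key : ∀ t, s ≤ t → qf k ((X.C s).B ∘ j) ((X.C t).B ∘ j) := fun t ht =>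
    le_qf (X.le_stage ht j hj) hk
  have hconst : ∀ (p : Prop) (f : ℕ → Prop), (∀ t, s ≤ t → (p ↔ f t)) →
      (p ↔ ∀ᶠ t in Filter.atTop, f t) := by
    intro p f h
    constructor
    · intro hp
      filter_upwards [Filter.eventually_ge_atTop s] with t ht using (h t ht).1 hp
    · intro hf
      obtain ⟨t, h1, h2⟩ := (hf.and (Filter.eventually_ge_atTop s)).exists
      exact (h t h2).2 h1
  constructor
  · intro i i'
    rw [Function.comp_apply (f := X.mk), Function.comp_apply (f := X.mk), X.mk_eq]
    exact hconst _ _ fun t ht => (key t ht).1 i i'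
  · intro n hn t
    rw [Function.comp_assoc, Function.comp_assoc, X.rel_mk]
    exact hconst _ _ fun t' ht => (key t' ht).2 n hn t

theorem exists_stage {ι : Type} [Finite ι] (j : ι → ℕ) (k : ℕ) (s0 : ℕ) :
    ∃ s, s0 ≤ s ∧ (∀ i, j i < (X.C s).r) ∧ (k : Ordinal) ≤ (X.C s).β := by
  obtain ⟨M, hM⟩ := (Set.finite_range j).bddAbove
  obtain ⟨s, h1, h2, h3⟩ := X.R3 (max (M+1) k) s0
  refine ⟨s, h1, fun i => ?_, le_trans (by exact_mod_cast le_max_right _ _) h3⟩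
  have := hM ⟨i, rfl⟩
  omega

theorem P_aux (γ : Ordinal.{0}) : ∀ (s : ℕ) (ι : Type) [Finite ι] (j : ι → ℕ)
    (_ : ∀ i, j i < (X.C s).r),
    (γ ≤ (X.C s).β → le γ ((X.C s).B ∘ j) (X.mk ∘ j)) ∧
    (γ < (X.C s).β → le γ (X.mk ∘ j) ((X.C s).B ∘ j)) := by
  have : Nonempty N := ⟨F 0⟩
  induction γ using WellFoundedLT.induction with
  | ind γ ih =>
    intro s ι _ j hj
    constructor
    · intro hγ
      rw [le_iff]
      refine ⟨fun k hk => X.qf_mk s j hj (hk.trans hγ), fun δ hδ d => ?_⟩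
      obtain ⟨x, rfl⟩ : ∃ x, X.mk x = d := ⟨_, X.mk_out d⟩
      obtain ⟨t, hst, h1, -⟩ := X.exists_stage (ex j x) 0 s
      have hβ : δ < (X.C t).β := hδ.trans_le (hγ.trans (X.mono s t hst).2.1)
      have := (ih δ hδ t (Option ι) (ex j x) h1).2 hβ
      have h2 := X.le_stage hst j hj
      rw [le_iff] at h2
      obtain ⟨c, hc⟩ := h2.2 δ (hδ.trans_le hγ) ((X.C t).B x)
      rw [comp_ex, comp_ex] at this
      exact ⟨c, le_trans' _ this hc⟩
    · intro hγ
      rw [le_iff]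
      refine ⟨fun k hk => qf_symm (X.qf_mk s j hj (hk.trans hγ.le)), fun δ hδ d => ?_⟩
      obtain ⟨t, hst, h1, h2, h3⟩ := X.R2 ι j ((X.C s).B ∘ j) d δ γ hδ (hγ.trans (X.C s).hβ) s
      rcases h3 with h3 | ⟨y, hy, h3⟩
      · exact absurd (le_swap hγ (X.le_stage hst j hj)) h3
      · have := (ih δ hδ t (Option ι) (ex j y) (by
          intro o; cases o
          · exact hy
          · exact h1 _)).1 h2
        rw [comp_ex, comp_ex] at this
        exact ⟨X.mk y, le_trans' _ h3 this⟩

theorem le_mk {γ : Ordinal.{0}} {s : ℕ} {ι : Type} [Finite ι] (j : ι → ℕ)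
    (hj : ∀ i, j i < (X.C s).r) (h : γ ≤ (X.C s).β) : le γ ((X.C s).B ∘ j) (X.mk ∘ j) :=
  (X.P_aux γ s ι j hj).1 h

theorem mk_le {γ : Ordinal.{0}} {s : ℕ} {ι : Type} [Finite ι] (j : ι → ℕ)
    (hj : ∀ i, j i < (X.C s).r) (h : γ < (X.C s).β) : le γ (X.mk ∘ j) ((X.C s).B ∘ j) :=
  (X.P_aux γ s ι j hj).2 h

theorem sim (hN : Sim N N) : Sim X.Y N := by
  refine ⟨fun k => ?_, fun k ι _ a b hab d => ?_, fun k ι _ a b hab d => ?_⟩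
  · obtain ⟨s, -, h1, h2⟩ := X.exists_stage (Empty.elim : Empty → ℕ) k 0
    have := X.qf_mk s _ h1 h2
    convert qf_symm this
  · obtain ⟨s, -, h1, h2⟩ := X.exists_stage (ex (X.out ∘ a) (X.out d)) k 0
    have h3 := X.qf_mk s _ h1 h2
    have e : X.mk ∘ X.out ∘ a = a := funext fun i => X.mk_out _
    rw [comp_ex, comp_ex, e, X.mk_out] at h3
    have h4 : qf k ((X.C s).B ∘ X.out ∘ a) b := qf_trans (qf_reindex h3 some) hab
    obtain ⟨c, hc⟩ := hN.2.1 k ι _ _ h4 ((X.C s).B (X.out d))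
    exact ⟨c, qf_trans (qf_symm h3) hc⟩
  · obtain ⟨s, -, h1, h2⟩ := X.exists_stage (X.out ∘ a) (k+2) 0
    have h3 := X.qf_mk s _ h1 h2
    have e : X.mk ∘ X.out ∘ a = a := funext fun i => X.mk_out _
    rw [e] at h3
    have h4 : qf k ((X.C s).B ∘ X.out ∘ a) b := qf_trans (qf_mono (by omega) h3) hab
    obtain ⟨c', hc'⟩ := hN.2.2 k ι _ _ h4 d
    have h5 : (((k+1 : ℕ) : Ordinal.{0})) < (X.C s).β :=
      lt_of_lt_of_le (by exact_mod_cast Nat.lt_succ_self (k+1)) h2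
    have h6 := X.mk_le _ h1 h5
    rw [e, le_iff] at h6
    obtain ⟨c, hc⟩ := h6.2 (k : Ordinal) (by exact_mod_cast Nat.lt_succ_self k) c'
    exact ⟨c, qf_trans (qf_symm (le_qf hc le_rfl)) hc'⟩

theorem R1c {ι : Type} [Finite ι] (j : ι → ℕ) (u : ι → N) {δ0 : Ordinal.{0}} (hδ : δ0 < α)
    (h : le δ0 u (X.mk ∘ j)) (s0 : ℕ) :
    ∃ t0, s0 ≤ t0 ∧ ∀ t, t0 ≤ t → (∀ i, j i < (X.C t).r) ∧ le δ0 u ((X.C t).B ∘ j) := by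
  obtain ⟨t0, ht0, h1, h2, h3⟩ := X.R1 ι j u δ0 hδ s0
  have h4 : le δ0 u ((X.C t0).B ∘ j) := by
    rcases h3 with h3 | ⟨k, hk, h3⟩ | ⟨δ, hδ', x, hx, h3⟩
    · exact h3
    · exact absurd (qf_trans (le_qf h hk) (qf_symm (X.qf_mk t0 j h1 (hk.trans h2)))) h3
    · rw [le_iff] at h
      obtain ⟨c, hc⟩ := h.2 δ hδ' (X.mk x)
      refine absurd ?_ (h3 c)
      have := X.le_mk (γ := δ) (s := t0) (ex j x) (by
          intro o; cases o
          · exact hx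
          · exact h1 _) (hδ'.le.trans h2)
      rw [comp_ex, comp_ex] at this
      exact le_trans' _ this hc
  refine ⟨t0, ht0, fun t ht => ⟨fun i => (h1 i).trans_le (X.mono _ _ ht).1, ?_⟩⟩
  exact le_trans' _ h4 (le_mono h2 (X.le_stage ht j h1))

theorem B_F (s : ℕ) {ι : Type} (j : ι → ℕ) (hj : ∀ i, j i < m0) : (X.C s).B ∘ j = F ∘ j :=
  funext fun i => (X.C s).hB _ (hj i)

theorem stays_bad (hpi : ∀ l, pi l < m0) (hbi : ∀ l x, bi l x < m0)
    (hbad : ∀ l, bad α (F ∘ bi l) (F (pi l))) (l : Fin m) :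
    bad α (X.mk ∘ bi l) (X.mk (pi l)) := by
  constructor
  · rintro ⟨x, hx⟩
    have h := X.qf_mk 0 (ex (bi l) (pi l)) (by
      intro o; cases o
      · exact (hpi l).trans_le (X.C 0).hr
      · exact (hbi l _).trans_le (X.C 0).hr) (k := 0) (by simp)
    have := (h.1 (some x) none).2 hx
    simp only [Function.comp_apply, ex_some, ex_none] at this
    rw [(X.C 0).hB _ (hpi l), (X.C 0).hB _ (hbi l x)] at this
    exact (hbad l).1 ⟨x, this⟩
  · intro q e i p0 hp0
    obtain ⟨s, -, h1, h2, h3, h4⟩ := X.R5 l q (X.out ∘ e) (X.out p0) i 0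
    have ee : X.mk ∘ X.out ∘ e = e := funext fun i => X.mk_out _
    have q1 := X.qf_mk s (ex (X.out ∘ e) (X.out p0)) (by
      intro o; cases o
      · exact h2
      · exact h1 _) h3
    rcases h4 with ⟨x, hx⟩ | ⟨a, ha, hqa, h4⟩
    · exfalso
      have := (q1.1 (some x) none).1 hx
      simp only [Function.comp_apply, ex_some, ex_none, X.mk_out] at this
      exact hp0 ⟨x, this⟩
    · refine ⟨X.mk a, ?_, fun hle => ?_⟩
      · have q2 := X.qf_mk s (ex (X.out ∘ e) a) (by
          intro o; cases o
          · exact ha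
          · exact h1 _) h3
        rw [comp_ex, comp_ex, ee, X.mk_out] at q1
        rw [comp_ex, comp_ex, ee] at q2
        exact qf_trans (qf_trans (qf_symm q1) hqa) q2
      · have hbs : ∀ x, bi l x < (X.C s).r := fun x => (hbi l x).trans_le (X.C s).hr
        have hps : pi l < (X.C s).r := (hpi l).trans_le (X.C s).hr
        rcases h4 with ⟨k, hk, h4⟩ | ⟨δ, hδ, a', ha', h4⟩
        · have q3 := X.qf_mk s (ex (bi l) a) (by
            intro o; cases o
            · exact ha
            · exact hbs _) hk
          have q4 := X.qf_mk s (ex (bi l) (pi l)) (by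
            intro o; cases o
            · exact hps
            · exact hbs _) hk
          rw [comp_ex, comp_ex, X.B_F s _ (hbi l)] at q3 q4
          rw [(X.C s).hB _ (hpi l)] at q4
          exact h4 (qf_trans (qf_trans q4 (le_qf hle (hk.trans (X.C s).hβ.le))) (qf_symm q3))
        · have hδα := hδ.trans_lt (X.C s).hβ
          rw [le_iff] at hle
          obtain ⟨c, hc⟩ := hle.2 δ hδα (X.mk a')
          have := X.le_mk (γ := δ) (s := s) (ex (ex (bi l) a) a') (by
            intro o; rcases o with _ | _ | o
            · exact ha'
            · exact ha
            · exact hbs _) hδ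
          rw [comp_ex, comp_ex, comp_ex, comp_ex, X.B_F s _ (hbi l)] at this
          have h5 := le_trans' _ this hc
          have e5 : ex (ex (X.mk ∘ bi l) (X.mk (pi l))) c =
              X.mk ∘ ex (ex (bi l) (pi l)) (X.out c) := by
            rw [comp_ex, comp_ex, X.mk_out]
          rw [e5] at h5
          obtain ⟨t, -, ht⟩ := X.R1c _ _ hδα h5 0
          have h6 := (ht t le_rfl).2
          rw [comp_ex, comp_ex, X.B_F t _ (hbi l), (X.C t).hB _ (hpi l)] at h6
          exact h4 _ h6

theorem dn_stage {j0 : J} (θ : RIso X.Y (rep j0)) {ι : Type} [Finite ι] (ii : ι → ℕ) (s0 : ℕ) :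
    ∃ s, s0 ≤ s ∧ (∀ x, ii x < (X.C s).r) ∧
      Dn F m0 α (θ.toEquiv ∘ X.mk ∘ ii) ii (X.C s).r (X.C s).B (X.C s).β := by
  obtain ⟨s, hs, h1, h2⟩ := X.R4 ι j0 (θ.toEquiv ∘ X.mk ∘ ii) ii s0
  refine ⟨s, hs, h1, h2.resolve_right fun h => h ⟨θ.toEquiv ∘ X.mk, fun x => rfl, ?_⟩⟩
  have := X.le_mk (s := s) (fun i : Fin (X.C s).r => (i : ℕ)) (fun i => i.2) le_rfl
  exact le_trans' _ this (RIso.le _ θ _)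

theorem tame {j0 : J} (θ : RIso X.Y (rep j0)) (γ : Ordinal.{0}) : ∀ {ι : Type} [Finite ι]
    (ii : ι → ℕ) (s : ℕ) (_ : ∀ x, ii x < (X.C s).r) (_ : ∀ i, i < m0 → ∃ x, ii x = i)
    (_ : Dn F m0 α (θ.toEquiv ∘ X.mk ∘ ii) ii (X.C s).r (X.C s).B (X.C s).β)
    (z : ℕ → X.Y) (_ : ∀ i, i < m0 → z i = X.mk i)
    (_ : le (X.C s).β (fun i : Fin (X.C s).r => (X.C s).B i) (fun i : Fin (X.C s).r => z i)),
    le γ (X.mk ∘ ii) (z ∘ ii) := by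
  induction γ using WellFoundedLT.induction with
  | ind γ ih =>
    intro ι _ ii s hii hm0 hD z hz hle
    let j : ℕ → ℕ := fun i => if i < m0 then i else X.out (z i)
    have hj0 : ∀ i, i < m0 → j i = i := fun i hi => if_pos hi
    have hj : ∀ i, X.mk (j i) = z i := fun i => by
      by_cases hi : i < m0
      · rw [hj0 i hi, hz i hi]
      · simp only [j, if_neg hi]; exact X.mk_out _
    have e1 : (fun i : Fin (X.C s).r => z i) = X.mk ∘ fun i : Fin (X.C s).r => j i := by
      funext i; exact (hj i).symm
    rw [e1] at hle
    obtain ⟨t0, ht0, ht⟩ := X.R1c (fun i : Fin (X.C s).r => j i) _ (X.C s).hβ hle s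
    have hz1 : ∀ t, t0 ≤ t → ∃ z1 : ℕ → rep j0,
        (∀ x, z1 (j (ii x)) = θ.toEquiv (X.mk (ii x))) ∧
        le (X.C t).β (fun i : Fin (X.C t).r => (X.C t).B i) (fun i : Fin (X.C t).r => z1 i) := by
      intro t htt
      exact hD (X.C t).r j (X.C t).B (X.C t).β (X.mono _ _ (ht0.trans htt)).2.1 (X.C t).hβ
        (fun i hi => (ht t htt).1 ⟨i, hi⟩) (fun i hi => by rw [hj0 i hi, (X.C t).hB i hi])
        (ht t htt).2
    have e2 : z ∘ ii = X.mk ∘ (j ∘ ii) := by funext x; exact (hj _).symm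
    rw [le_iff]
    constructor
    · intro k _
      obtain ⟨t, htt, h1, h2⟩ := X.exists_stage (j ∘ ii) k t0
      obtain ⟨z1, hz1, hz1'⟩ := hz1 t htt
      have q1 := qf_reindex (le_qf hz1' h2) (fun x => (⟨(j ∘ ii) x, h1 x⟩ : Fin (X.C t).r))
      have e3 : (fun i : Fin (X.C t).r => z1 i) ∘
          (fun x => (⟨(j ∘ ii) x, h1 x⟩ : Fin (X.C t).r)) = θ.toEquiv ∘ X.mk ∘ ii := by
        funext x; exact hz1 x
      rw [e3] at q1
      have q2 := X.qf_mk t (j ∘ ii) h1 h2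
      rw [e2]
      exact qf_trans (RIso.qf θ k _) (qf_trans (qf_symm q1) q2)
    · intro δ hδ d
      obtain ⟨jd, rfl⟩ : ∃ x, X.mk x = d := ⟨_, X.mk_out d⟩
      obtain ⟨t, htt, h1, h2⟩ := X.dn_stage θ (ex (j ∘ ii) jd) t0
      obtain ⟨z1, hz1, hz1'⟩ := hz1 t htt
      have := ih δ hδ (ex (j ∘ ii) jd) t h1 (fun i hi => by
        obtain ⟨x, hx⟩ := hm0 i hi
        exact ⟨some x, by simp [hx, hj0 i hi]⟩) h2 (θ.toEquiv.symm ∘ z1) (fun i hi => by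
          obtain ⟨x, hx⟩ := hm0 i hi
          have := hz1 x
          rw [hx, hj0 i hi] at this
          simp [this]) (le_trans' _ hz1' (RIso.le _ θ.symm _))
      refine ⟨θ.toEquiv.symm (z1 jd), ?_⟩
      rw [comp_ex, comp_ex, ← e2] at this
      have e4 : (θ.toEquiv.symm ∘ z1) ∘ j ∘ ii = X.mk ∘ ii := by
        funext x; simp [hz1]
      rw [e4] at this
      exact this

theorem BsetI_sub {j0 : J} (θ : RIso X.Y (rep j0)) :
    BsetI X.Y ⊆ (X.mk '' {i | i < m0}) ∪ {p | ∃ β, β < α ∧ p ∈ Bset X.Y β} := by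
  classical
  rintro p ⟨w', b, hpb, hbad⟩
  by_contra hcon
  simp only [Set.mem_union, not_or] at hcon
  obtain ⟨hm, hB⟩ := hcon
  let ii : Option (Fin w' ⊕ Fin m0) → ℕ := ex (Sum.elim (X.out ∘ b) (fun i => (i : ℕ))) (X.out p)
  obtain ⟨s, -, h1, h2⟩ := X.dn_stage θ ii 0
  have hnb : ¬ bad (X.C s).β (fun j : {j : Fin (X.C s).r // X.mk j ≠ p} => X.mk j.1) p :=
    fun h => hB ⟨_, (X.C s).hβ, bad_Bset h⟩
  unfold bad at hnb
  push Not at hnb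
  obtain ⟨q, e, i, p0, hp0, hD⟩ := hnb (by rintro ⟨⟨j, hj⟩, h⟩; exact hj h)
  obtain ⟨p', hq, hnl⟩ := hbad q e i p0 hp0
  have hl := hD p' hq
  apply hnl
  intro γ _
  let z : ℕ → X.Y := fun j => if X.mk j = p then p' else X.mk j
  have hl2 : le (X.C s).β (fun i : Fin (X.C s).r => X.mk i) (fun i : Fin (X.C s).r => z i) := by
    have := le_reindex _ (fun j : Fin (X.C s).r => if h : X.mk j = p then none else
      some (⟨j, h⟩ : {j : Fin (X.C s).r // X.mk j ≠ p})) hl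
    convert this using 1
    · funext j
      by_cases h : X.mk j = p
      · simp [h]
      · simp [h]
    · funext j
      by_cases h : X.mk j = p
      · simp [h, z]
      · simp [h, z]
  have hl3 := le_trans' _ (X.le_mk (s := s) (fun i : Fin (X.C s).r => (i : ℕ))
    (fun i => i.2) le_rfl) hl2
  have := X.tame θ γ ii s h1 (fun i hi => ⟨some (Sum.inr ⟨i, hi⟩), rfl⟩) h2 z (fun i hi => by
    have : X.mk i ≠ p := fun h => hm ⟨i, hi, h⟩
    simp [z, this]) hl3
  have := le_reindex _ (Option.map Sum.inl) this
  convert this using 1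
  · funext o; cases o
    · simp [ii, X.mk_out]
    · simp [ii, X.mk_out]
  · funext o; cases o with
    | none => simp [ii, X.mk_out, z]
    | some x =>
      have : b x ≠ p := fun h => hpb ⟨x, h⟩
      simp [ii, X.mk_out, z, this]

end Chain
end chain

section unif
variable {G : Sig}

theorem RIso.le' {M M' : Type u} [RS G M] [RS G M'] (f : RIso M M') (α : Ordinal.{0})
    {ι : Type} (a : ι → M) : Ivanov.le α (f.toEquiv ∘ a) a := by
  have := RIso.le α f.symm (f.toEquiv ∘ a)
  have e : f.symm.toEquiv ∘ f.toEquiv ∘ a = a := by funext i; simp [RIso.symm]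
  rwa [e] at this

theorem badI_iso {M M' : Type u} [RS G M] [RS G M'] (f : RIso M M') {ι : Type} {b : ι → M} {p : M}
    (h : badI b p) : badI (f.toEquiv ∘ b) (f.toEquiv p) := by
  constructor
  · rintro ⟨x, hx⟩
    exact h.1 ⟨x, f.toEquiv.injective hx⟩
  · intro q e i p0 hp0
    have ee : e = f.toEquiv ∘ f.toEquiv.symm ∘ e := by funext i; simp
    obtain ⟨p', h1, h2⟩ := h.2 q (f.toEquiv.symm ∘ e) i (f.toEquiv.symm p0) (by
      rintro ⟨x, hx⟩
      exact hp0 ⟨x, f.toEquiv.symm.injective hx⟩)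
    refine ⟨f.toEquiv p', ?_, fun h3 => h2 fun γ hγ => ?_⟩
    · have q1 := f.qf i (ex (f.toEquiv.symm ∘ e) (f.toEquiv.symm p0))
      have q2 := f.qf i (ex (f.toEquiv.symm ∘ e) p')
      rw [comp_ex, ← ee] at q1 q2
      rw [Equiv.apply_symm_apply] at q1
      exact qf_trans (qf_symm q1) (qf_trans h1 q2)
    · have := h3 γ hγ
      rw [← comp_ex, ← comp_ex] at this
      exact le_trans' _ (RIso.le _ f _) (le_trans' _ this (f.le' _ _))

theorem BsetI_iso {M M' : Type u} [RS G M] [RS G M'] (f : RIso M M') :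
    f.toEquiv '' BsetI M = BsetI M' := by
  ext p
  constructor
  · rintro ⟨p, ⟨w, b, hb⟩, rfl⟩
    exact ⟨w, _, badI_iso f hb⟩
  · rintro ⟨w, b, hb⟩
    exact ⟨f.toEquiv.symm p, ⟨w, _, badI_iso f.symm hb⟩, by simp⟩

theorem unif (Mod : ∀ (M : Type u) [RS G M], Prop)
    (hsim : ∀ (M M' : Type u) [RS G M] [RS G M'], Mod M → Mod M' → Sim M M')
    (hcl : ∀ (M M' : Type u) [RS G M] [RS G M'], Mod M → Sim M' M → Mod M')
    {J : Type} [Finite J] (rep : J → Type u) [∀ j, RS G (rep j)] [∀ j, Countable (rep j)]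
    (hrep : ∀ (M : Type u) [RS G M], Countable M → Mod M → ∃ j, Nonempty (RIso M (rep j)))
    (α : Ordinal.{0}) : cO α → ∀ (N : Type u) [RS G N], Countable N → Mod N →
      {p : N | ∃ β, β < α ∧ p ∈ Bset N β}.Finite := by
  classical
  induction α using WellFoundedLT.induction with
  | ind α ih =>
    intro hcα N _ _ hN
    by_contra hinf
    have hinf : {p : N | ∃ β, β < α ∧ p ∈ Bset N β}.Infinite := hinf
    obtain ⟨m, hm⟩ : ∃ m, ∀ j, (BsetI (rep j)).ncard < m := by
      obtain ⟨m, hm⟩ := (Set.finite_range fun j => (BsetI (rep j)).ncard).bddAbove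
      exact ⟨m + 1, fun j => Nat.lt_succ_of_le (hm ⟨j, rfl⟩)⟩
    let p : Fin (m+1) → N := fun l => (hinf.natEmbedding _ l).1
    have hp : Function.Injective p := fun l l' h => Fin.ext ((hinf.natEmbedding _).injective
      (Subtype.ext h))
    have hp' : ∀ l, ∃ β, β < α ∧ p l ∈ Bset N β := fun l => (hinf.natEmbedding _ l).2
    choose βl hβl w b hb using hp'
    obtain ⟨l0, hl0⟩ : ∃ l0, ∀ l, βl l ≤ βl l0 := Finite.exists_max βl
    have hb' : ∀ l, bad (βl l0) (b l) (p l) := fun l => bad_mono (hl0 l) (hb l)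
    have hω : Ordinal.omega0 ≤ βl l0 := by
      by_contra hlt
      obtain ⟨k, hk⟩ := Ordinal.lt_omega0.1 (not_le.1 hlt)
      have := hb' l0
      rw [hk] at this
      exact not_bad_nat (hsim N N hN hN) k this
    have hcβ : cO (βl l0) := cO_mono (hβl l0).le hcα
    let X := Σ l, Option (Fin (w l))
    let val : X → N := fun x => ex (b x.1) (p x.1) x.2
    obtain ⟨m0, ⟨e⟩⟩ := Finite.exists_equiv_fin X
    let F : ℕ → N := fun i => if h : i < m0 then val (e.symm ⟨i, h⟩) else p l0
    have hF : ∀ x, F (e x) = val x := fun x => by simp [F]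
    let bi : ∀ l, Fin (w l) → ℕ := fun l x => e ⟨l, some x⟩
    let pi : Fin (m+1) → ℕ := fun l => e ⟨l, none⟩
    have e1 : ∀ l, F ∘ bi l = b l := fun l => funext fun x => hF _
    have e2 : ∀ l, F (pi l) = p l := fun l => hF _
    have hbad : ∀ l, bad (βl l0) (F ∘ bi l) (F (pi l)) := fun l => by
      rw [e1, e2]; exact hb' l
    obtain ⟨C⟩ := exists_chain F m0 (βl l0) hω hcβ w bi pi rep hbad
    have hY : Mod C.Y := hcl N C.Y hN (C.sim (hsim N N hN hN))
    obtain ⟨j0, ⟨θ⟩⟩ := hrep C.Y inferInstance hY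
    have hfin : (BsetI C.Y).Finite := by
      refine Set.Finite.subset ?_ (C.BsetI_sub θ)
      exact ((Set.finite_lt_nat m0).image _).union (ih _ (hβl l0) hcβ C.Y inferInstance hY)
    have hpi : ∀ l, pi l < m0 := fun l => Fin.isLt _
    have hv : ∀ l, C.mk (pi l) ∈ BsetI C.Y := fun l =>
      ⟨_, _, bad_badI hcβ (C.stays_bad hpi (fun l x => Fin.isLt _) hbad l)⟩
    have hinj : Function.Injective fun l => C.mk (pi l) := by
      intro l l' h
      have q := C.qf_mk 0 pi (fun l => (hpi l).trans_le (C.C 0).hr) (k := 0) (by simp)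
      have := (q.1 l l').2 h
      simp only [Function.comp_apply] at this
      rw [(C.C 0).hB _ (hpi l), (C.C 0).hB _ (hpi l'), e2, e2] at this
      exact hp this
    have h1 : m + 1 ≤ (BsetI C.Y).ncard := by
      have : (Set.range fun l => C.mk (pi l)).ncard = m + 1 := by
        rw [← Set.image_univ, Set.ncard_image_of_injective _ hinj, Set.ncard_univ]
        simp
      have h := Set.ncard_le_ncard (s := Set.range fun l => C.mk (pi l)) (t := BsetI C.Y)
        (by rintro _ ⟨l, rfl⟩; exact hv l) hfin
      exact this.symm.le.trans h
    have h2 : (BsetI C.Y).ncard = (BsetI (rep j0)).ncard := by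
      rw [← BsetI_iso θ, Set.ncard_image_of_injective _ θ.toEquiv.injective]
    have := hm j0
    omega

theorem badI_bad {N : Type u} [RS G N] [Countable N] {ι : Type} {b : ι → N} {p : N}
    (h : badI b p) : ∃ γ, cO γ ∧ bad γ b p := by
  have : ∀ x : (Σ q : ℕ, (Fin q → N) × ℕ × N), ∃ γ, cO γ ∧ (x.2.2.2 ∉ Set.range x.2.1 →
      ∃ p', qf x.2.2.1 (ex x.2.1 x.2.2.2) (ex x.2.1 p') ∧ ¬ le γ (ex b p) (ex b p')) := by
    rintro ⟨q, e, i, p0⟩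
    by_cases hp0 : p0 ∈ Set.range e
    · exact ⟨0, by simp [cO], fun h => absurd hp0 h⟩
    · obtain ⟨p', h1, h2⟩ := h.2 q e i p0 hp0
      unfold leI at h2
      push Not at h2
      obtain ⟨γ, hγ, h2⟩ := h2
      exact ⟨γ, hγ, fun _ => ⟨p', h1, h2⟩⟩
  choose γ hγ hγ' using this
  obtain ⟨γ0, h0, hle⟩ := cO_sup γ hγ
  refine ⟨γ0, h0, h.1, fun q e i p0 hp0 => ?_⟩
  obtain ⟨p', h1, h2⟩ := hγ' ⟨q, e, i, p0⟩ hp0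
  exact ⟨p', h1, fun h3 => h2 (le_mono (hle _) h3)⟩

theorem leI_aut {M : Type u} [RS G M] [Countable M] [Nonempty M] {w : ℕ} {a b : Fin w → M}
    (h : leI a b) : ∃ τ : RIso M M, ∀ i, τ.toEquiv (a i) = b i := by
  classical
  let Φ : List (M × M) → Prop := fun l =>
    leI (fun i : Fin l.length => (l.get i).1) (fun i : Fin l.length => (l.get i).2)
  have hcons : ∀ l x y, leI (ex (fun i : Fin l.length => (l.get i).1) x)
      (ex (fun i : Fin l.length => (l.get i).2) y) → Φ ((x, y) :: l) := by
    intro l x y hl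
    have := leI_reindex hl (fun i : Fin (l.length + 1) => Fin.cases none some i)
    convert this using 1
    · funext i; refine Fin.cases ?_ (fun i => ?_) i <;> rfl
    · funext i; refine Fin.cases ?_ (fun i => ?_) i <;> rfl
  obtain ⟨e, h1, h2⟩ := back_forth Φ (fun l hl x hx y hy => by
      obtain ⟨i, rfl⟩ := List.get_of_mem hx
      obtain ⟨j, rfl⟩ := List.get_of_mem hy
      exact (leI_qf hl 0).1 i j)
    (fun l hl a => by
      obtain ⟨c, hc⟩ := leI_step (leI_symm hl) a
      exact ⟨c, hcons _ _ _ hc⟩)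
    (fun l hl b => by
      obtain ⟨c, hc⟩ := leI_step hl b
      exact ⟨c, hcons _ _ _ (leI_symm hc)⟩) (List.ofFn fun i => (a i, b i)) (by
      have := leI_reindex h (Fin.cast (List.length_ofFn (f := fun i => (a i, b i))))
      convert this using 1
      · funext i; simp; rfl
      · funext i; simp; rfl)
  refine ⟨⟨e, fun n t => ?_⟩, fun i => h1 (a i, b i) (List.mem_ofFn.2 ⟨i, rfl⟩)⟩
  obtain ⟨l, hl, hl'⟩ := h2 (Finset.univ.image t)
  have : ∀ i, ∃ j : Fin l.length, l.get j = (t i, e (t i)) := fun i =>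
    List.get_of_mem (hl' (t i) (Finset.mem_image_of_mem _ (Finset.mem_univ _)))
  choose j hj using this
  obtain ⟨k, hk⟩ := G.cof n
  have := (leI_qf hl k).2 n hk j
  have e1 : (fun i : Fin l.length => (l.get i).1) ∘ j = t := by funext i; simp only [Function.comp_apply, hj]
  have e2 : (fun i : Fin l.length => (l.get i).2) ∘ j = e ∘ t := by funext i; simp only [Function.comp_apply, hj]
  rw [e1, e2] at this
  exact this.symm

theorem diamond (Mod : ∀ (M : Type u) [RS G M], Prop)
    (hsim : ∀ (M M' : Type u) [RS G M] [RS G M'], Mod M → Mod M' → Sim M M')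
    (hcl : ∀ (M M' : Type u) [RS G M] [RS G M'], Mod M → Sim M' M → Mod M')
    {J : Type} [Finite J] (rep : J → Type u) [∀ j, RS G (rep j)] [∀ j, Countable (rep j)]
    (hrep : ∀ (M : Type u) [RS G M], Countable M → Mod M → ∃ j, Nonempty (RIso M (rep j)))
    (N : Type u) [RS G N] [Countable N] (hN : Mod N) :
    ∃ g : Set N, g.Finite ∧ ∀ (ι : Type) [Finite ι] (b : ι → N) (p : N), p ∉ g → p ∉ Set.range b →
      ∃ (q : ℕ) (e : Fin q → N) (i : ℕ) (p0 : N), p0 ∉ Set.range e ∧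
        ∀ p', qf i (ex e p0) (ex e p') →
          ∃ τ : RIso N N, (∀ x, τ.toEquiv (b x) = b x) ∧ τ.toEquiv p = p' := by
  refine ⟨BsetI N, ?_, ?_⟩
  · have : ∀ p : N, ∃ γ, cO γ ∧ (p ∈ BsetI N → p ∈ Bset N γ) := by
      intro p
      by_cases hp : p ∈ BsetI N
      · obtain ⟨w, b, hb⟩ := hp
        obtain ⟨γ, hγ, hb'⟩ := badI_bad hb
        exact ⟨γ, hγ, fun _ => ⟨w, b, hb'⟩⟩
      · exact ⟨0, by simp [cO], fun h => absurd h hp⟩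
    choose γ hγ hγ' using this
    obtain ⟨γ0, h0, hle⟩ := cO_sup γ hγ
    refine (unif Mod hsim hcl rep hrep _ (cO_succ h0) N inferInstance hN).subset fun p hp => ?_
    exact ⟨γ p, Order.lt_succ_of_le (hle p), hγ' p hp⟩
  · intro ι _ b p hp hpb
    obtain ⟨w, ⟨f⟩⟩ := Finite.exists_equiv_fin ι
    have hnb : ¬ badI (b ∘ f.symm) p := fun h => hp ⟨w, _, h⟩
    unfold badI at hnb
    push Not at hnb
    obtain ⟨q, e, i, p0, h1, h2⟩ := hnb (by rintro ⟨x, hx⟩; exact hpb ⟨_, hx⟩)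
    refine ⟨q, e, i, p0, h1, fun p' hq => ?_⟩
    have h3 := leI_reindex (h2 p' hq) (fun i : Fin (w+1) => Fin.cases none some i)
    have : Nonempty N := ⟨p⟩
    obtain ⟨τ, hτ⟩ := leI_aut h3
    refine ⟨τ, fun x => ?_, hτ 0⟩
    have := hτ (f x).succ
    simpa using this

end unif

section enc
variable {G : Sig}

/-- The level `k` symbols of `G` are interpreted by symbols of the language. -/
def Compat (𝓛 : FirstOrder.Language.{0,0}) (k : ℕ) (sym : ∀ n, n < G.lv k → 𝓛.Relations (G.ar n))
    (M : Type u) [𝓛.Structure M] [RS G M] : Prop :=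
  ∀ n (h : n < G.lv k) (t : Fin (G.ar n) → M), RelMap (sym n h) t ↔ RS.rel n t

open Classical in
/-- Diagram formula of a tuple. -/
noncomputable def dg {𝓛 : FirstOrder.Language.{0,0}} {k : ℕ} (sym : ∀ n, n < G.lv k → 𝓛.Relations (G.ar n))
    {ι α : Type} [Finite ι] {r : ℕ} {M : Type u} [RS G M] (b : ι → M) (v : ι → α ⊕ Fin r) :
    𝓛.BoundedFormula α r :=
  BoundedFormula.iInf (fun x : ι × ι =>
      if b x.1 = b x.2 then (Term.var (v x.1)).bdEqual (Term.var (v x.2))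
      else ∼((Term.var (v x.1)).bdEqual (Term.var (v x.2)))) ⊓
  BoundedFormula.iInf (fun x : (Σ n : Fin (G.lv k), Fin (G.ar n) → ι) =>
      if RS.rel x.1 (b ∘ x.2) then (sym x.1 x.1.2).boundedFormula fun i => Term.var (v (x.2 i))
      else ∼((sym x.1 x.1.2).boundedFormula fun i => Term.var (v (x.2 i))))

theorem realize_dg {𝓛 : FirstOrder.Language.{0,0}} {k : ℕ}
    (sym : ∀ n, n < G.lv k → 𝓛.Relations (G.ar n))
    {ι α : Type} [Finite ι] {r : ℕ} {M M' : Type u} [RS G M] [RS G M'] [𝓛.Structure M']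
    (hc : Compat 𝓛 k sym M') (b : ι → M) (v : ι → α ⊕ Fin r) (x : α → M') (y : Fin r → M') :
    (dg sym b v).Realize x y ↔ qf k b (Sum.elim x y ∘ v) := by
  classical
  unfold dg
  rw [BoundedFormula.realize_inf, BoundedFormula.realize_iInf, BoundedFormula.realize_iInf]
  unfold qf
  refine and_congr ?_ ?_
  · rw [Prod.forall]
    refine forall_congr' fun i => forall_congr' fun j => ?_
    by_cases h : b i = b j
    · simp [h]
    · simp [h]
  · have key : ∀ (n : ℕ) (h : n < G.lv k) (t : Fin (G.ar n) → ι),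
      ((if RS.rel n (b ∘ t) then (sym n h).boundedFormula fun i => Term.var (v (t i))
        else ∼((sym n h).boundedFormula fun i => Term.var (v (t i)))) :
          𝓛.BoundedFormula α r).Realize x y ↔
        (RS.rel n (b ∘ t) ↔ RS.rel n ((Sum.elim x y ∘ v) ∘ t)) := by
      intro n h t
      have e : RelMap (sym n h) (fun i => Sum.elim x y (v (t i))) ↔
        RS.rel n ((Sum.elim x y ∘ v) ∘ t) := hc n h _
      by_cases h' : RS.rel n (b ∘ t)
      · rw [if_pos h', BoundedFormula.realize_rel]
        simpa [h'] using e
      · rw [if_neg h', BoundedFormula.realize_not, BoundedFormula.realize_rel]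
        simpa [h'] using not_congr e
    constructor
    · intro h n hn t
      exact (key n hn t).1 (h ⟨⟨n, hn⟩, t⟩)
    · rintro h ⟨⟨n, hn⟩, t⟩
      exact (key n hn t).2 (h n hn t)

/-- The set of diagrams over a finite index type. -/
def tps (k : ℕ) (ι : Type) (M : Type u) [RS G M] (a : ι → M) :
    ((ι × ι) ⊕ (Σ n : Fin (G.lv k), Fin (G.ar n) → ι)) → Prop
  | .inl x => a x.1 = a x.2
  | .inr x => RS.rel x.1 (a ∘ x.2)

theorem tps_eq {k : ℕ} {ι : Type} {M M' : Type u} [RS G M] [RS G M'] {a : ι → M} {b : ι → M'} :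
    tps k ι M a = tps k ι M' b ↔ qf k a b := by
  constructor
  · intro h
    refine ⟨fun i j => ?_, fun n hn t => ?_⟩
    · have := congrFun h (.inl (i, j)); exact iff_of_eq this
    · have := congrFun h (.inr ⟨⟨n, hn⟩, t⟩); exact iff_of_eq this
  · intro h
    funext x
    rcases x with ⟨i, j⟩ | ⟨⟨n, hn⟩, t⟩
    · exact propext (h.1 i j)
    · exact propext (h.2 n hn t)

/-- Sentences agree. -/
def EqTh (𝓛 : FirstOrder.Language.{0,0}) (M M' : Type u) [𝓛.Structure M] [𝓛.Structure M'] : Prop :=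
  ∀ φ : 𝓛.Sentence, M ⊨ φ → M' ⊨ φ

/-- Two round transfer. -/
theorem transfer {𝓛 : FirstOrder.Language.{0,0}} {k : ℕ} (sym : ∀ n, n < G.lv k → 𝓛.Relations (G.ar n))
    {M M' : Type u} [𝓛.Structure M] [𝓛.Structure M'] [RS G M] [RS G M']
    (hc : Compat 𝓛 k sym M) (hc' : Compat 𝓛 k sym M') (he : EqTh 𝓛 M M')
    {ι : Type} [Finite ι] (a : ι → M) :
    ∃ b : ι → M', qf k a b ∧ (∀ y, ∃ y', qf k (ex a y) (ex b y')) ∧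
      (∀ y', ∃ y, qf k (ex a y) (ex b y')) := by
  classical
  obtain ⟨r, ⟨f⟩⟩ := Finite.exists_equiv_fin ι
  let v : ι → Empty ⊕ Fin r := fun i => .inr (f i)
  let v' : Option ι → Empty ⊕ Fin (r+1) := fun o => .inr (o.elim (Fin.last r) (fun i => (f i).castSucc))
  let T : Set (((Option ι × Option ι) ⊕ (Σ n : Fin (G.lv k), Fin (G.ar n) → Option ι)) → Prop) :=
    Set.range fun y => tps k (Option ι) M (ex a y)
  have hT : ∀ x : T, ∃ y, tps k (Option ι) M (ex a y) = x := fun x => x.2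
  choose rp hrp using hT
  let θ : 𝓛.BoundedFormula Empty r := dg sym a v ⊓
    (BoundedFormula.iInf (fun x : T => (dg sym (ex a (rp x)) v').ex) ⊓
     (BoundedFormula.iSup (fun x : T => (dg sym (ex a (rp x)) v'))).all)
  have hev : ∀ (N : Type u) (x : Empty → N) (y : Fin r → N), Sum.elim x y ∘ v = y ∘ f := by
    intro N x y; funext i; rfl
  have hev' : ∀ (N : Type u) (x : Empty → N) (y : Fin r → N) (z : N),
      Sum.elim x (Fin.snoc y z : Fin (r+1) → N) ∘ v' = ex (y ∘ f) z := by
    intro N x y z; funext o; cases o with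
    | none => simp [v']
    | some i => simp [v']
  have hθ : ∀ (N : Type u) [𝓛.Structure N] [RS G N] (_ : Compat 𝓛 k sym N) (x : Empty → N)
      (y : Fin r → N), θ.Realize x y ↔ qf k a (y ∘ f) ∧
        (∀ z : T, ∃ w, qf k (ex a (rp z)) (ex (y ∘ f) w)) ∧
        (∀ w, ∃ z : T, qf k (ex a (rp z)) (ex (y ∘ f) w)) := by
    intro N _ _ hN x y
    simp only [θ, BoundedFormula.realize_inf, BoundedFormula.realize_iInf, BoundedFormula.realize_ex,
      BoundedFormula.realize_all, BoundedFormula.realize_iSup, realize_dg sym hN, hev, hev']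
  have haf : (a ∘ f.symm) ∘ f = a := by funext i; simp
  have h1 : M ⊨ θ.exs := by
    unfold Sentence.Realize Formula.Realize
    have : θ.exs.Realize (default : Empty → M) := by
      rw [BoundedFormula.realize_exs]
      refine ⟨a ∘ f.symm, (hθ M hc _ _).2 ?_⟩
      rw [haf]
      refine ⟨qf_refl _ _, fun z => ⟨rp z, qf_refl _ _⟩, fun w => ⟨⟨_, w, rfl⟩, ?_⟩⟩
      exact tps_eq.1 (hrp _)
    exact this
  have h2 := he _ h1
  have h3 : θ.exs.Realize (default : Empty → M') := h2
  rw [BoundedFormula.realize_exs] at h3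
  obtain ⟨y, hy⟩ := h3
  obtain ⟨q1, q2, q3⟩ := (hθ M' hc' _ _).1 hy
  refine ⟨y ∘ f, q1, fun w => ?_, fun w => ?_⟩
  · obtain ⟨w', hw'⟩ := q2 ⟨_, w, rfl⟩
    exact ⟨w', qf_trans (tps_eq.1 (hrp ⟨_, w, rfl⟩).symm) hw'⟩
  · obtain ⟨z, hz⟩ := q3 w
    exact ⟨_, hz⟩

/-- Quantifier elimination gives level-wise back and forth. -/
theorem qf_of_isQF {𝓛 : FirstOrder.Language.{0,0}} [he : ∀ n, IsEmpty (𝓛.Functions n)] {k : ℕ}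
    (sym : ∀ n, n < G.lv k → 𝓛.Relations (G.ar n))
    (cover : ∀ m (r : 𝓛.Relations m), ∃ n, ∃ hn : n < G.lv k, ∃ h : G.ar n = m, h ▸ sym n hn = r)
    {M M' : Type u} [𝓛.Structure M] [𝓛.Structure M'] [RS G M] [RS G M']
    (hc : Compat 𝓛 k sym M) (hc' : Compat 𝓛 k sym M') {α : Type} {r : ℕ}
    (φ : 𝓛.BoundedFormula α r) (hφ : φ.IsQF) (x : α → M) (y : Fin r → M)
    (x' : α → M') (y' : Fin r → M') (h : qf k (Sum.elim x y) (Sum.elim x' y')) :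
    φ.Realize x y ↔ φ.Realize x' y' := by
  have ht : ∀ t : 𝓛.Term (α ⊕ Fin r), ∃ i, t = Term.var i := by
    intro t
    cases t with
    | var i => exact ⟨i, rfl⟩
    | func f _ => exact ((he _).false f).elim
  induction hφ with
  | falsum => exact Iff.rfl
  | of_isAtomic ha =>
    cases ha with
    | equal t₁ t₂ =>
      obtain ⟨i, rfl⟩ := ht t₁
      obtain ⟨j, rfl⟩ := ht t₂
      simpa using h.1 i j
    | rel R ts =>
      choose i hi using fun l => ht (ts l)
      obtain rfl : ts = fun l => Term.var (i l) := funext hi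
      obtain ⟨n, hn, rfl, rfl⟩ := cover _ R
      rw [BoundedFormula.realize_rel, BoundedFormula.realize_rel]
      have := h.2 n hn i
      rw [← hc n hn, ← hc' n hn] at this
      exact this
  | imp _ _ h1 h2 => exact imp_congr h1 h2

/-- `Sim` implies elementary equivalence. -/
theorem Sim.eqTh_aux {𝓛 : FirstOrder.Language.{0,0}} [he : ∀ n, IsEmpty (𝓛.Functions n)]
    (sym : ∀ n, 𝓛.Relations (G.ar n))
    (cover : ∀ m (r : 𝓛.Relations m), ∃ n, ∃ h : G.ar n = m, h ▸ sym n = r)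
    {M M' : Type u} [𝓛.Structure M] [𝓛.Structure M'] [RS G M] [RS G M']
    (hc : ∀ n (t : Fin (G.ar n) → M), RelMap (sym n) t ↔ RS.rel n t)
    (hc' : ∀ n (t : Fin (G.ar n) → M'), RelMap (sym n) t ↔ RS.rel n t)
    (hs : Sim M M') {r : ℕ} (φ : 𝓛.BoundedFormula Empty r) :
    ∃ k0, ∀ k, k0 ≤ k → ∀ (x : Empty → M) (x' : Empty → M') (y : Fin r → M) (y' : Fin r → M'),
      qf k y y' → (φ.Realize x y ↔ φ.Realize x' y') := by
  have ht : ∀ r (t : 𝓛.Term (Empty ⊕ Fin r)), ∃ i, t = Term.var (.inr i) := by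
    intro r t
    cases t with
    | var i => rcases i with i | i
               · exact i.elim
               · exact ⟨i, rfl⟩
    | func f _ => exact ((he _).false f).elim
  induction φ with
  | falsum => exact ⟨0, fun _ _ _ _ _ _ _ => Iff.rfl⟩
  | equal t₁ t₂ =>
    obtain ⟨i, rfl⟩ := ht _ t₁
    obtain ⟨j, rfl⟩ := ht _ t₂
    refine ⟨0, fun k _ x x' y y' h => ?_⟩
    exact h.1 i j
  | rel R ts =>
    choose i hi using fun l => ht _ (ts l)
    obtain rfl : ts = fun l => Term.var (.inr (i l)) := funext hi
    obtain ⟨n, rfl, rfl⟩ := cover _ R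
    obtain ⟨k0, hk0⟩ := G.cof n
    refine ⟨k0, fun k hk x x' y y' h => ?_⟩
    have := h.2 n (hk0.trans_le (G.mono hk)) i
    rw [← hc n, ← hc' n] at this
    exact this
  | imp _ _ h1 h2 =>
    obtain ⟨k1, h1⟩ := h1
    obtain ⟨k2, h2⟩ := h2
    refine ⟨max k1 k2, fun k hk x x' y y' h => ?_⟩
    rw [BoundedFormula.realize_imp, BoundedFormula.realize_imp,
      h1 k (by omega) x x' y y' h, h2 k (by omega) x x' y y' h]
  | @all n f ih =>
    obtain ⟨k0, h0⟩ := ih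
    refine ⟨k0, fun k hk x x' y y' h => ?_⟩
    have hsn : ∀ (N : Type u) (y : Fin n → N) z, (Fin.snoc y z : Fin (n+1) → N) =
        ex y z ∘ (Fin.lastCases none some : Fin (n+1) → Option (Fin n)) := by
      intro N y z
      funext i
      refine Fin.lastCases ?_ (fun i => ?_) i <;> simp
    rw [BoundedFormula.realize_all, BoundedFormula.realize_all]
    constructor
    · intro H c'
      obtain ⟨c, hcc⟩ := hs.2.2 k _ y y' h c'
      refine (h0 k hk x x' _ _ ?_).1 (H c)
      rw [hsn, hsn]; exact qf_reindex hcc _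
    · intro H c
      obtain ⟨c', hcc⟩ := hs.2.1 k _ y y' h c
      refine (h0 k hk x x' _ _ ?_).2 (H c')
      rw [hsn, hsn]; exact qf_reindex hcc _

theorem Sim.eqTh {𝓛 : FirstOrder.Language.{0,0}} [he : ∀ n, IsEmpty (𝓛.Functions n)]
    (sym : ∀ n, 𝓛.Relations (G.ar n))
    (cover : ∀ m (r : 𝓛.Relations m), ∃ n, ∃ h : G.ar n = m, h ▸ sym n = r)
    {M M' : Type u} [𝓛.Structure M] [𝓛.Structure M'] [RS G M] [RS G M']
    (hc : ∀ n (t : Fin (G.ar n) → M), RelMap (sym n) t ↔ RS.rel n t)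
    (hc' : ∀ n (t : Fin (G.ar n) → M'), RelMap (sym n) t ↔ RS.rel n t)
    (hs : Sim M M') : EqTh 𝓛 M M' := by
  intro φ h
  obtain ⟨k0, h0⟩ := hs.eqTh_aux sym cover hc hc' φ
  refine (h0 k0 le_rfl default default default default ?_).1 h
  have := qf_reindex (hs.1 k0) (fun i : Fin 0 => i.elim0)
  convert this using 1

/-- Ultrahomogeneity in terms of tuples. -/
theorem hom_tuple {𝓛 : FirstOrder.Language.{0,0}} [he : ∀ n, IsEmpty (𝓛.Functions n)]
    (sym : ∀ n, 𝓛.Relations (G.ar n))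
    (cover : ∀ m (r : 𝓛.Relations m), ∃ n, ∃ h : G.ar n = m, h ▸ sym n = r)
    {M : Type u} [𝓛.Structure M] [RS G M]
    (hc : ∀ n (t : Fin (G.ar n) → M), RelMap (sym n) t ↔ RS.rel n t)
    (hM : 𝓛.IsUltrahomogeneous M) {ι : Type} [Finite ι] (a b : ι → M) (h : ∀ k, qf k a b) :
    ∃ τ : RIso M M, ∀ i, τ.toEquiv (a i) = b i := by
  classical
  let S : 𝓛.Substructure M := ⟨Set.range a, fun f => ((he _).false f).elim⟩
  have hS : S.FG := by
    refine ⟨(Set.finite_range a).toFinset, ?_⟩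
    apply le_antisymm
    · rw [Substructure.closure_le]; simp only [Set.Finite.coe_toFinset]; exact subset_rfl
    · intro x hx
      exact Substructure.subset_closure (by rw [Set.Finite.coe_toFinset]; exact hx)
  have hr : ∀ x : S, ∃ i, a i = x := fun x => x.2
  choose p hp using hr
  let f : S ↪[𝓛] M :=
    { toFun := fun x => b (p x)
      inj' := by
        intro x y hxy
        have := ((h 0).1 _ _).2 hxy
        rw [hp, hp] at this
        exact Subtype.ext this
      map_fun' := fun f => ((he _).false f).elim
      map_rel' := by
        intro m r x
        obtain ⟨n, rfl, rfl⟩ := cover _ r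
        obtain ⟨k, hk⟩ := G.cof n
        have := (h k).2 n hk (p ∘ x)
        rw [← hc, ← hc] at this
        have e : a ∘ p ∘ x = fun i => (x i : M) := by funext i; exact hp _
        rw [e] at this
        exact this.symm }
  obtain ⟨g, hg⟩ := hM S hS f
  refine ⟨⟨g.toEquiv, fun n t => ?_⟩, fun i => ?_⟩
  · rw [← hc, ← hc]; exact g.map_rel _ _
  · have h1 : f ⟨a i, i, rfl⟩ = g (a i) := by rw [hg]; rfl
    have h2 : f ⟨a i, i, rfl⟩ = b i := ((h 0).1 _ _).1 (hp _)
    exact h1.symm.trans h2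

end enc


/-- The signature extended by the six symbols of `L`. -/
def Sig.full (G : Sig) : Sig where
  ar := fun n => match n with
    | 0 => 1
    | 1 => 1
    | 2 => 1
    | 3 => 1
    | 4 => 2
    | 5 => 4
    | n+6 => G.ar n
  lv := fun k => G.lv k + 6
  mono := fun _ _ h => Nat.add_le_add_right (G.mono h) 6
  cof := fun n => by
    obtain ⟨k, hk⟩ := G.cof n
    exact ⟨k, by omega⟩

section full
variable {G : Sig}

section rels
variable {V : Type u} [RS G.full V]
/-- Predicate P. -/
def vP (x : V) : Prop := RS.rel (G := G.full) 0 (fun _ => x)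
/-- Predicate Q. -/
def vQ (x : V) : Prop := RS.rel (G := G.full) 1 (fun _ => x)
/-- Predicate lambda. -/
def vLa (x : V) : Prop := RS.rel (G := G.full) 2 (fun _ => x)
/-- Predicate rho. -/
def vRh (x : V) : Prop := RS.rel (G := G.full) 3 (fun _ => x)
/-- Predicate H. -/
def vH (x y : V) : Prop := RS.rel (G := G.full) 4 (![x, y] : Fin 2 → V)
/-- Predicate S. -/
def vS (x y z w : V) : Prop := RS.rel (G := G.full) 5 (![x, y, z, w] : Fin 4 → V)
/-- The other relations. -/
def vR (n : ℕ) (t : Fin (G.ar n) → V) : Prop := RS.rel (G := G.full) (n+6) t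
end rels

/-- Build a structure. -/
@[reducible] def mkRS (E : Type u) (p q la rh : E → Prop) (h : E → E → Prop) (s : E → E → E → E → Prop)
    (r : ∀ n, (Fin (G.ar n) → E) → Prop) : RS G.full E where
  rel := fun n => match n with
    | 0 => fun (t : Fin 1 → E) => p (t 0)
    | 1 => fun (t : Fin 1 → E) => q (t 0)
    | 2 => fun (t : Fin 1 → E) => la (t 0)
    | 3 => fun (t : Fin 1 → E) => rh (t 0)
    | 4 => fun (t : Fin 2 → E) => h (t 0) (t 1)
    | 5 => fun (t : Fin 4 → E) => s (t 0) (t 1) (t 2) (t 3)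
    | n+6 => r n

/-- The `P`-part. -/
@[ext] structure PP (V : Type u) [RS G.full V] : Type u where
  /-- The element. -/
  val : V
  prop : vP val

theorem PP.val_inj (V : Type u) [RS G.full V] : Function.Injective (PP.val : PP V → V) :=
  fun _ _ h => PP.ext h

instance (V : Type u) [RS G.full V] : RS G (PP V) := ⟨fun n t => vR n fun i => (t i).1⟩

instance (V : Type u) [RS G.full V] [Countable V] : Countable (PP V) :=
  (PP.val_inj V).countable

instance (V : Type u) [RS G.full V] [Finite V] : Finite (PP V) :=
  Finite.of_injective _ (PP.val_inj V)

/-- Equality of `L`-types. -/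
structure qfL {V V' : Type u} [RS G.full V] [RS G.full V'] {ι : Type} (a : ι → V) (b : ι → V') :
    Prop where
  eq : ∀ i j, a i = a j ↔ b i = b j
  p : ∀ i, vP (a i) ↔ vP (b i)
  q : ∀ i, vQ (a i) ↔ vQ (b i)
  la : ∀ i, vLa (a i) ↔ vLa (b i)
  rh : ∀ i, vRh (a i) ↔ vRh (b i)
  h : ∀ i j, vH (a i) (a j) ↔ vH (b i) (b j)
  s : ∀ i j k l, vS (a i) (a j) (a k) (a l) ↔ vS (b i) (b j) (b k) (b l)

section
variable {V V' V'' : Type u} [RS G.full V] [RS G.full V'] [RS G.full V''] {ι κ : Type}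
  {a : ι → V} {b : ι → V'} {c : ι → V''}

theorem qfL.refl (a : ι → V) : qfL a a := by constructor <;> simp
theorem qfL.symm (h : qfL a b) : qfL b a :=
  ⟨fun _ _ => (h.eq _ _).symm, fun _ => (h.p _).symm, fun _ => (h.q _).symm,
    fun _ => (h.la _).symm, fun _ => (h.rh _).symm, fun _ _ => (h.h _ _).symm,
    fun _ _ _ _ => (h.s _ _ _ _).symm⟩
theorem qfL.trans (h : qfL a b) (h' : qfL b c) : qfL a c :=
  ⟨fun _ _ => (h.eq _ _).trans (h'.eq _ _), fun _ => (h.p _).trans (h'.p _),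
    fun _ => (h.q _).trans (h'.q _),
    fun _ => (h.la _).trans (h'.la _), fun _ => (h.rh _).trans (h'.rh _),
    fun _ _ => (h.h _ _).trans (h'.h _ _),
    fun _ _ _ _ => (h.s _ _ _ _).trans (h'.s _ _ _ _)⟩
theorem qfL.reindex (h : qfL a b) (f : κ → ι) : qfL (a ∘ f) (b ∘ f) :=
  ⟨fun _ _ => (h.eq _ _), fun _ => (h.p _), fun _ => (h.q _),
    fun _ => (h.la _), fun _ => (h.rh _), fun _ _ => (h.h _ _),
    fun _ _ _ _ => (h.s _ _ _ _)⟩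

theorem qf_full {k : ℕ} : qf k a b ↔ qfL a b ∧
    ∀ n, n < G.lv k → ∀ t : Fin (G.ar n) → ι, vR n (a ∘ t) ↔ vR n (b ∘ t) := by
  constructor
  · intro h
    have lt6 : ∀ n, n < 6 → n < G.full.lv k := fun n hn => by simp [Sig.full]; omega
    refine ⟨⟨h.1, fun i => h.2 0 (lt6 _ (by omega)) (fun _ => i),
      fun i => h.2 1 (lt6 _ (by omega)) (fun _ => i), fun i => h.2 2 (lt6 _ (by omega)) (fun _ => i),
      fun i => h.2 3 (lt6 _ (by omega)) (fun _ => i), fun i j => ?_, fun i j l m => ?_⟩, ?_⟩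
    · have := h.2 4 (lt6 _ (by omega)) (![i, j] : Fin 2 → ι)
      have e : ∀ {N : Type u} (c : ι → N), c ∘ (![i, j] : Fin 2 → ι) = ![c i, c j] := by
        intro N c; funext x; fin_cases x <;> rfl
      unfold vH
      rw [← e a, ← e b]; exact this
    · have := h.2 5 (lt6 _ (by omega)) (![i, j, l, m] : Fin 4 → ι)
      have e : ∀ {N : Type u} (c : ι → N), c ∘ (![i, j, l, m] : Fin 4 → ι) = ![c i, c j, c l, c m] := by
        intro N c; funext x; fin_cases x <;> rfl
      unfold vS
      rw [← e a, ← e b]; exact this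
    · intro n hn t
      exact h.2 (n+6) (by simp [Sig.full]; omega) t
  · rintro ⟨h, h'⟩
    refine ⟨h.eq, fun n hn => ?_⟩
    have e1 : ∀ {N : Type u} (c : ι → N) (t : Fin 1 → ι), c ∘ t = fun _ => c (t 0) := by
      intro N c t; funext x; fin_cases x; rfl
    have e3 : ∀ (m : ℕ) (f : (Fin m → V) → Prop) (f' : (Fin m → V') → Prop) (x x2 : Fin m → V)
        (y y2 : Fin m → V'), x = x2 → y = y2 → (f x2 ↔ f' y2) → (f x ↔ f' y) := by
      rintro m f f' x _ y _ rfl rfl h; exact h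
    match n with
    | 0 => exact fun (t : Fin 1 → ι) => e3 1 (RS.rel (G := G.full) 0) (RS.rel (G := G.full) 0)
            _ _ _ _ (e1 a t) (e1 b t) (h.p (t 0))
    | 1 => exact fun (t : Fin 1 → ι) => e3 1 (RS.rel (G := G.full) 1) (RS.rel (G := G.full) 1)
            _ _ _ _ (e1 a t) (e1 b t) (h.q (t 0))
    | 2 => exact fun (t : Fin 1 → ι) => e3 1 (RS.rel (G := G.full) 2) (RS.rel (G := G.full) 2)
            _ _ _ _ (e1 a t) (e1 b t) (h.la (t 0))
    | 3 => exact fun (t : Fin 1 → ι) => e3 1 (RS.rel (G := G.full) 3) (RS.rel (G := G.full) 3)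
            _ _ _ _ (e1 a t) (e1 b t) (h.rh (t 0))
    | 4 => exact fun (t : Fin 2 → ι) => by
            have e : ∀ {N : Type u} (c : ι → N), c ∘ t = ![c (t 0), c (t 1)] := by
              intro N c; funext x; fin_cases x <;> rfl
            exact e3 2 (RS.rel (G := G.full) 4) (RS.rel (G := G.full) 4) _ _ _ _ (e a) (e b) (h.h _ _)
    | 5 => exact fun (t : Fin 4 → ι) => by
            have e : ∀ {N : Type u} (c : ι → N), c ∘ t = ![c (t 0), c (t 1), c (t 2), c (t 3)] := by
              intro N c; funext x; fin_cases x <;> rfl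
            exact e3 4 (RS.rel (G := G.full) 5) (RS.rel (G := G.full) 5) _ _ _ _ (e a) (e b) (h.s _ _ _ _)
    | n+6 => exact h' n (by simp [Sig.full] at hn; omega)
end

/-- `n`-pairs. -/
structure NPair {V : Type u} [RS G.full V] (n m : ℕ) (a : Fin m → V) (c : Fin n → V) : Prop where
  le : m ≤ n
  aP : ∀ i, vP (a i)
  cQ : ∀ j, vQ (c j)
  inj : Function.Injective c
  hH : ∀ i j : Fin n, vH (c i) (c j) ↔ (j : ℕ) = ((i : ℕ) + 1) % n
  hlam : ∀ i : Fin n, vLa (c i) ↔ (i : ℕ) = 0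
  hrho : ∀ i : Fin n, vRh (c i) ↔ (i : ℕ) = m - 1
  hS : ∀ (i k : Fin m) (j l : Fin n), vS (a i) (c j) (a k) (c l) ↔ a i = a k

theorem NPair.map {V V' : Type u} [RS G.full V] [RS G.full V'] {n m : ℕ} {a : Fin m → V}
    {c : Fin n → V} {a' : Fin m → V'} {c' : Fin n → V'} (h : NPair n m a c)
    (hq : qfL (Sum.elim a c) (Sum.elim a' c')) : NPair n m a' c' where
  le := h.le
  aP i := (hq.p (.inl i)).1 (h.aP i)
  cQ i := (hq.q (.inr i)).1 (h.cQ i)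
  inj i j hij := h.inj ((hq.eq (.inr i) (.inr j)).2 hij)
  hH i j := (hq.h (.inr i) (.inr j)).symm.trans (h.hH i j)
  hlam i := (hq.la (.inr i)).symm.trans (h.hlam i)
  hrho i := (hq.rh (.inr i)).symm.trans (h.hrho i)
  hS i k j l := (hq.s (.inl i) (.inr j) (.inl k) (.inr l)).symm.trans
    ((h.hS i k j l).trans (hq.eq (.inl i) (.inl k)))

/-- Basic conditions together with the condition on `n`-pairs. -/
structure Good (V : Type u) [RS G.full V] : Prop where
  part : ∀ x : V, vP x ∨ vQ x
  not_both : ∀ x : V, ¬(vP x ∧ vQ x)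
  lam_q : ∀ x : V, vLa x → vQ x
  rho_q : ∀ x : V, vRh x → vQ x
  h_q : ∀ x y : V, vH x y → vQ x ∧ vQ y
  r_p : ∀ (n : ℕ) (t : Fin (G.ar n) → V), vR n t → ∀ i, vP (t i)
  s_pq : ∀ x y z w : V, vS x y z w → vP x ∧ vQ y ∧ vP z ∧ vQ w
  np : ∀ n (a : Fin (G.ar n) → V) (c : Fin (n+1) → V), NPair (n+1) (G.ar n) a c → vR n a

theorem Good.nq {V : Type u} [RS G.full V] (h : Good V) {x : V} (hx : vP x) : ¬ vQ x :=
  fun h' => h.not_both x ⟨hx, h'⟩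

/-- All-`P` tuples. -/
theorem qfL_of_P {V V' : Type u} [RS G.full V] [RS G.full V'] (g : Good V) (g' : Good V')
    {ι : Type} {a : ι → V} {b : ι → V'} (ha : ∀ i, vP (a i)) (hb : ∀ i, vP (b i))
    (he : ∀ i j, a i = a j ↔ b i = b j) : qfL a b where
  eq := he
  p i := iff_of_true (ha i) (hb i)
  q i := iff_of_false (g.nq (ha i)) (g'.nq (hb i))
  la i := iff_of_false (fun h => g.nq (ha i) (g.lam_q _ h)) (fun h => g'.nq (hb i) (g'.lam_q _ h))
  rh i := iff_of_false (fun h => g.nq (ha i) (g.rho_q _ h)) (fun h => g'.nq (hb i) (g'.rho_q _ h))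
  h i j := iff_of_false (fun h => g.nq (ha i) (g.h_q _ _ h).1) (fun h => g'.nq (hb i) (g'.h_q _ _ h).1)
  s i j k l := iff_of_false (fun h => g.nq (ha j) (g.s_pq _ _ _ _ h).2.1)
    (fun h => g'.nq (hb j) (g'.s_pq _ _ _ _ h).2.1)

theorem qf_lift {V V' : Type u} [RS G.full V] [RS G.full V'] (g : Good V) (g' : Good V')
    {ι : Type} {a : ι → PP V} {b : ι → PP V'} {k : ℕ} :
    qf k a b ↔ qf k (fun i => (a i).1) (fun i => (b i).1) := by
  rw [qf_full]
  constructor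
  · intro h
    exact ⟨qfL_of_P g g' (fun i => (a i).2) (fun i => (b i).2) (fun i j => by
      have := h.1 i j
      rwa [PP.ext_iff, PP.ext_iff] at this), fun n hn t => h.2 n hn t⟩
  · rintro ⟨h, h'⟩
    refine ⟨fun i j => ?_, fun n hn t => h' n hn t⟩
    rw [PP.ext_iff, PP.ext_iff]
    exact h.eq i j

/-- Embeddings. -/
def REmb {M M' : Type u} [RS G M] [RS G M'] (f : M → M') : Prop :=
  Function.Injective f ∧ ∀ n (t : Fin (G.ar n) → M), RS.rel n (f ∘ t) ↔ RS.rel n t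

theorem REmb.qf {M M' : Type u} [RS G M] [RS G M'] {f : M → M'} (h : REmb f) (k : ℕ) {ι : Type}
    (a : ι → M) : qf k a (f ∘ a) :=
  ⟨fun _ _ => h.1.eq_iff.symm, fun n _ t => (h.2 n (a ∘ t)).symm⟩

/-- The hypotheses on the generic structure. -/
structure GenU (M₀ U : Type u) [RS G M₀] [RS G.full U] : Prop where
  good : Good U
  sub : ∀ (E : Type u) [Finite E] [RS G E] (f : E → PP U), REmb f → ∃ g : E → M₀, REmb g
  ext : ∀ (E : Type u) [Finite E] [RS G.full E], Good E → (∃ g : PP E → M₀, REmb g) →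
    ∃ j : E → U, REmb j
  hom : ∀ (ι : Type) [Finite ι] (a b : ι → U), (∀ k, qf k a b) →
    ∃ τ : RIso U U, ∀ i, τ.toEquiv (a i) = b i

theorem GenU.ext' {M₀ U : Type u} [RS G M₀] [RS G.full U] (h : GenU M₀ U) {ι : Type} [Finite ι]
    {E : Type u} [Finite E] [RS G.full E] (hE : Good E) (hg : ∃ g : PP E → M₀, REmb g)
    (f : ι → E) (u : ι → U) (hfu : ∀ k, qf k f u) (x : E) :
    ∃ y, ∀ k, qf k (ex f x) (ex u y) := by
  obtain ⟨j, hj⟩ := h.ext E hE hg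
  obtain ⟨τ, hτ⟩ := h.hom ι (j ∘ f) u (fun k => qf_trans (qf_symm (hj.qf k f)) (hfu k))
  refine ⟨τ.toEquiv (j x), fun k => ?_⟩
  have := qf_trans (hj.qf k (ex f x)) (τ.qf k _)
  rw [comp_ex, comp_ex] at this
  have e : τ.toEquiv ∘ j ∘ f = u := by funext i; exact hτ i
  rwa [e] at this

/-- Transfer property. -/
def TRp {G : Sig} (V U : Type u) [RS G V] [RS G U] : Prop :=
  ∀ k (ι : Type) [Finite ι] (a : ι → V), ∃ b : ι → U, qf k a b ∧
    (∀ y, ∃ y', qf k (ex a y) (ex b y')) ∧ (∀ y', ∃ y, qf k (ex a y) (ex b y'))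

theorem Good.transfer0 {V : Type u} [RS G.full V]
    (ht : ∀ k (ι : Type) [Finite ι] (a : ι → V), ∃ (D : Type u) (_ : RS G.full D), Good D ∧
      ∃ b : ι → D, qf k a b) : Good V := by
  have key : ∀ k (ι : Type) [Finite ι] (a : ι → V), ∃ (D : Type u) (_ : RS G.full D), Good D ∧
      ∃ b : ι → D, qfL a b ∧
      ∀ n, n < G.lv k → ∀ t : Fin (G.ar n) → ι, vR n (a ∘ t) ↔ vR n (b ∘ t) := by
    intro k ι _ a
    obtain ⟨D, iD, hD, b, hb⟩ := ht k ι a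
    exact ⟨D, iD, hD, b, qf_full.1 hb⟩
  refine ⟨fun x => ?_, fun x => ?_, fun x => ?_, fun x => ?_, fun x y => ?_, fun n t => ?_,
    fun x y z w => ?_, fun n a c hac => ?_⟩
  · obtain ⟨D, iD, hU, b, hb, -⟩ := key 0 Unit (fun _ => x)
    exact (hU.part (b ())).imp (hb.p ()).2 (hb.q ()).2
  · obtain ⟨D, iD, hU, b, hb, -⟩ := key 0 Unit (fun _ => x)
    exact fun h => hU.not_both (b ()) ⟨(hb.p ()).1 h.1, (hb.q ()).1 h.2⟩
  · obtain ⟨D, iD, hU, b, hb, -⟩ := key 0 Unit (fun _ => x)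
    exact fun h => (hb.q ()).2 (hU.lam_q _ ((hb.la ()).1 h))
  · obtain ⟨D, iD, hU, b, hb, -⟩ := key 0 Unit (fun _ => x)
    exact fun h => (hb.q ()).2 (hU.rho_q _ ((hb.rh ()).1 h))
  · obtain ⟨D, iD, hU, b, hb, -⟩ := key 0 (Fin 2) ![x, y]
    intro h
    have := hU.h_q _ _ ((hb.h 0 1).1 h)
    exact ⟨(hb.q 0).2 this.1, (hb.q 1).2 this.2⟩
  · obtain ⟨k, hk⟩ := G.cof n
    obtain ⟨D, iD, hU, b, hb, hr⟩ := key k _ t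
    intro h i
    exact (hb.p i).2 (hU.r_p n _ ((hr n hk id).1 h) i)
  · obtain ⟨D, iD, hU, b, hb, -⟩ := key 0 (Fin 4) ![x, y, z, w]
    intro h
    have := hU.s_pq _ _ _ _ ((hb.s 0 1 2 3).1 h)
    exact ⟨(hb.p 0).2 this.1, (hb.q 1).2 this.2.1, (hb.p 2).2 this.2.2.1, (hb.q 3).2 this.2.2.2⟩
  · obtain ⟨k, hk⟩ := G.cof n
    obtain ⟨D, iD, hU, b, hb, hr⟩ := key k _ (Sum.elim a c)
    have : NPair (n+1) (G.ar n) (b ∘ Sum.inl) (b ∘ Sum.inr) := hac.map (by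
      have e : Sum.elim (b ∘ Sum.inl) (b ∘ Sum.inr) = b := by funext i; cases i <;> rfl
      rw [e]; exact hb)
    exact (hr n hk Sum.inl).2 (hU.np n _ _ this)

theorem Good.transfer {V U : Type u} [RS G.full V] [RS G.full U] (hU : Good U) (ht : TRp V U) :
    Good V := Good.transfer0 fun k ι _ a => by
  obtain ⟨b, hb, -⟩ := ht k ι a
  exact ⟨U, inferInstance, hU, b, hb⟩

/-- The `P`-part of `V` against that of `U`. -/
theorem simP {V U : Type u} [RS G.full V] [RS G.full U] (hU : Good U) (ht : TRp V U)
    (hs : Sim (PP U) (PP U)) : Sim (PP V) (PP U) := by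
  have hV := hU.transfer ht
  have key : ∀ k (ι : Type) [Finite ι] (a : ι → PP V), ∃ b : ι → PP U, qf k a b ∧
    (∀ y, ∃ y', qf k (ex a y) (ex b y')) ∧ (∀ y', ∃ y, qf k (ex a y) (ex b y')) := by
    intro k ι _ a
    obtain ⟨b, h1, h2, h3⟩ := ht k ι (fun i => (a i).1)
    have hbP : ∀ i, vP (b i) := fun i => ((qf_full.1 h1).1.p i).1 (a i).2
    have e : ∀ {N : Type u} [RS G.full N] (c : ι → PP N) (d : PP N),
        (fun i => (ex c d i).1) = ex (fun i => (c i).1) d.1 := by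
      intro N _ c d; funext o; cases o <;> rfl
    refine ⟨fun i => ⟨b i, hbP i⟩, (qf_lift hV hU).2 h1, fun y => ?_, fun y' => ?_⟩
    · obtain ⟨y', hy'⟩ := h2 y.1
      refine ⟨⟨y', ((qf_full.1 hy').1.p none).1 y.2⟩, (qf_lift hV hU).2 ?_⟩
      rw [e, e]; exact hy'
    · obtain ⟨y, hy⟩ := h3 y'.1
      refine ⟨⟨y, ((qf_full.1 hy).1.p none).2 y'.2⟩, (qf_lift hV hU).2 ?_⟩
      rw [e, e]; exact hy
  refine ⟨fun k => ?_, fun k ι _ a b hab d => ?_, fun k ι _ a b hab d => ?_⟩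
  · obtain ⟨b, hb, -⟩ := key k Empty Empty.elim
    rwa [Subsingleton.elim b Empty.elim] at hb
  · obtain ⟨b', h1, h2, h3⟩ := key k ι a
    obtain ⟨d', hd'⟩ := h2 d
    obtain ⟨c, hc⟩ := hs.2.1 k ι b' b (qf_trans (qf_symm h1) hab) d'
    exact ⟨c, qf_trans hd' hc⟩
  · obtain ⟨b', h1, h2, h3⟩ := key k ι a
    obtain ⟨d', hd'⟩ := hs.2.2 k ι b' b (qf_trans (qf_symm h1) hab) d
    obtain ⟨c, hc⟩ := h3 d'
    exact ⟨c, qf_trans hc hd'⟩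

theorem GenU.sub' {M₀ U : Type u} [RS G M₀] [RS G.full U] (h : GenU M₀ U) {ι : Type} [Finite ι]
    (a : ι → PP U) : ∃ b : ι → M₀, ∀ k, qf k a b := by
  let E := {x : PP U // x ∈ Set.range a}
  letI : RS G E := ⟨fun n t => RS.rel n fun i => (t i).1⟩
  haveI : Finite E := Set.finite_range a
  have hf : REmb (fun x : E => x.1) := ⟨Subtype.val_injective, fun n t => Iff.rfl⟩
  obtain ⟨g, hg⟩ := h.sub E _ hf
  refine ⟨fun i => g ⟨a i, i, rfl⟩, fun k => ?_⟩
  exact qf_trans (qf_symm (hf.qf k (fun i => (⟨a i, i, rfl⟩ : E)))) (hg.qf k _)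

theorem simPU {M₀ U : Type u} [RS G M₀] [RS G.full U] (h : GenU M₀ U) (hs : Sim M₀ M₀) :
    Sim (PP U) M₀ := by
  refine ⟨fun k => ?_, fun k ι _ a b hab d => ?_, fun k ι _ a b hab d => ?_⟩
  · obtain ⟨b, hb⟩ := h.sub' (Empty.elim : Empty → PP U)
    have := hb k
    rwa [Subsingleton.elim b Empty.elim] at this
  · obtain ⟨b', hb'⟩ := h.sub' (ex a d)
    have h1 : qf k a (b' ∘ some) := qf_reindex (hb' k) some
    obtain ⟨c, hc⟩ := hs.2.1 k ι (b' ∘ some) b (qf_trans (qf_symm h1) hab) (b' none)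
    refine ⟨c, qf_trans (hb' k) ?_⟩
    convert hc using 1
    funext o; cases o <;> rfl
  · obtain ⟨b', hb'⟩ := h.sub' a
    obtain ⟨d', hd'⟩ := hs.2.2 k ι b' b (qf_trans (qf_symm (hb' k)) hab) d
    let E := {x : M₀ // x ∈ Set.range (ex b' d')}
    letI : RS G.full E := mkRS E (fun _ => True) (fun _ => False) (fun _ => False) (fun _ => False)
      (fun _ _ => False) (fun _ _ _ _ => False) (fun n t => RS.rel n fun i => (t i).1)
    haveI : Finite E := Set.finite_range _
    have hE : Good E := by
      refine ⟨fun x => Or.inl trivial, fun x h => h.2, fun x h => h, fun x h => h,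
        fun x y h => h.elim, fun n t _ i => trivial, fun x y z w h => h.elim, fun n a c hp => ?_⟩
      exact (hp.cQ 0).elim
    have hg : REmb (fun x : PP E => x.1.1) :=
      ⟨fun x y h => PP.ext (Subtype.ext h), fun n t => Iff.rfl⟩
    let f : ι → E := fun i => ⟨b' i, some i, rfl⟩
    have hfP : ∀ i, vP (f i) := fun i => trivial
    obtain ⟨y, hy⟩ := h.ext' hE ⟨_, hg⟩ f (fun i => (a i).1) (fun k => by
      have h1 : qf k a (fun i => (⟨f i, hfP i⟩ : PP E)) := by
        have h3 := hg.qf k (fun i => (⟨f i, hfP i⟩ : PP E))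
        exact qf_trans (hb' k) (qf_symm h3)
      exact qf_symm ((qf_lift h.good hE).1 h1)) ⟨d', none, rfl⟩
    have hyP : vP y := ((qf_full.1 (hy 0)).1.p none).1 trivial
    refine ⟨⟨y, hyP⟩, qf_trans ?_ hd'⟩
    have h4 : qf k (fun o => (⟨ex f ⟨d', none, rfl⟩ o, trivial⟩ : PP E)) (ex a ⟨y, hyP⟩) := by
      rw [qf_lift hE h.good]
      convert hy k using 1
      funext o; cases o <;> rfl
    have h5 := hg.qf k (fun o => (⟨ex f ⟨d', none, rfl⟩ o, trivial⟩ : PP E))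
    have h6 := qf_trans (qf_symm h4) h5
    convert h6 using 1
    funext o; cases o <;> rfl

end full


section steps
variable {G : Sig}

/-- Composition of isomorphisms. -/
def RIso.comp {M M' M'' : Type u} [RS G M] [RS G M'] [RS G M''] (g : RIso M' M'') (f : RIso M M') :
    RIso M M'' where
  toEquiv := f.toEquiv.trans g.toEquiv
  map_rel n t := (g.map_rel n (f.toEquiv ∘ t)).trans (f.map_rel n t)

variable {V V' : Type u} [RS G.full V] [RS G.full V'] {ι : Type}

/-- The isomorphism of `P`-parts is compatible with the tuples. -/
def Cpt (σ : RIso (PP V) (PP V')) (a : ι → V) (a' : ι → V') : Prop :=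
  ∀ i (h : vP (a i)), (σ.toEquiv ⟨a i, h⟩).1 = a' i

theorem Cpt.vR (g : Good V) (g' : Good V') {σ : RIso (PP V) (PP V')} {a : ι → V} {a' : ι → V'}
    (hq : ∀ i, vP (a i) ↔ vP (a' i)) (hc : Cpt σ a a') (n : ℕ) (t : Fin (G.ar n) → ι) :
    vR n (a ∘ t) ↔ vR n (a' ∘ t) := by
  by_cases h : ∀ i, vP (a (t i))
  · have := σ.map_rel n (fun i => ⟨a (t i), h i⟩)
    have e : (fun i => (σ.toEquiv ⟨a (t i), h i⟩).1) = a' ∘ t := by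
      funext i; exact hc _ _
    have h2 : RS.rel n (σ.toEquiv ∘ fun i => (⟨a (t i), h i⟩ : PP V)) ↔ Ivanov.vR n (a' ∘ t) := by
      rw [← e]; exact Iff.rfl
    exact this.symm.trans h2
  · refine iff_of_false (fun h' => h (g.r_p n _ h')) (fun h' => h fun i => ?_)
    exact (hq _).2 (g'.r_p n _ h' i)

theorem Cpt.symm {σ : RIso (PP V) (PP V')} {a : ι → V} {a' : ι → V'}
    (hq : ∀ i, vP (a i) ↔ vP (a' i)) (hc : Cpt σ a a') : Cpt σ.symm a' a := by
  intro i h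
  have h1 := hc i ((hq i).2 h)
  have : σ.toEquiv ⟨a i, (hq i).2 h⟩ = ⟨a' i, h⟩ := PP.ext h1
  have h2 : σ.toEquiv.symm ⟨a' i, h⟩ = ⟨a i, (hq i).2 h⟩ := by
    rw [← this]; simp
  exact congrArg PP.val h2

theorem qfL_self {a : ι → V} {a' : ι → V'} (h : qfL a a') (i : ι) :
    qfL (ex a (a i)) (ex a' (a' i)) := by
  have := h.reindex (fun o : Option ι => o.elim i id)
  convert this using 1 <;> (funext o; cases o <;> rfl)

theorem Cpt_self {σ : RIso (PP V) (PP V')} {a : ι → V} {a' : ι → V'} (h : Cpt σ a a') (i : ι) :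
    Cpt σ (ex a (a i)) (ex a' (a' i)) := by
  intro o ho
  cases o
  · exact h i ho
  · exact h _ ho

theorem stepQ {M₀ U : Type u} [RS G M₀] [RS G.full U] (hU : GenU M₀ U) (gV : Good V)
    (gV' : Good V') (ht : TRp V' U) [Finite ι] (a : ι → V) (a' : ι → V') (hL : qfL a a')
    (hR : ∀ n t, vR n (a ∘ t) ↔ vR n (a' ∘ t)) (x : V) (hx : vQ x) :
    ∃ x', qfL (ex a x) (ex a' x') := by
  classical
  obtain ⟨k, hk⟩ := G.cof (Nat.card (Option ι))
  obtain ⟨u, hu, -, hu2⟩ := ht k ι a'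
  obtain ⟨huL, huR⟩ := qf_full.1 hu
  have hau : qfL a u := hL.trans huL
  let E := {z : V // z ∈ Set.range (ex a x)}
  letI : RS G.full E := mkRS E (fun z => vP z.1) (fun z => vQ z.1) (fun z => vLa z.1)
    (fun z => vRh z.1) (fun z w => vH z.1 w.1) (fun z w z' w' => vS z.1 w.1 z'.1 w'.1)
    (fun n t => ∃ s : Fin (G.ar n) → ι, (∀ i, a (s i) = (t i).1) ∧ vR n (u ∘ s))
  haveI : Finite E := Set.finite_range _
  have hval : ∀ {κ : Type} (f : κ → E), qfL f (fun i => (f i).1) := fun f =>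
    ⟨fun i j => Subtype.ext_iff, fun _ => Iff.rfl, fun _ => Iff.rfl, fun _ => Iff.rfl,
      fun _ => Iff.rfl, fun _ _ => Iff.rfl, fun _ _ _ _ => Iff.rfl⟩
  have hRE : ∀ n (t : Fin (G.ar n) → E) (s : Fin (G.ar n) → ι), (∀ i, a (s i) = (t i).1) →
      (vR n t ↔ vR n (u ∘ s)) := by
    intro n t s hs
    constructor
    · rintro ⟨s', hs', h⟩
      have : u ∘ s' = u ∘ s := by
        funext i; exact (hau.eq _ _).1 ((hs' i).trans (hs i).symm)
      rwa [← this]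
    · intro h; exact ⟨s, hs, h⟩
  have hPa : ∀ z : E, vP z → ∃ i, a i = z.1 := by
    rintro ⟨z, o, rfl⟩ hz
    cases o with
    | none => exact (gV.nq (x := x) hz hx).elim
    | some i => exact ⟨i, rfl⟩
  have hE : Good E := by
    refine ⟨fun z => gV.part z.1, fun z => gV.not_both z.1, fun z => gV.lam_q z.1,
      fun z => gV.rho_q z.1, fun z w => gV.h_q z.1 w.1, ?_, fun z w z' w' => gV.s_pq _ _ _ _, ?_⟩
    · rintro n t ⟨s, hs, h⟩ i
      have := (hau.p (s i)).2 (hU.good.r_p n _ h i)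
      rw [hs i] at this; exact this
    · intro n aa cc hp
      have h1 : NPair (n+1) (G.ar n) (fun i => (aa i).1) (fun i => (cc i).1) := hp.map (by
        have := hval (Sum.elim aa cc)
        convert this using 1
        funext o; cases o <;> rfl)
      have h2 := gV.np n _ _ h1
      choose s hs using fun i => hPa (aa i) (hp.aP i)
      have hn : n < G.lv k := by
        have h3 := Nat.card_le_card_of_injective cc hp.inj
        have h4 : Nat.card E ≤ Nat.card (Option ι) := Finite.card_range_le (ex a x)
        rw [Nat.card_fin] at h3
        omega
      refine (hRE n aa s hs).2 ((huR n hn s).1 ((hR n s).1 ?_))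
      have e : a ∘ s = fun i => (aa i).1 := funext hs
      rw [e]; exact h2
  have hPi : ∀ z : PP E, ∃ i, a i = z.1.1 := fun z => hPa z.1 z.2
  choose idx hidx using hPi
  let ψ : PP E → PP U := fun z => ⟨u (idx z), (hau.p _).1 (by rw [hidx]; exact z.2)⟩
  have hψ : REmb ψ := by
    refine ⟨fun z w h => ?_, fun n t => ?_⟩
    · have h1 : u (idx z) = u (idx w) := congrArg PP.val h
      have h2 := (hau.eq _ _).2 h1
      rw [hidx, hidx] at h2
      exact PP.ext (Subtype.ext h2)
    · exact (hRE n (fun i => (t i).1) (idx ∘ t) (fun i => hidx _)).symm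
  let f : ι → E := fun i => ⟨a i, some i, rfl⟩
  obtain ⟨y, hy⟩ := hU.ext' hE (hU.sub (PP E) ψ hψ) f u (fun k => qf_full.2 ⟨(hval f).trans hau,
    fun n _ t => hRE n _ _ (fun i => rfl)⟩) ⟨x, none, rfl⟩
  obtain ⟨x', hx'⟩ := hu2 y
  refine ⟨x', ?_⟩
  have h1 := hval (ex f ⟨x, none, rfl⟩)
  have e : (fun o => (ex f ⟨x, none, rfl⟩ o).1) = ex a x := by funext o; cases o <;> rfl
  rw [e] at h1
  exact h1.symm.trans ((qf_full.1 (hy 0)).1.trans (qf_full.1 hx').1.symm)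

/-- The conclusion of `diamond`. -/
def Dia {G : Sig} (N : Type u) [RS G N] (g : Set N) : Prop :=
  ∀ (ι : Type) [Finite ι] (b : ι → N) (p : N), p ∉ g → p ∉ Set.range b →
      ∃ (q : ℕ) (e : Fin q → N) (i : ℕ) (p0 : N), p0 ∉ Set.range e ∧
        ∀ p', qf i (ex e p0) (ex e p') →
          ∃ τ : RIso N N, (∀ x, τ.toEquiv (b x) = b x) ∧ τ.toEquiv p = p'

theorem stepP {M₀ U : Type u} [RS G M₀] [RS G.full U] (hU : GenU M₀ U) (gV : Good V)
    (gV' : Good V') (ht : TRp V' U) [Finite ι] (a : ι → V) (a' : ι → V') (hL : qfL a a')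
    (σ : RIso (PP V) (PP V')) (hc : Cpt σ a a') (x : V) (hx : vP x) (hxa : x ∉ Set.range a)
    (g : Set (PP V')) (D : Dia (PP V') g) (hg : ∀ z ∈ g, ∃ i, a' i = z.1) :
    ∃ (x' : V') (σ' : RIso (PP V) (PP V')), qfL (ex a x) (ex a' x') ∧
      Cpt σ' (ex a x) (ex a' x') := by
  classical
  let b : {i // vP (a' i)} → PP V' := fun i => ⟨a' i.1, i.2⟩
  have hsb : ∀ i, (σ.toEquiv ⟨x, hx⟩).1 ≠ a' i := by
    intro i h
    have hi : vP (a' i) := by rw [← h]; exact (σ.toEquiv ⟨x, hx⟩).2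
    have h1 := hc i ((hL.p i).2 hi)
    have h2 := σ.toEquiv.injective (PP.ext (h.trans h1.symm))
    exact hxa ⟨i, (congrArg PP.val h2).symm⟩
  obtain ⟨q, e, i0, p0, hp0, hD⟩ := D _ b (σ.toEquiv ⟨x, hx⟩)
    (fun h => by obtain ⟨i, hi⟩ := hg _ h; exact hsb i hi.symm)
    (by rintro ⟨i, hi⟩; exact hsb i.1 (congrArg PP.val hi).symm)
  -- compatibility after composing with an automorphism
  have hcomp : ∀ (τ : RIso (PP V') (PP V')) (p' : PP V'), (∀ i, τ.toEquiv (b i) = b i) →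
      τ.toEquiv (σ.toEquiv ⟨x, hx⟩) = p' → Cpt (τ.comp σ) (ex a x) (ex a' p'.1) := by
    intro τ p' h1 h2 o ho
    cases o with
    | none => exact congrArg PP.val h2
    | some i =>
      have h3 : σ.toEquiv ⟨a i, ho⟩ = b ⟨i, (hL.p i).1 ho⟩ := PP.ext (hc i ho)
      have h4 : τ.toEquiv (σ.toEquiv ⟨a i, ho⟩) = b ⟨i, (hL.p i).1 ho⟩ := by rw [h3, h1]
      exact congrArg PP.val h4
  obtain ⟨τ0, hτ1, hτ2⟩ := hD p0 (qf_refl _ _)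
  have hc0 := hcomp τ0 p0 hτ1 hτ2
  have hp0a : ∀ i, p0.1 ≠ a' i := by
    intro i h
    have hi : vP (a' i) := by rw [← h]; exact p0.2
    have h1 : p0 = b ⟨i, hi⟩ := PP.ext h
    have h2 : τ0.toEquiv (σ.toEquiv ⟨x, hx⟩) = τ0.toEquiv (b ⟨i, hi⟩) := by
      rw [hτ2, hτ1, h1]
    exact hsb i (congrArg PP.val (τ0.toEquiv.injective h2))
  obtain ⟨k0, hk0⟩ := G.cof (Nat.card (Option ι))
  let k := max k0 i0
  have hk : Nat.card (Option ι) < G.lv k := hk0.trans_le (G.mono (le_max_left _ _))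
  let w : ι ⊕ Fin q → V' := Sum.elim a' (fun j => (e j).1)
  obtain ⟨u, hu, hu1, hu2⟩ := ht k _ w
  obtain ⟨y0, hy0⟩ := hu1 p0.1
  obtain ⟨hyL, hyR⟩ := qf_full.1 hy0
  have gU := hU.good
  have hy0P : vP y0 := (hyL.p none).1 p0.2
  have heP : ∀ j, vP (u (.inr j)) := fun j => (hyL.p (some (.inr j))).1 (e j).2
  have hau : qfL a (u ∘ Sum.inl) := hL.trans ((qf_full.1 hu).1.reindex Sum.inl)
  have hy0u : ∀ i, u i ≠ y0 := by
    intro i h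
    have := (hyL.eq (some i) none).2 h
    rcases i with i | j
    · exact hp0a i this.symm
    · exact hp0 ⟨j, PP.ext this⟩
  let A : Option ι → U := ex (u ∘ Sum.inl) y0
  let B : Option ι → V := ex a x
  have hAB : ∀ o o', A o = A o' ↔ B o = B o' := by
    intro o o'
    cases o <;> cases o'
    · exact Iff.of_eq (by simp)
    · exact iff_of_false (fun h => hy0u _ h.symm) (fun h => hxa ⟨_, h.symm⟩)
    · exact iff_of_false (fun h => hy0u _ h) (fun h => hxa ⟨_, h⟩)
    · exact (hau.eq _ _).symm
  have hAP : ∀ o, vP (A o) ↔ vP (B o) := by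
    intro o; cases o
    · exact iff_of_true hy0P hx
    · exact (hau.p _).symm
  have hAQ : ∀ o, vQ (A o) ↔ vQ (B o) := by
    intro o; cases o
    · exact iff_of_false (gU.nq hy0P) (gV.nq hx)
    · exact (hau.q _).symm
  let E := {z : U // z ∈ Set.range (ex u y0)}
  letI : RS G.full E := mkRS E (fun z => vP z.1) (fun z => vQ z.1) (fun z => vLa z.1)
    (fun z => vRh z.1) (fun z w => vH z.1 w.1)
    (fun z1 z2 z3 z4 => (vP z1.1 ∧ vQ z2.1 ∧ vP z3.1 ∧ vQ z4.1) ∧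
      ((z1.1 ≠ y0 ∧ z3.1 ≠ y0) → vS z1.1 z2.1 z3.1 z4.1) ∧
      (¬ (z1.1 ≠ y0 ∧ z3.1 ≠ y0) → ∀ t1 t2 t3 t4, A t1 = z1.1 → A t2 = z2.1 → A t3 = z3.1 →
        A t4 = z4.1 → vS (B t1) (B t2) (B t3) (B t4)))
    (fun n t => vR n fun i => (t i).1)
  haveI : Finite E := Set.finite_range _
  have hSE : ∀ z1 z2 z3 z4 : E, vS z1 z2 z3 z4 ↔ ((vP z1.1 ∧ vQ z2.1 ∧ vP z3.1 ∧ vQ z4.1) ∧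
      ((z1.1 ≠ y0 ∧ z3.1 ≠ y0) → vS z1.1 z2.1 z3.1 z4.1) ∧
      (¬ (z1.1 ≠ y0 ∧ z3.1 ≠ y0) → ∀ t1 t2 t3 t4, A t1 = z1.1 → A t2 = z2.1 → A t3 = z3.1 →
        A t4 = z4.1 → vS (B t1) (B t2) (B t3) (B t4))) := fun _ _ _ _ => Iff.rfl
  have hval : ∀ {κ : Type} (f : κ → E), (∀ i, (f i).1 ≠ y0) → qfL f (fun i => (f i).1) := by
    intro κ f hf
    refine ⟨fun i j => Subtype.ext_iff, fun _ => Iff.rfl, fun _ => Iff.rfl, fun _ => Iff.rfl,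
      fun _ => Iff.rfl, fun _ _ => Iff.rfl, fun i j l m => ?_⟩
    rw [hSE]
    constructor
    · intro h; exact h.2.1 ⟨hf _, hf _⟩
    · intro h; exact ⟨gU.s_pq _ _ _ _ h, fun _ => h, fun h' => absurd ⟨hf _, hf _⟩ h'⟩
  have hAm : ∀ o, A o ∈ Set.range (ex u y0) := by
    intro o; cases o
    · exact ⟨none, rfl⟩
    · exact ⟨some (.inl _), rfl⟩
  let fE : Option ι → E := fun o => ⟨A o, hAm o⟩
  have hfE : qfL fE B := by
    refine ⟨fun o o' => Subtype.ext_iff.trans (hAB o o'), hAP, hAQ, fun o => ?_, fun o => ?_,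
      fun o o' => ?_, fun o1 o2 o3 o4 => ?_⟩
    · cases o with
      | none => exact iff_of_false (fun h => gU.nq hy0P (gU.lam_q _ h))
                  (fun h => gV.nq hx (gV.lam_q _ h))
      | some i => exact (hau.la _).symm
    · cases o with
      | none => exact iff_of_false (fun h => gU.nq hy0P (gU.rho_q _ h))
                  (fun h => gV.nq hx (gV.rho_q _ h))
      | some i => exact (hau.rh _).symm
    · cases o with
      | none => exact iff_of_false (fun h => gU.nq hy0P (gU.h_q _ _ h).1)
                    (fun h => gV.nq hx (gV.h_q _ _ h).1)
      | some i =>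
        cases o' with
        | none => exact iff_of_false (fun h => gU.nq hy0P (gU.h_q _ _ h).2)
                    (fun h => gV.nq hx (gV.h_q _ _ h).2)
        | some j => exact (hau.h _ _).symm
    · rw [hSE]
      have hPQ : vS (B o1) (B o2) (B o3) (B o4) → vP (A o1) ∧ vQ (A o2) ∧ vP (A o3) ∧ vQ (A o4) :=
        fun h => by
          have := gV.s_pq _ _ _ _ h
          rwa [← hAP, ← hAQ, ← hAP, ← hAQ] at this
      by_cases hh : A o1 ≠ y0 ∧ A o3 ≠ y0
      · have key : (vP (A o1) ∧ vQ (A o2) ∧ vP (A o3) ∧ vQ (A o4)) →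
            (vS (A o1) (A o2) (A o3) (A o4) ↔ vS (B o1) (B o2) (B o3) (B o4)) := by
          rintro ⟨-, h2, -, h4⟩
          rcases o1 with _ | o1
          · exact absurd rfl hh.1
          rcases o3 with _ | o3
          · exact absurd rfl hh.2
          rcases o2 with _ | o2
          · exact absurd h2 (gU.nq hy0P)
          rcases o4 with _ | o4
          · exact absurd h4 (gU.nq hy0P)
          exact (hau.s _ _ _ _).symm
        constructor
        · intro h; exact (key h.1).1 (h.2.1 hh)
        · intro h; exact ⟨hPQ h, fun _ => (key (hPQ h)).2 h, fun h' => absurd hh h'⟩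
      · constructor
        · intro h; exact h.2.2 hh _ _ _ _ rfl rfl rfl rfl
        · intro h
          refine ⟨hPQ h, fun h' => absurd h' hh, fun _ t1 t2 t3 t4 h1 h2 h3 h4 => ?_⟩
          rw [(hAB _ _).1 h1, (hAB _ _).1 h2, (hAB _ _).1 h3, (hAB _ _).1 h4]
          exact h
  have hQA : ∀ z : E, vQ z → ∃ o, fE o = z := by
    rintro ⟨z, o, rfl⟩ hz
    have hz' : vQ (ex u y0 o) := hz
    rcases o with _ | i | j
    · exact absurd hz' (gU.nq hy0P)
    · exact ⟨some i, rfl⟩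
    · exact absurd hz' (gU.nq (heP j))
  have hE : Good E := by
    refine ⟨fun z => gU.part z.1, fun z => gU.not_both z.1, fun z => gU.lam_q z.1,
      fun z => gU.rho_q z.1, fun z w => gU.h_q z.1 w.1, fun n t h => gU.r_p n _ h,
      fun z1 z2 z3 z4 h => ((hSE _ _ _ _).1 h).1, ?_⟩
    intro n aa cc hp
    have hcc : ∀ j, (cc j).1 ≠ y0 := by
      intro j h
      have := hp.cQ j
      have h' : vQ (cc j).1 := this
      rw [h] at h'
      exact gU.nq hy0P h'
    by_cases hy : ∃ i1, (aa i1).1 = y0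
    · obtain ⟨i1, hi1⟩ := hy
      choose γ hγ using fun j => hQA (cc j) (hp.cQ j)
      have haA : ∀ l, ∃ o, fE o = aa l := by
        intro l
        by_contra hcon
        have h1 : vS (aa i1) (cc 0) (aa l) (cc 0) := by
          rw [hSE]
          refine ⟨⟨hp.aP i1, hp.cQ 0, hp.aP l, hp.cQ 0⟩, fun h => absurd hi1 h.1, ?_⟩
          intro _ t1 t2 t3 t4 _ _ h3 _
          exact absurd ⟨t3, Subtype.ext h3⟩ hcon
        have h2 := (hp.hS i1 l 0 0).1 h1
        exact hcon ⟨none, by rw [← h2]; exact Subtype.ext hi1.symm⟩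
      choose ζ hζ using haA
      have h1 : NPair (n+1) (G.ar n) (B ∘ ζ) (B ∘ γ) := hp.map (by
        have := hfE.reindex (Sum.elim ζ γ)
        convert this using 1
        · funext o
          cases o with
          | inl i => exact (hζ i).symm
          | inr i => exact (hγ i).symm
        · funext o; cases o <;> rfl)
      have h2 := gV.np n _ _ h1
      have hpp : ∀ o, vP (ex a x o) ↔ vP (ex a' p0.1 o) := by
        intro o; cases o
        · exact iff_of_true hx p0.2
        · exact hL.p _
      have h3 := (Cpt.vR gV gV' hpp hc0 n ζ).1 h2
      have hn : n < G.lv k := by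
        have h3 : Function.Injective γ := fun i j hij => hp.inj (by rw [← hγ, ← hγ, hij])
        have h4 := Nat.card_le_card_of_injective γ h3
        rw [Nat.card_fin] at h4
        omega
      have h4 := hyR n hn (Option.map Sum.inl ∘ ζ)
      have e1 : ex w p0.1 ∘ Option.map Sum.inl ∘ ζ = ex a' p0.1 ∘ ζ := by
        rw [← Function.comp_assoc, ex_comp_map]; rfl
      have e2 : ex u y0 ∘ Option.map Sum.inl ∘ ζ = fun i => (aa i).1 := by
        rw [← Function.comp_assoc, ex_comp_map]
        funext i; rw [← hζ]; rfl
      rw [e1, e2] at h4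
      exact h4.1 h3
    · push Not at hy
      have h1 : NPair (n+1) (G.ar n) (fun i => (aa i).1) (fun i => (cc i).1) := hp.map (by
        have := hval (Sum.elim aa cc) (by rintro (i | i); exacts [hy i, hcc i])
        convert this using 1
        funext o; cases o <;> rfl)
      exact gU.np n _ _ h1
  let ψ : PP E → PP U := fun z => ⟨z.1.1, z.2⟩
  have hψ : REmb ψ := ⟨fun z w h => PP.ext (Subtype.ext (congrArg PP.val h)), fun n t => Iff.rfl⟩
  let f : ι ⊕ Fin q → E := fun i => ⟨u i, some i, rfl⟩
  obtain ⟨y, hy⟩ := hU.ext' hE (hU.sub (PP E) ψ hψ) f u (fun k => qf_full.2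
    ⟨hval f hy0u, fun n _ t => Iff.rfl⟩) ⟨y0, none, rfl⟩
  obtain ⟨x', hx'⟩ := hu2 y
  obtain ⟨hx'L, hx'R⟩ := qf_full.1 hx'
  have hx'P : vP x' := (hx'L.p none).2 (((qf_full.1 (hy 0)).1.p none).1 hy0P)
  have hq : qf k (ex e p0) (ex e ⟨x', hx'P⟩) := by
    have hfv : ∀ o, (ex f ⟨y0, none, rfl⟩ o).1 = ex u y0 o := by intro o; cases o <;> rfl
    have hEq : ∀ o o', ex w p0.1 o = ex w p0.1 o' ↔ ex w x' o = ex w x' o' := by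
      intro o o'
      rw [hyL.eq, hx'L.eq, ← (hy k).1, Subtype.ext_iff, hfv, hfv]
    have hRel : ∀ n, n < G.lv k → ∀ t, vR n (ex w p0.1 ∘ t) ↔ vR n (ex w x' ∘ t) := by
      intro n hn t
      rw [hyR n hn, hx'R n hn, ← (qf_full.1 (hy k)).2 n hn t]
      have : ex u y0 ∘ t = fun i => (ex f ⟨y0, none, rfl⟩ (t i)).1 := by
        funext i; exact (hfv _).symm
      rw [this]; exact Iff.rfl
    have hwv : ∀ (z : V') (hz : vP z) o, (ex e ⟨z, hz⟩ o).1 = ex w z (Option.map Sum.inr o) := by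
      intro z hz o; cases o <;> rfl
    refine ⟨fun o o' => ?_, fun n hn t => ?_⟩
    · have := hEq (Option.map Sum.inr o) (Option.map Sum.inr o')
      rw [PP.ext_iff, PP.ext_iff, hwv x' hx'P, hwv x' hx'P]
      rw [← hwv _ p0.2, ← hwv _ p0.2] at this
      exact this
    · have := hRel n hn (Option.map Sum.inr ∘ t)
      have e1 : ex w p0.1 ∘ Option.map Sum.inr ∘ t = fun i => (ex e p0 (t i)).1 := by
        funext i; exact (hwv _ p0.2 _).symm
      have e2 : ex w x' ∘ Option.map Sum.inr ∘ t = fun i => (ex e ⟨x', hx'P⟩ (t i)).1 := by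
        funext i; exact (hwv _ hx'P _).symm
      rw [e1, e2] at this
      exact this
  obtain ⟨τ, hτa, hτb⟩ := hD ⟨x', hx'P⟩ (qf_mono (le_max_right _ _) hq)
  refine ⟨x', τ.comp σ, ?_, hcomp τ ⟨x', hx'P⟩ hτa hτb⟩
  have h1 := (qf_full.1 (hy 0)).1.trans hx'L.symm
  have h2 := h1.reindex (Option.map Sum.inl)
  rw [ex_comp_map, ex_comp_map] at h2
  refine hfE.symm.trans ?_
  convert h2 using 1 <;> (funext o; cases o <;> rfl)

end steps


section isoV
variable {G : Sig} {V V' : Type u} [RS G.full V] [RS G.full V'] {ι : Type}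

theorem stepAny {M₀ U : Type u} [RS G M₀] [RS G.full U] (hU : GenU M₀ U) (gV : Good V)
    (gV' : Good V') (ht : TRp V' U) [Finite ι] (a : ι → V) (a' : ι → V') (hL : qfL a a')
    (σ : RIso (PP V) (PP V')) (hc : Cpt σ a a') (x : V)
    (g : Set (PP V')) (D : Dia (PP V') g) (hg : ∀ z ∈ g, ∃ i, a' i = z.1) :
    ∃ (x' : V') (σ' : RIso (PP V) (PP V')), qfL (ex a x) (ex a' x') ∧
      Cpt σ' (ex a x) (ex a' x') := by
  by_cases hxa : x ∈ Set.range a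
  · obtain ⟨i, rfl⟩ := hxa
    exact ⟨a' i, σ, qfL_self hL i, Cpt_self hc i⟩
  rcases gV.part x with hx | hx
  · exact stepP hU gV gV' ht a a' hL σ hc x hx hxa g D hg
  · obtain ⟨x', hx'⟩ := stepQ hU gV gV' ht a a' hL (Cpt.vR gV gV' hL.p hc) x hx
    refine ⟨x', σ, hx', fun o ho => ?_⟩
    cases o with
    | none => exact (gV.nq (x := x) ho hx).elim
    | some i => exact hc i ho

theorem isoV {M₀ U : Type u} [RS G M₀] [RS G.full U] (hU : GenU M₀ U) (gV : Good V)
    (gV' : Good V') (ht : TRp V U) (ht' : TRp V' U) [Countable V] [Countable V']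
    (g : Set (PP V)) (hgf : g.Finite) (D : Dia (PP V) g)
    (g' : Set (PP V')) (hgf' : g'.Finite) (D' : Dia (PP V') g')
    (σ0 : RIso (PP V) (PP V')) : Nonempty (RIso V V') := by
  classical
  let Φ : List (V × V') → Prop := fun l =>
    qfL (fun i : Fin l.length => (l.get i).1) (fun i : Fin l.length => (l.get i).2) ∧
    (∃ σ : RIso (PP V) (PP V'), Cpt σ (fun i : Fin l.length => (l.get i).1)
      (fun i : Fin l.length => (l.get i).2)) ∧
    (∀ z ∈ g, ∃ i : Fin l.length, (l.get i).1 = z.1) ∧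
    (∀ z ∈ g', ∃ i : Fin l.length, (l.get i).2 = z.1)
  have hcons : ∀ l x y, Φ l → qfL (ex (fun i : Fin l.length => (l.get i).1) x)
      (ex (fun i : Fin l.length => (l.get i).2) y) → (∃ σ : RIso (PP V) (PP V'),
      Cpt σ (ex (fun i : Fin l.length => (l.get i).1) x)
      (ex (fun i : Fin l.length => (l.get i).2) y)) → Φ ((x, y) :: l) := by
    rintro l x y ⟨-, -, h3, h4⟩ hl ⟨σ, hσ⟩
    refine ⟨?_, ⟨σ, ?_⟩, fun z hz => ?_, fun z hz => ?_⟩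
    · have := hl.reindex (fun i : Fin ((x, y) :: l).length => Fin.cases none some i)
      convert this using 1
      · funext i; refine Fin.cases ?_ (fun i => ?_) i <;> rfl
      · funext i; refine Fin.cases ?_ (fun i => ?_) i <;> rfl
    · intro i
      refine Fin.cases ?_ (fun i => ?_) i
      · exact hσ none
      · exact hσ (some i)
    · obtain ⟨i, hi⟩ := h3 z hz; exact ⟨i.succ, hi⟩
    · obtain ⟨i, hi⟩ := h4 z hz; exact ⟨i.succ, hi⟩
  have hfin : (g ∪ σ0.toEquiv ⁻¹' g').Finite :=
    hgf.union (hgf'.preimage σ0.toEquiv.injective.injOn)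
  let l0 : List (V × V') := hfin.toFinset.toList.map fun z => (z.1, (σ0.toEquiv z).1)
  have hl0 : ∀ i : Fin l0.length, ∃ z, l0.get i = (z.1, (σ0.toEquiv z).1) := by
    intro i
    have := List.get_mem l0 i
    obtain ⟨z, -, hz⟩ := List.mem_map.1 this
    exact ⟨z, hz.symm⟩
  have hl0' : ∀ z ∈ g ∪ σ0.toEquiv ⁻¹' g', ∃ i, l0.get i = (z.1, (σ0.toEquiv z).1) := by
    intro z hz
    refine List.get_of_mem (List.mem_map.2 ⟨z, ?_, rfl⟩)
    simpa using hz
  have h0 : Φ l0 := by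
    refine ⟨?_, ⟨σ0, ?_⟩, fun z hz => ?_, fun z hz => ?_⟩
    · refine qfL_of_P gV gV' (fun i => ?_) (fun i => ?_) (fun i j => ?_)
      · obtain ⟨z, hz⟩ := hl0 i
        simp only [hz]; exact z.2
      · obtain ⟨z, hz⟩ := hl0 i
        simp only [hz]; exact (σ0.toEquiv z).2
      · obtain ⟨z, hz⟩ := hl0 i
        obtain ⟨w, hw⟩ := hl0 j
        simp only [hz, hw]
        rw [← PP.ext_iff, ← PP.ext_iff]
        simp
    · intro i h
      obtain ⟨z, hz⟩ := hl0 i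
      have e1 : (⟨(l0.get i).1, h⟩ : PP V) = z := PP.ext (by simp only [hz])
      change (σ0.toEquiv ⟨(l0.get i).1, h⟩).1 = (l0.get i).2
      rw [e1, hz]
    · obtain ⟨i, hi⟩ := hl0' z (Or.inl hz)
      exact ⟨i, by rw [hi]⟩
    · obtain ⟨i, hi⟩ := hl0' (σ0.toEquiv.symm z) (Or.inr (by simpa using hz))
      exact ⟨i, by rw [hi]; simp⟩
  obtain ⟨e, h1, h2⟩ := back_forth Φ (fun l hl x hx y hy => by
      obtain ⟨i, rfl⟩ := List.get_of_mem hx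
      obtain ⟨j, rfl⟩ := List.get_of_mem hy
      exact hl.1.eq i j)
    (fun l hl a => by
      obtain ⟨σ, hσ⟩ := hl.2.1
      obtain ⟨x', σ', h, h'⟩ := stepAny hU gV gV' ht' _ _ hl.1 σ hσ a g' D' hl.2.2.2
      exact ⟨x', hcons _ _ _ hl h ⟨σ', h'⟩⟩)
    (fun l hl b => by
      obtain ⟨σ, hσ⟩ := hl.2.1
      obtain ⟨x', σ', h, h'⟩ := stepAny hU gV' gV ht _ _ hl.1.symm σ.symm (hσ.symm hl.1.p) b g D
        hl.2.2.1
      exact ⟨x', hcons _ _ _ hl h.symm ⟨σ'.symm, h'.symm h.p⟩⟩) l0 h0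
  refine ⟨⟨e, fun n t => ?_⟩⟩
  obtain ⟨l, hl, hl'⟩ := h2 (Finset.univ.image t)
  have : ∀ i, ∃ j : Fin l.length, l.get j = (t i, e (t i)) := fun i =>
    List.get_of_mem (hl' (t i) (Finset.mem_image_of_mem _ (Finset.mem_univ _)))
  choose j hj using this
  obtain ⟨σ, hσ⟩ := hl.2.1
  obtain ⟨k, hk⟩ := G.full.cof n
  have := (qf_full (k := k).2 ⟨hl.1, fun n _ => Cpt.vR gV gV' hl.1.p hσ n⟩).2 n hk j
  have e1 : (fun i : Fin l.length => (l.get i).1) ∘ j = t := by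
    funext i; simp only [Function.comp_apply, hj]
  have e2 : (fun i : Fin l.length => (l.get i).2) ∘ j = e ∘ t := by
    funext i; simp only [Function.comp_apply, hj]
  rw [e1, e2] at this
  exact this.symm

end isoV


/-- The signature attached to the data. -/
@[reducible] def G0 (ar li : ℕ → ℕ) (hm : Monotone li) (hc : ∀ n : ℕ, ∃ i, n ≤ li i) : Sig :=
  ⟨fun n => ar (n + 1), li, hm, fun n => hc (n + 1)⟩

section interface
variable {ar li : ℕ → ℕ} {hm : Monotone li} {hc : ∀ n : ℕ, ∃ i, n ≤ li i}

/-- Symbols of `L₀`. -/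
@[reducible] def sym0 (n : ℕ) : (L0r ar Set.univ).Relations ((G0 ar li hm hc).ar n) :=
  R ar Set.univ (n + 1) (Nat.succ_pos n) trivial

/-- Symbols of the sublanguages. -/
@[reducible] def symk (k n : ℕ) (h : n < (G0 ar li hm hc).lv k) :
    (L0r ar (setLe (li k))).Relations ((G0 ar li hm hc).ar n) :=
  R ar (setLe (li k)) (n + 1) (Nat.succ_pos n) h

/-- Symbols of the full language. -/
def symF (n : ℕ) : (LFull ar Set.univ).Relations ((G0 ar li hm hc).full.ar n) :=
  match n with
    | 0 => Sum.inl LRel.P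
    | 1 => Sum.inl LRel.Q
    | 2 => Sum.inl LRel.lam
    | 3 => Sum.inl LRel.rho
    | 4 => Sum.inl LRel.H
    | 5 => Sum.inl LRel.S
    | n+6 => Sum.inr (R ar Set.univ (n + 1) (Nat.succ_pos n) trivial)

theorem cover0 (m : ℕ) (r : (L0r ar Set.univ).Relations m) :
    ∃ n, ∃ h : (G0 ar li hm hc).ar n = m, h ▸ (sym0 (li := li) (hm := hm) (hc := hc) n) = r := by
  obtain ⟨j, h0, hs, rfl⟩ := r
  cases j with
  | zero => exact absurd h0 (lt_irrefl _)
  | succ n => exact ⟨n, rfl, rfl⟩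

theorem coverk (k m : ℕ) (r : (L0r ar (setLe (li k))).Relations m) :
    ∃ n, ∃ hn : n < (G0 ar li hm hc).lv k, ∃ h : (G0 ar li hm hc).ar n = m,
      h ▸ (symk (hm := hm) (hc := hc) k n hn) = r := by
  obtain ⟨j, h0, hs, rfl⟩ := r
  cases j with
  | zero => exact absurd h0 (lt_irrefl _)
  | succ n => exact ⟨n, hs, rfl, rfl⟩

theorem coverF (m : ℕ) (r : (LFull ar Set.univ).Relations m) :
    ∃ n, ∃ h : (G0 ar li hm hc).full.ar n = m,
      h ▸ (symF (li := li) (hm := hm) (hc := hc) n) = r := by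
  rcases r with r | r
  · cases r
    · exact ⟨0, rfl, rfl⟩
    · exact ⟨1, rfl, rfl⟩
    · exact ⟨2, rfl, rfl⟩
    · exact ⟨3, rfl, rfl⟩
    · exact ⟨4, rfl, rfl⟩
    · exact ⟨5, rfl, rfl⟩
  · obtain ⟨j, h0, hs, rfl⟩ := r
    cases j with
    | zero => exact absurd h0 (lt_irrefl _)
    | succ n => exact ⟨n + 6, rfl, rfl⟩

/-- Compatibility for `L₀`. -/
def C0 (M : Type u) [(L0r ar Set.univ).Structure M] [RS (G0 ar li hm hc) M] : Prop :=
  ∀ n (t : Fin ((G0 ar li hm hc).ar n) → M), RelMap (sym0 (li := li) (hm := hm) (hc := hc) n) t ↔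
    RS.rel n t

/-- Compatibility for the full language. -/
def CF (M : Type u) [(LFull ar Set.univ).Structure M] [RS (G0 ar li hm hc).full M] : Prop :=
  ∀ n (t : Fin ((G0 ar li hm hc).full.ar n) → M),
    RelMap (symF (li := li) (hm := hm) (hc := hc) n) t ↔ RS.rel n t

/-- The relational structure of an `L₀`-structure. -/
@[reducible] def rs0 (M : Type u) [(L0r ar Set.univ).Structure M] : RS (G0 ar li hm hc) M :=
  ⟨fun n t => RelMap (sym0 (li := li) (hm := hm) (hc := hc) n) t⟩

/-- The relational structure of a structure in the full language. -/
@[reducible] def rsF (M : Type u) [(LFull ar Set.univ).Structure M] :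
    RS (G0 ar li hm hc).full M :=
  ⟨fun n t => RelMap (symF (li := li) (hm := hm) (hc := hc) n) t⟩

/-- The `L₀`-structure of a relational structure. -/
@[reducible] def str0 (M : Type u) [RS (G0 ar li hm hc) M] : (L0r ar Set.univ).Structure M where
  funMap := fun {_} f _ => isEmptyElim f
  RelMap := fun {k} r t => RS.rel (G := G0 ar li hm hc) (r.1 - 1)
    (t ∘ Fin.cast ((congrArg ar (Nat.sub_add_cancel r.2.1)).trans r.2.2.2))

theorem C0_str0 (M : Type u) [RS (G0 ar li hm hc) M] :
    @C0 ar li hm hc M (str0 M) _ := by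
  intro n t
  exact Iff.rfl

/-- The full structure of a relational structure. -/
@[reducible] def strF (M : Type u) [RS (G0 ar li hm hc).full M] :
    (LFull ar Set.univ).Structure M where
  funMap := fun {_} f _ => isEmptyElim f
  RelMap := fun {k} r t => match k, r, t with
    | _, Sum.inl LRel.P, t => vP (t 0)
    | _, Sum.inl LRel.Q, t => vQ (t 0)
    | _, Sum.inl LRel.lam, t => vLa (t 0)
    | _, Sum.inl LRel.rho, t => vRh (t 0)
    | _, Sum.inl LRel.H, t => vH (t 0) (t 1)
    | _, Sum.inl LRel.S, t => vS (t 0) (t 1) (t 2) (t 3)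
    | _, Sum.inr r, t => vR (G := G0 ar li hm hc) (r.1 - 1)
        (t ∘ Fin.cast ((congrArg ar (Nat.sub_add_cancel r.2.1)).trans r.2.2.2))

theorem CF_strF (M : Type u) [RS (G0 ar li hm hc).full M] :
    @CF ar li hm hc M (strF M) _ := by
  intro n
  have e1 : ∀ t : Fin 1 → M, t = fun _ => t 0 := by intro t; funext x; fin_cases x; rfl
  have e2 : ∀ t : Fin 2 → M, t = ![t 0, t 1] := by intro t; funext x; fin_cases x <;> rfl
  have e4 : ∀ t : Fin 4 → M, t = ![t 0, t 1, t 2, t 3] := by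
    intro t; funext x; fin_cases x <;> rfl
  match n with
  | 0 => intro t; rw [e1 t]; exact Iff.rfl
  | 1 => intro t; rw [e1 t]; exact Iff.rfl
  | 2 => intro t; rw [e1 t]; exact Iff.rfl
  | 3 => intro t; rw [e1 t]; exact Iff.rfl
  | 4 => intro t; rw [e2 t]; exact Iff.rfl
  | 5 => intro t; rw [e4 t]; exact Iff.rfl
  | n+6 => intro t; exact Iff.rfl

section CF
variable {V : Type u} [(LFull ar Set.univ).Structure V] [RS (G0 ar li hm hc).full V]

theorem CF.p (h : CF (li := li) (hm := hm) (hc := hc) V) (x : V) : isP ar Set.univ x ↔ vP x := by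
  have := h 0 ![x]
  have e : ![x] = fun _ => x := by funext i; fin_cases i; rfl
  rw [e] at this; unfold isP; rw [e]; exact this
theorem CF.q (h : CF (li := li) (hm := hm) (hc := hc) V) (x : V) : isQ ar Set.univ x ↔ vQ x := by
  have := h 1 ![x]
  have e : ![x] = fun _ => x := by funext i; fin_cases i; rfl
  rw [e] at this; unfold isQ; rw [e]; exact this
theorem CF.la (h : CF (li := li) (hm := hm) (hc := hc) V) (x : V) : isLam ar Set.univ x ↔ vLa x := by
  have := h 2 ![x]
  have e : ![x] = fun _ => x := by funext i; fin_cases i; rfl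
  rw [e] at this; unfold isLam; rw [e]; exact this
theorem CF.rh (h : CF (li := li) (hm := hm) (hc := hc) V) (x : V) : isRho ar Set.univ x ↔ vRh x := by
  have := h 3 ![x]
  have e : ![x] = fun _ => x := by funext i; fin_cases i; rfl
  rw [e] at this; unfold isRho; rw [e]; exact this
theorem CF.hh (h : CF (li := li) (hm := hm) (hc := hc) V) (x y : V) : isH ar Set.univ x y ↔ vH x y := h 4 ![x, y]
theorem CF.s (h : CF (li := li) (hm := hm) (hc := hc) V) (x y z w : V) : isS ar Set.univ x y z w ↔ vS x y z w := h 5 ![x, y, z, w]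
theorem CF.r (h : CF (li := li) (hm := hm) (hc := hc) V) (n : ℕ) (t : Fin (ar (n + 1)) → V) :
    RelMap (L := LFull ar Set.univ) (n := ar (n + 1))
      (Sum.inr (R ar Set.univ (n + 1) (Nat.succ_pos n) trivial)) t ↔
      vR (G := G0 ar li hm hc) n t := h (n + 6) t

theorem CF.npair (h : CF (li := li) (hm := hm) (hc := hc) V) {n m : ℕ} {a : Fin m → V} {c : Fin n → V} :
    IsNPair ar Set.univ n m a c ↔ NPair (G := G0 ar li hm hc) n m a c := by
  constructor
  · rintro ⟨h1, h2, h3, h4, h5, h6, h7, h8⟩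
    simp only [h.p, h.q, h.la, h.rh, h.hh, h.s] at *
    exact ⟨h1, h2, h3, h4, h5, h6, h7, h8⟩
  · rintro ⟨h1, h2, h3, h4, h5, h6, h7, h8⟩
    refine ⟨h1, ?_, ?_, h4, ?_, ?_, ?_, ?_⟩ <;> simpa only [h.p, h.q, h.la, h.rh, h.hh, h.s]

theorem CF.good (h : CF (li := li) (hm := hm) (hc := hc) V) : (IsGood ar Set.univ V ∧
    ∀ (n : ℕ) (h1 : 0 < n) (h2 : n ∈ (Set.univ : Set ℕ)) (a : Fin (ar n) → V) (c : Fin n → V),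
      IsNPair ar Set.univ n (ar n) a c →
        RelMap (L := LFull ar Set.univ) (n := ar n) (Sum.inr (R ar Set.univ n h1 h2)) a) ↔
    Good (G := G0 ar li hm hc) V := by
  constructor
  · rintro ⟨⟨h1, h2, h3, h4, h5, h6, h7⟩, h8⟩
    refine ⟨?_, ?_, ?_, ?_, ?_, ?_, ?_, ?_⟩
    · simpa only [h.p, h.q] using h1
    · simpa only [h.p, h.q] using h2
    · simpa only [h.la, h.q] using h3
    · simpa only [h.rh, h.q] using h4
    · simpa only [h.hh, h.q] using h5
    · intro n t ht i
      exact (h.p _).1 (h6 _ _ t ((h.r n t).2 ht) i)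
    · simpa only [h.s, h.p, h.q] using h7
    · intro n a c hac
      exact (h.r n a).1 (h8 (n + 1) _ trivial a c (h.npair.2 hac))
  · rintro ⟨h1, h2, h3, h4, h5, h6, h7, h8⟩
    refine ⟨⟨?_, ?_, ?_, ?_, ?_, ?_, ?_⟩, ?_⟩
    · simpa only [h.p, h.q] using h1
    · simpa only [h.p, h.q] using h2
    · simpa only [h.la, h.q] using h3
    · simpa only [h.rh, h.q] using h4
    · simpa only [h.hh, h.q] using h5
    · rintro k ⟨j, h0, hs, rfl⟩ t ht i
      cases j with
      | zero => exact absurd h0 (lt_irrefl _)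
      | succ n => exact (h.p _).2 (h6 n t ((h.r n t).1 ht) i)
    · simpa only [h.s, h.p, h.q] using h7
    · intro n hn hn' a c hac
      cases n with
      | zero => exact absurd hn (lt_irrefl _)
      | succ n => exact (h.r n a).2 (h8 n a c (h.npair.1 hac))

end CF

theorem CF.emb {V V' : Type u} [(LFull ar Set.univ).Structure V] [RS (G0 ar li hm hc).full V]
    [(LFull ar Set.univ).Structure V'] [RS (G0 ar li hm hc).full V']
    (h : CF (li := li) (hm := hm) (hc := hc) V) (h' : CF (li := li) (hm := hm) (hc := hc) V')
    (f : V ↪[LFull ar Set.univ] V') : REmb (G := (G0 ar li hm hc).full) f :=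
  ⟨f.injective, fun n t => by rw [← h n t, ← h' n (f ∘ t)]; exact f.map_rel _ _⟩

theorem CF.iso {V V' : Type u} [(LFull ar Set.univ).Structure V] [RS (G0 ar li hm hc).full V]
    [(LFull ar Set.univ).Structure V'] [RS (G0 ar li hm hc).full V']
    (h : CF (li := li) (hm := hm) (hc := hc) V) (h' : CF (li := li) (hm := hm) (hc := hc) V')
    (f : RIso V V') : Nonempty (V ≃[LFull ar Set.univ] V') :=
  ⟨{ toEquiv := f.toEquiv
     map_fun' := fun {_} g _ => isEmptyElim g
     map_rel' := by
       intro m r t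
       obtain ⟨n, rfl, rfl⟩ := coverF (li := li) (hm := hm) (hc := hc) m r
       exact (h' n _).trans ((f.map_rel n t).trans (h n t).symm) }⟩

theorem C0.iso {M M' : Type u} [(L0r ar Set.univ).Structure M] [RS (G0 ar li hm hc) M]
    [(L0r ar Set.univ).Structure M'] [RS (G0 ar li hm hc) M']
    (h : C0 (li := li) (hm := hm) (hc := hc) M) (h' : C0 (li := li) (hm := hm) (hc := hc) M')
    (f : M ≃[L0r ar Set.univ] M') : Nonempty (RIso M M') :=
  ⟨{ toEquiv := f.toEquiv
     map_rel := fun n t => (h' n _).symm.trans ((f.map_rel _ t).trans (h n t)) }⟩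

theorem ppart_of {V M₀ : Type u} [(LFull ar Set.univ).Structure V] [RS (G0 ar li hm hc).full V]
    [(L0r ar Set.univ).Structure M₀] [RS (G0 ar li hm hc) M₀]
    (h : CF (li := li) (hm := hm) (hc := hc) V) (h0 : C0 (li := li) (hm := hm) (hc := hc) M₀) :
    Nonempty (Ppart ar Set.univ V ↪[L0r ar Set.univ] M₀) ↔
      ∃ g : PP (G := G0 ar li hm hc) V → M₀, REmb (G := G0 ar li hm hc) g := by
  constructor
  · rintro ⟨g⟩
    refine ⟨fun z => g ⟨z.1, (h.p _).2 z.2⟩, fun z w hzw => ?_, fun n t => ?_⟩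
    · exact PP.ext (congrArg Subtype.val (g.injective hzw))
    · rw [← h0 n]
      refine (g.map_rel (sym0 (li := li) (hm := hm) (hc := hc) n)
        (fun i => ⟨(t i).1, (h.p _).2 (t i).2⟩)).trans ?_
      exact h.r n _
  · rintro ⟨g, hg⟩
    refine ⟨{ toFun := fun z => g ⟨z.1, (h.p _).1 z.2⟩, inj' := ?_,
              map_fun' := fun {_} g _ => isEmptyElim g, map_rel' := ?_ }⟩
    · intro z w hzw
      exact Subtype.ext (congrArg PP.val (hg.1 hzw))
    · intro m r t
      obtain ⟨n, rfl, rfl⟩ := cover0 (li := li) (hm := hm) (hc := hc) m r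
      refine (h0 n _).trans ((hg.2 n (fun i => ⟨(t i).1, (h.p _).1 (t i).2⟩)).trans ?_)
      exact (h.r n _).symm

end interface


section simtools
variable {G : Sig}

theorem simT {M N M' : Type u} [RS G M] [RS G N] [RS G M'] (ht : TRp M N) (hs : Sim N M') :
    Sim M M' := by
  refine ⟨fun k => ?_, fun k ι _ a a' haa d => ?_, fun k ι _ a a' haa d => ?_⟩
  · obtain ⟨b, hb, -⟩ := ht k Empty Empty.elim
    rw [Subsingleton.elim b Empty.elim] at hb
    exact qf_trans hb (hs.1 k)
  · obtain ⟨b, hb, h1, h2⟩ := ht k ι a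
    obtain ⟨d', hd'⟩ := h1 d
    obtain ⟨c, hc⟩ := hs.2.1 k ι b a' (qf_trans (qf_symm hb) haa) d'
    exact ⟨c, qf_trans hd' hc⟩
  · obtain ⟨b, hb, h1, h2⟩ := ht k ι a
    obtain ⟨d', hd'⟩ := hs.2.2 k ι b a' (qf_trans (qf_symm hb) haa) d
    obtain ⟨c, hc⟩ := h2 d'
    exact ⟨c, qf_trans hc hd'⟩

end simtools

section main
variable {ar li : ℕ → ℕ} {hm : Monotone li} {hc : ∀ n : ℕ, ∃ i, n ≤ li i}

theorem sim_M0 {M₀ : Type u} [(L0r ar Set.univ).Structure M₀] [RS (G0 ar li hm hc) M₀]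
    (h0 : C0 (li := li) (hm := hm) (hc := hc) M₀)
    (hqe : ∀ (i k : ℕ) (φ : (L0r ar (setLe (li i))).Formula (Fin k)),
      ∃ ψ : (L0r ar (setLe (li i))).Formula (Fin k), ψ.IsQF ∧
        ∀ a : Fin k → M₀,
          Formula.Realize (L := L0r ar Set.univ)
              ((L0incl ar (Set.subset_univ _)).onFormula φ) a ↔
            Formula.Realize (L := L0r ar Set.univ)
              ((L0incl ar (Set.subset_univ _)).onFormula ψ) a) :
    Sim (G := G0 ar li hm hc) M₀ M₀ := by
  have forth : ∀ k (ι : Type) [Finite ι] (a b : ι → M₀), qf (G := G0 ar li hm hc) k a b →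
      ∀ d : M₀, ∃ c : M₀, qf (G := G0 ar li hm hc) k (ex a d) (ex b c) := by
    intro k ι _ a b hab d
    obtain ⟨r, ⟨f⟩⟩ := Finite.exists_equiv_fin ι
    letI : (L0r ar (setLe (li k))).Structure M₀ := M0redStr ar (li k) M₀
    haveI : (L0incl ar (Set.subset_univ (setLe (li k)))).IsExpansionOn M₀ :=
      LHom.isExpansionOn_reduct _ _
    have hck : Compat (G := G0 ar li hm hc) (L0r ar (setLe (li k))) k
        (symk (hm := hm) (hc := hc) k) M₀ := fun n hn t => h0 n t
    let v : Option ι → Fin r ⊕ Fin 1 := fun o => o.elim (Sum.inr 0) (fun i => Sum.inl (f i))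
    let φ : (L0r ar (setLe (li k))).Formula (Fin r) :=
      BoundedFormula.ex (dg (symk (hm := hm) (hc := hc) k) (ex a d) v)
    have hφ : ∀ x : Fin r → M₀, φ.Realize x ↔
        ∃ c, qf (G := G0 ar li hm hc) k (ex a d) (ex (x ∘ f) c) := by
      intro x
      have hv : ∀ y : Fin 1 → M₀, Sum.elim x y ∘ v = ex (x ∘ f) (y 0) := by
        intro y; funext o; cases o <;> rfl
      have : φ.Realize x ↔ ∃ c : M₀, (dg (symk (hm := hm) (hc := hc) k) (ex a d) v).Realize x
          (Fin.snoc default c) := BoundedFormula.realize_ex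
      rw [this]
      refine exists_congr fun c => ?_
      rw [realize_dg _ hck, hv]
      have e : (Fin.snoc (default : Fin 0 → M₀) c : Fin 1 → M₀) 0 = c := rfl
      rw [e]
    obtain ⟨ψ, hψ, hh⟩ := hqe k r φ
    simp only [LHom.realize_onFormula] at hh
    have h1 : φ.Realize (a ∘ f.symm) := (hφ _).2 ⟨d, by
      have e : (a ∘ f.symm) ∘ f = a := by funext i; simp
      rw [e]; exact qf_refl _ _⟩
    have h2 : ψ.Realize (a ∘ f.symm) ↔ ψ.Realize (b ∘ f.symm) :=
      qf_of_isQF _ (coverk (hm := hm) (hc := hc) k) hck hck ψ hψ _ default _ default (by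
        have := qf_reindex hab (Sum.elim f.symm Fin.elim0)
        convert this using 1
        · funext i
          rcases i with i | i
          · rfl
          · exact i.elim0
        · funext i
          rcases i with i | i
          · rfl
          · exact i.elim0)
    obtain ⟨c, hcc⟩ := (hφ _).1 ((hh _).2 (h2.1 ((hh _).1 h1)))
    have e : (b ∘ f.symm) ∘ f = b := by funext i; simp
    rw [e] at hcc
    exact ⟨c, hcc⟩
  refine ⟨fun k => qf_refl _ _, forth, fun k ι _ a b hab d => ?_⟩
  obtain ⟨c, hcc⟩ := forth k ι b a (qf_symm hab) d
  exact ⟨c, qf_symm hcc⟩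

/-- Being elementarily equivalent to `M₀`. -/
def Md (ar li : ℕ → ℕ) (hm : Monotone li) (hc : ∀ n : ℕ, ∃ i, n ≤ li i)
    (M₀ : Type u) [(L0r ar Set.univ).Structure M₀] (M : Type u) [RS (G0 ar li hm hc) M] : Prop :=
  ∃ i : (L0r ar Set.univ).Structure M, C0 (li := li) (hm := hm) (hc := hc) M ∧
    EqTh (L0r ar Set.univ) M M₀ ∧ EqTh (L0r ar Set.univ) M₀ M

theorem trp0 {M M' : Type u} [(L0r ar Set.univ).Structure M] [RS (G0 ar li hm hc) M]
    [(L0r ar Set.univ).Structure M'] [RS (G0 ar li hm hc) M']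
    (h : C0 (li := li) (hm := hm) (hc := hc) M) (h' : C0 (li := li) (hm := hm) (hc := hc) M')
    (he : EqTh (L0r ar Set.univ) M M') : TRp (G := G0 ar li hm hc) M M' :=
  fun k ι _ a => transfer (𝓛 := L0r ar Set.univ) (fun n _ => sym0 (li := li) (hm := hm) (hc := hc) n)
    (fun n _ t => h n t) (fun n _ t => h' n t) he a

theorem trpF {M M' : Type u} [(LFull ar Set.univ).Structure M] [RS (G0 ar li hm hc).full M]
    [(LFull ar Set.univ).Structure M'] [RS (G0 ar li hm hc).full M']
    (h : CF (li := li) (hm := hm) (hc := hc) M) (h' : CF (li := li) (hm := hm) (hc := hc) M')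
    (he : EqTh (LFull ar Set.univ) M M') : TRp (G := (G0 ar li hm hc).full) M M' :=
  fun k ι _ a => transfer (𝓛 := LFull ar Set.univ)
    (fun n _ => symF (li := li) (hm := hm) (hc := hc) n)
    (fun n _ t => h n t) (fun n _ t => h' n t) he a

theorem Md_sim {M₀ : Type u} [(L0r ar Set.univ).Structure M₀] [RS (G0 ar li hm hc) M₀]
    (h0 : C0 (li := li) (hm := hm) (hc := hc) M₀) (hs : Sim (G := G0 ar li hm hc) M₀ M₀)
    (M M' : Type u) [RS (G0 ar li hm hc) M] [RS (G0 ar li hm hc) M']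
    (h : Md ar li hm hc M₀ M) (h' : Md ar li hm hc M₀ M') : Sim (G := G0 ar li hm hc) M M' := by
  obtain ⟨i, hi, he, -⟩ := h
  obtain ⟨i', hi', he', -⟩ := h'
  exact simT (trp0 hi h0 he) (simT (trp0 hi' h0 he') hs).symm

theorem Md_cl {M₀ : Type u} [(L0r ar Set.univ).Structure M₀]
    (M M' : Type u) [RS (G0 ar li hm hc) M] [RS (G0 ar li hm hc) M']
    (h : Md ar li hm hc M₀ M) (h' : Sim (G := G0 ar li hm hc) M' M) : Md ar li hm hc M₀ M' := by
  obtain ⟨i, hi, he1, he2⟩ := h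
  letI := str0 (ar := ar) (li := li) (hm := hm) (hc := hc) M'
  have hi' := C0_str0 (ar := ar) (li := li) (hm := hm) (hc := hc) M'
  refine ⟨inferInstance, hi', fun φ hφ => he1 φ ?_, fun φ hφ => ?_⟩
  · exact Sim.eqTh sym0 cover0 hi' hi h' φ hφ
  · exact Sim.eqTh sym0 cover0 hi hi' h'.symm φ (he2 φ hφ)

theorem genU {M₀ U : Type u} [(L0r ar Set.univ).Structure M₀] [RS (G0 ar li hm hc) M₀]
    (h0 : C0 (li := li) (hm := hm) (hc := hc) M₀)
    [(LFull ar Set.univ).Structure U] [RS (G0 ar li hm hc).full U]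
    (hF : CF (li := li) (hm := hm) (hc := hc) U)
    (hUhom : (LFull ar Set.univ).IsUltrahomogeneous U)
    (hUage : (LFull ar Set.univ).age U = Kclass ar Set.univ M₀) :
    GenU (G := G0 ar li hm hc) M₀ U := by
  have key : ∀ A : Set U, A.Finite → ∃ (D : Type u) (_ : RS (G0 ar li hm hc).full D),
      Good (G := G0 ar li hm hc) D ∧
      (∃ g : PP (G := G0 ar li hm hc) D → M₀, REmb (G := G0 ar li hm hc) g) ∧
      ∃ f : D → U, REmb (G := (G0 ar li hm hc).full) f ∧ ∀ x ∈ A, ∃ y, f y = x := by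
    intro A hA
    let S : (LFull ar Set.univ).Substructure U := ⟨A, fun f => isEmptyElim f⟩
    have hS : S.FG := by
      refine ⟨hA.toFinset, ?_⟩
      apply le_antisymm
      · rw [Substructure.closure_le]; simp only [Set.Finite.coe_toFinset]; exact subset_rfl
      · intro x hx
        exact Substructure.subset_closure (by rw [Set.Finite.coe_toFinset]; exact hx)
    have hmem : (Bundled.of S : Bundled (LFull ar Set.univ).Structure) ∈
        (LFull ar Set.univ).age U :=
      ⟨(Substructure.fg_iff_structure_fg S).1 hS, ⟨S.subtype⟩⟩
    rw [hUage] at hmem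
    obtain ⟨-, h1, h2, h3⟩ := hmem
    letI : RS (G0 ar li hm hc).full S := rsF S
    have hSF : CF (li := li) (hm := hm) (hc := hc) S := fun n t => Iff.rfl
    refine ⟨S, inferInstance, hSF.good.1 ⟨h1, h3⟩, (ppart_of hSF h0).1 h2, S.subtype,
      CF.emb hSF hF S.subtype, fun x hx => ⟨⟨x, hx⟩, rfl⟩⟩
  refine ⟨?_, ?_, ?_, ?_⟩
  · refine Good.transfer0 fun k ι _ a => ?_
    obtain ⟨D, iD, hD, -, f, hf, hfA⟩ := key (Set.range a) (Set.finite_range a)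
    choose b hb using fun i => hfA (a i) ⟨i, rfl⟩
    refine ⟨D, iD, hD, b, ?_⟩
    have := hf.qf k b
    have e : f ∘ b = a := funext hb
    rw [e] at this
    exact qf_symm this
  · intro E _ _ f hf
    obtain ⟨D, iD, hD, ⟨g, hg⟩, j, hj, hjA⟩ := key (Set.range fun e => (f e).1) (Set.finite_range _)
    choose b hb using fun e => hjA (f e).1 ⟨e, rfl⟩
    have hbP : ∀ e, vP (G := G0 ar li hm hc) (b e) := by
      intro e
      have h1 := (hj.2 0 (fun _ => b e)).1
      refine h1 ?_
      have h2 := (f e).2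
      rw [← hb e] at h2
      exact h2
    refine ⟨fun e => g ⟨b e, hbP e⟩, fun e e' h => ?_, fun n t => ?_⟩
    · have := congrArg PP.val (hg.1 h)
      have h2 : (f e).1 = (f e').1 := by rw [← hb e, ← hb e']; exact congrArg j this
      exact hf.1 (PP.ext h2)
    · refine (hg.2 n (fun i => ⟨b (t i), hbP _⟩)).trans (Iff.trans ?_ (hf.2 n t))
      refine (hj.2 (n + 6) (b ∘ t)).symm.trans ?_
      have e : j ∘ b ∘ t = fun i => (f (t i)).1 := funext fun i => hb _
      exact Iff.of_eq (congrArg (vR (G := G0 ar li hm hc) n) e)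
  · intro E _ _ hE hg
    letI := strF (ar := ar) (li := li) (hm := hm) (hc := hc) E
    have hEF := CF_strF (ar := ar) (li := li) (hm := hm) (hc := hc) E
    have hG := hEF.good.2 hE
    have hmem : (Bundled.of E : Bundled (LFull ar Set.univ).Structure) ∈
        Kclass ar Set.univ M₀ :=
      ⟨‹Finite E›, hG.1, (ppart_of hEF h0).2 hg, hG.2⟩
    rw [← hUage] at hmem
    obtain ⟨-, ⟨j⟩⟩ := hmem
    exact ⟨j, CF.emb hEF hF j⟩
  · intro ι _ a b h
    exact hom_tuple (𝓛 := LFull ar Set.univ) symF coverF hF hUhom a b h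

theorem eqTh_of {𝓛 : FirstOrder.Language.{0,0}} {M N : Type u} [𝓛.Structure M] [𝓛.Structure N]
    (h : Theory.Model N (𝓛.completeTheory M)) : EqTh 𝓛 N M ∧ EqTh 𝓛 M N := by
  have h2 : EqTh 𝓛 M N := fun φ hφ => h.realize_of_mem φ hφ
  refine ⟨fun φ hφ => ?_, h2⟩
  by_contra hcon
  have := h2 (∼φ) ((Sentence.realize_not M).2 hcon)
  exact (Sentence.realize_not N).1 this hφ

theorem model_of {𝓛 : FirstOrder.Language.{0,0}} {M N : Type u} [𝓛.Structure M] [𝓛.Structure N]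
    (h : EqTh 𝓛 M N) : Theory.Model N (𝓛.completeTheory M) :=
  ⟨fun φ hφ => h φ hφ⟩

theorem main_aux
    (M₀ : Type u) [(L0r ar Set.univ).Structure M₀]
    (hqe : ∀ (i k : ℕ) (φ : (L0r ar (setLe (li i))).Formula (Fin k)),
      ∃ ψ : (L0r ar (setLe (li i))).Formula (Fin k), ψ.IsQF ∧
        ∀ a : Fin k → M₀,
          Formula.Realize (L := L0r ar Set.univ)
              ((L0incl ar (Set.subset_univ _)).onFormula φ) a ↔
            Formula.Realize (L := L0r ar Set.univ)
              ((L0incl ar (Set.subset_univ _)).onFormula ψ) a)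
    (U : Type u) [(LFull ar Set.univ).Structure U]
    (hm : Monotone li) (hc : ∀ n : ℕ, ∃ i, n ≤ li i)
    (hUhom : (LFull ar Set.univ).IsUltrahomogeneous U)
    (hUage : (LFull ar Set.univ).age U = Kclass ar Set.univ M₀)
    (n : ℕ) (rep : Fin n → Bundled.{u} (L0r ar Set.univ).Structure)
    (hrep : ∀ M : Bundled.{u} (L0r ar Set.univ).Structure, Countable M →
          Theory.Model M ((L0r ar Set.univ).completeTheory M₀) →
          ∃ i, Nonempty (M ≃[L0r ar Set.univ] rep i)) :
    (∃ rep : Fin n → Bundled.{u} (LFull ar Set.univ).Structure,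
        ∀ V : Bundled.{u} (LFull ar Set.univ).Structure, Countable V →
          Theory.Model V ((LFull ar Set.univ).completeTheory U) →
          ∃ i, Nonempty (V ≃[LFull ar Set.univ] rep i)) := by
  classical
  letI : RS (G0 ar li hm hc) M₀ := rs0 M₀
  have h0 : C0 (li := li) (hm := hm) (hc := hc) M₀ := fun n t => Iff.rfl
  letI : ∀ V : Bundled.{u} (LFull ar Set.univ).Structure, RS (G0 ar li hm hc).full V :=
    fun V => rsF V
  have hV : ∀ V : Bundled.{u} (LFull ar Set.univ).Structure,
    CF (li := li) (hm := hm) (hc := hc) V := fun V n t => Iff.rfl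
  letI : RS (G0 ar li hm hc).full U := rsF U
  have hF : CF (li := li) (hm := hm) (hc := hc) U := fun n t => Iff.rfl
  have hs := sim_M0 (hm := hm) (hc := hc) h0 hqe
  have hU := genU h0 hF hUhom hUage
  let J := {i : Fin n // Countable (rep i)}
  letI : ∀ j : J, RS (G0 ar li hm hc) (rep j.1) := fun j => rs0 (rep j.1)
  have hrepC : ∀ j : J, C0 (li := li) (hm := hm) (hc := hc) (rep j.1) := fun j n t => Iff.rfl
  haveI : ∀ j : J, Countable (rep j.1) := fun j => j.2
  have hrep' : ∀ (M : Type u) [RS (G0 ar li hm hc) M], Countable M → Md ar li hm hc M₀ M →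
      ∃ j : J, Nonempty (RIso (G := G0 ar li hm hc) M (rep j.1)) := by
    rintro M _ hM ⟨i, hi, -, he⟩
    obtain ⟨j, ⟨f⟩⟩ := hrep (Bundled.of M) hM (model_of he)
    haveI : Countable (Bundled.of M : Bundled (L0r ar Set.univ).Structure) := hM
    haveI : Countable (rep j) := f.toEquiv.symm.injective.countable
    exact ⟨⟨j, this⟩, C0.iso hi (hrepC ⟨j, this⟩) f⟩
  have hM0 : Md ar li hm hc M₀ M₀ := ⟨inferInstance, h0, fun _ h => h, fun _ h => h⟩
  have hMU : Md ar li hm hc M₀ (PP (G := G0 ar li hm hc) U) := Md_cl _ _ hM0 (simPU hU hs)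
  have hsU : Sim (PP (G := G0 ar li hm hc) U) (PP (G := G0 ar li hm hc) U) :=
    Md_sim h0 hs _ _ hMU hMU
  have hT : ∀ V : Bundled.{u} (LFull ar Set.univ).Structure,
      Theory.Model V ((LFull ar Set.univ).completeTheory U) →
      TRp (G := (G0 ar li hm hc).full) V U := fun V h => trpF (hV V) hF (eqTh_of h).1
  have hMV : ∀ V : Bundled.{u} (LFull ar Set.univ).Structure,
      Theory.Model V ((LFull ar Set.univ).completeTheory U) →
      Md ar li hm hc M₀ (PP (G := G0 ar li hm hc) V) := fun V h =>
    Md_cl _ _ hMU (simP hU.good (hT V h) hsU)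
  have hdia : ∀ V : Bundled.{u} (LFull ar Set.univ).Structure, Countable V →
      Theory.Model V ((LFull ar Set.univ).completeTheory U) →
      ∃ g : Set (PP (G := G0 ar li hm hc) V), g.Finite ∧ Dia (G := G0 ar li hm hc) _ g := by
    intro V hVc h
    haveI := hVc
    exact diamond (G := G0 ar li hm hc) (fun M _ => Md ar li hm hc M₀ M)
      (fun M M' _ _ => Md_sim h0 hs M M')
      (fun M M' _ _ => Md_cl M M') (fun j : J => (rep j.1 : Type u)) (fun M _ => hrep' M) _ (hMV V h)
  let Pr : Fin n → Bundled.{u} (LFull ar Set.univ).Structure → Prop := fun i V =>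
    Countable V ∧ Theory.Model V ((LFull ar Set.univ).completeTheory U) ∧
      ∃ h : Countable (rep i), Nonempty (RIso (G := G0 ar li hm hc)
        (PP (G := G0 ar li hm hc) V) (rep (⟨i, h⟩ : J).1))
  have hW : ∀ i, ∃ W, (∃ V, Pr i V) → Pr i W := by
    intro i
    by_cases h : ∃ V, Pr i V
    · exact ⟨h.choose, fun _ => h.choose_spec⟩
    · exact ⟨Bundled.of U, fun h' => absurd h' h⟩
  choose W0 hW0 using hW
  refine ⟨W0, fun V hVc hVm => ?_⟩
  obtain ⟨j, ⟨f⟩⟩ := hrep' _ (inferInstance : Countable (PP (G := G0 ar li hm hc) V)) (hMV V hVm)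
  refine ⟨j.1, ?_⟩
  obtain ⟨hWc, hWm, hj, ⟨f'⟩⟩ := hW0 j.1 ⟨V, hVc, hVm, j.2, ⟨f⟩⟩
  generalize W0 j.1 = W at *
  obtain ⟨g, hg, D⟩ := hdia V hVc hVm
  obtain ⟨g', hg', D'⟩ := hdia W hWc hWm
  haveI := hVc
  haveI := hWc
  obtain ⟨τ⟩ := isoV hU (hU.good.transfer (hT V hVm)) (hU.good.transfer (hT W hWm)) (hT V hVm)
    (hT W hWm) g hg D g' hg' D' (f'.symm.comp f)
  exact CF.iso (hV V) (hV W) τ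

end main
/-- If `Th(M₀)` is Ehrenfeucht (finitely many countable models up to
isomorphism) then so is the theory of the generic structure `U`; indeed, for every `n`, if
`Th(M₀)` has at most `n` countable models up to isomorphism then so does `Th(U)`. -/
theorem statement_15
    (ar : ℕ → ℕ)
    (har_le : ∀ n : ℕ, 0 < n → ar n ≤ n)
    (har_mono : ∀ m n : ℕ, 0 < m → m ≤ n → ar m ≤ ar n)
    (li : ℕ → ℕ) (hli_pos : ∀ i, 0 < li i) (hli_mono : StrictMono li)
    (hli_cof : ∀ n : ℕ, ∃ i, n ≤ li i)
    (hli_arity : ∀ i : ℕ, ar (li i) < ar (li (i + 1)))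
    (M₀ : Type u) [(L0r ar Set.univ).Structure M₀] [Countable M₀] [Infinite M₀]
    (hqe : ∀ (i k : ℕ) (φ : (L0r ar (setLe (li i))).Formula (Fin k)),
      ∃ ψ : (L0r ar (setLe (li i))).Formula (Fin k), ψ.IsQF ∧
        ∀ a : Fin k → M₀,
          Formula.Realize (L := L0r ar Set.univ)
              ((L0incl ar (Set.subset_univ _)).onFormula φ) a ↔
            Formula.Realize (L := L0r ar Set.univ)
              ((L0incl ar (Set.subset_univ _)).onFormula ψ) a)
    (hM0hom : (L0r ar Set.univ).IsUltrahomogeneous M₀)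
    (hM0jep : JointEmbedding ((L0r ar Set.univ).age M₀))
    (hM0ap : Amalgamation ((L0r ar Set.univ).age M₀))
    (U : Type u) [(LFull ar Set.univ).Structure U] [Countable U]
    (hUhom : (LFull ar Set.univ).IsUltrahomogeneous U)
    (hUage : (LFull ar Set.univ).age U = Kclass ar Set.univ M₀) :
    ∀ n : ℕ,
      (∃ rep : Fin n → Bundled.{u} (L0r ar Set.univ).Structure,
        ∀ M : Bundled.{u} (L0r ar Set.univ).Structure, Countable M →
          Theory.Model M ((L0r ar Set.univ).completeTheory M₀) →
          ∃ i, Nonempty (M ≃[L0r ar Set.univ] rep i)) →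
      (∃ rep : Fin n → Bundled.{u} (LFull ar Set.univ).Structure,
        ∀ V : Bundled.{u} (LFull ar Set.univ).Structure, Countable V →
          Theory.Model V ((LFull ar Set.univ).completeTheory U) →
          ∃ i, Nonempty (V ≃[LFull ar Set.univ] rep i)) := by
  rintro n ⟨rep, hrep⟩
  exact main_aux M₀ hqe U hli_mono.monotone hli_cof hUhom hUage n rep hrep

end Ivanov
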